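/- Let d ↦ n(d) be a function with n(d) → ∞ and d/n(d) → 0 as d → ∞. For each d, let X_1, …, X_{n(d)} be i.i.d. d-dimensional standard normal random vectors N_d(0, I). Let S_d be the sample covariance matrix, T_d Tyler's M-estimator of the sample, S*_d = √(n(d)/d)(S_d − I), T*_d = √(n(d)/d)(T_d − I), and for 1 ≤ i ≤ d let B_i = {α λ_i(T*_d) + (1−α) λ_i(S*_d) : α ∈ [0,1]} be the segment joining the i-th eigenvalues. Then sup{|λ| : λ ∈ ⋃_{i=1}^d B_i} converges in probability to 2 as d → ∞. -/

import Mathlib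

open MeasureTheory ProbabilityTheory Filter Matrix

/-- The eigenvalues of a real symmetric `d × d` matrix, sorted in increasing order,
so that `sortedEigs A i` is `λ_{i+1}(A)` with `λ_1(A) ≤ … ≤ λ_d(A)`
(junk value `0` if the matrix is not symmetric). -/
noncomputable def sortedEigs {d : ℕ} (A : Matrix (Fin d) (Fin d) ℝ) : Fin d → ℝ :=
  if h : A.IsHermitian then h.eigenvalues ∘ Tuple.sort h.eigenvalues else 0

/-- The spectral norm `‖A‖₂ = max (|λ_1(A)|, |λ_d(A)|)` of a symmetric matrix,
i.e. the largest absolute value of an eigenvalue. -/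
noncomputable def specNorm {d : ℕ} (A : Matrix (Fin d) (Fin d) ℝ) : ℝ :=
  ⨆ i : Fin d, |sortedEigs A i|

/-- `IsTyler X T` says that `T` is Tyler's M-estimator of the sample
`X : Fin n → (Fin d → ℝ)`: it is symmetric positive definite, normalized by
`tr T = d`, and satisfies Tyler's fixed-point equation
`T = (d/n) ∑_j (X_j X_jᵗ) / (X_jᵗ T⁻¹ X_j)`. -/
def IsTyler {d n : ℕ} (X : Fin n → Fin d → ℝ) (T : Matrix (Fin d) (Fin d) ℝ) : Prop :=
  T.PosDef ∧ T.trace = d ∧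
    T = ((d : ℝ) / (n : ℝ)) •
      ∑ j : Fin n, (X j ⬝ᵥ T⁻¹ *ᵥ X j)⁻¹ • vecMulVec (X j) (X j)

/-!
The supremum over the segments is the larger of the spectral norms of `T*` and `S*`, so it suffices
to show `‖S*‖ → 2` and `‖T*‖ ≤ 2 + o(1)` in probability.

For `S*`, Gaussian integration by parts gives a recursion for the expected products of normalized
traces `d⁻¹ tr (S*)^q`, which up to errors of order `√(d/n)` and `d⁻²` is the Catalan recursion.
Trace moments of order `log d` then bound `‖S*‖` from above, and the concentration of the trace
moments of a fixed order bounds it from below.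

For `T*`, Tyler's equation is a perturbation of the sample covariance matrix `U` of the vectors
rescaled to length `√d`: once a remainder term is small, `‖T - I‖ ≤ (1 + o(1)) ‖U - I‖`. Direction
and length of a normal vector are independent, so averaging over the lengths and Jensen's inequality
bound the even moments of `U*` by the trace moments of `S*`. The remainder involves averages of
Rayleigh quotients of trace zero matrices; it is small because the Gram matrix of the matrices
`X_j X_jᵗ - I` has a small fourth trace moment, few sample vectors have atypical lengths, and
uniformly over directions little mass sits in large coordinates.
-/

namespace TylerGaussian

/-! ### Gaussian expectation of polynomials -/

section GaussianMoment

/-- The `k`-th moment of the standard normal distribution on `ℝ`. -/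
noncomputable def gaussianMoment (k : ℕ) : ℝ := ∫ x, x ^ k ∂(gaussianReal 0 1)

lemma integrable_pow_gaussianReal (k : ℕ) :
    Integrable (fun x : ℝ => x ^ k) (gaussianReal 0 1) := by
  rcases eq_or_ne k 0 with rfl | hk
  · simp
  · have h := (memLp_id_gaussianReal (μ := 0) (v := 1) (k : NNReal)).integrable_norm_pow hk
    exact (integrable_norm_iff (by fun_prop)).1 (by simpa [norm_pow] using h)

lemma gaussianMoment_one : gaussianMoment 1 = 0 := by
  simp [gaussianMoment, integral_id_gaussianReal]

lemma hasDerivAt_gaussianPDFReal (x : ℝ) :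
    HasDerivAt (gaussianPDFReal 0 1) (-(x * gaussianPDFReal 0 1 x)) x := by
  unfold gaussianPDFReal
  have hexponent :
      HasDerivAt (fun x : ℝ => -(x - 0) ^ 2 / (2 * ((1 : NNReal) : ℝ))) (-x) x := by
    refine (((hasDerivAt_id x).sub_const 0).pow 2 |>.neg |>.div_const _).congr_deriv ?_
    norm_num
    ring
  exact (hexponent.exp.const_mul _).congr_deriv (by ring)

lemma integrable_pow_mul_gaussianPDFReal (k : ℕ) :
    Integrable (fun x : ℝ => x ^ k * gaussianPDFReal 0 1 x) := by
  have h := integrable_pow_gaussianReal k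
  rw [gaussianReal_of_var_ne_zero 0 one_ne_zero,
    integrable_withDensity_iff_integrable_smul' (measurable_gaussianPDF _ _)
      (ae_of_all _ fun _ => gaussianPDF_lt_top)] at h
  simpa [toReal_gaussianPDF, mul_comm] using h

lemma gaussianMoment_eq_integral_pdf (k : ℕ) :
    gaussianMoment k = ∫ x : ℝ, x ^ k * gaussianPDFReal 0 1 x := by
  rw [gaussianMoment, integral_gaussianReal_eq_integral_smul one_ne_zero]
  simp [mul_comm]

lemma gaussianMoment_add_two (k : ℕ) :
    gaussianMoment (k + 2) = (k + 1) * gaussianMoment k := by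
  have hparts := integral_mul_deriv_eq_deriv_mul_of_integrable
    (u := fun x : ℝ => x ^ (k + 1)) (v := gaussianPDFReal 0 1)
    (u' := fun x => ((k + 1 : ℕ) : ℝ) * x ^ k) (v' := fun x => -(x * gaussianPDFReal 0 1 x))
    (fun x _ => by simpa using hasDerivAt_pow (k + 1) x)
    (fun x _ => hasDerivAt_gaussianPDFReal x)
    ((integrable_pow_mul_gaussianPDFReal (k + 2)).neg.congr (ae_of_all _ fun x => by
      simp only [Pi.mul_apply, Pi.neg_apply]; ring))
    (((integrable_pow_mul_gaussianPDFReal k).const_mul ((k + 1 : ℕ) : ℝ)).congr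
      (ae_of_all _ fun x => by simp only [Pi.mul_apply]; ring))
    (integrable_pow_mul_gaussianPDFReal (k + 1))
  calc gaussianMoment (k + 2)
      = -∫ x : ℝ, x ^ (k + 1) * -(x * gaussianPDFReal 0 1 x) := by
        rw [gaussianMoment_eq_integral_pdf, ← integral_neg]
        exact integral_congr_ae (ae_of_all _ fun x => by ring)
    _ = ∫ x : ℝ, ((k + 1 : ℕ) : ℝ) * x ^ k * gaussianPDFReal 0 1 x := by rw [hparts, neg_neg]
    _ = (k + 1) * gaussianMoment k := by
        rw [gaussianMoment_eq_integral_pdf, ← integral_const_mul]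
        exact integral_congr_ae (ae_of_all _ fun x => by push_cast; ring)

end GaussianMoment

section GaussianExpectation

variable {σ : Type*} [Fintype σ]

/-- The standard normal distribution on `σ → ℝ`. -/
noncomputable abbrev stdNormal (σ : Type*) [Fintype σ] : Measure (σ → ℝ) :=
  Measure.pi fun _ => gaussianReal 0 1

lemma eval_monomial_eq_prod (x : σ → ℝ) (m : σ →₀ ℕ) (a : ℝ) :
    MvPolynomial.eval x (MvPolynomial.monomial m a) = a * ∏ i, x i ^ m i := by
  rw [MvPolynomial.eval_monomial, Finsupp.prod_fintype _ _ (by simp)]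

lemma integrable_eval (p : MvPolynomial σ ℝ) :
    Integrable (fun x => MvPolynomial.eval x p) (stdNormal σ) := by
  induction p using MvPolynomial.induction_on' with
  | add p q hp hq =>
    simp only [map_add]
    exact hp.add hq
  | monomial m a =>
    simp only [eval_monomial_eq_prod]
    exact (Integrable.fintype_prod (f := fun i (y : ℝ) => y ^ m i)
      fun i => integrable_pow_gaussianReal _).const_mul _

/-- The expectation of a polynomial in independent standard normal variables, as a linear
functional on polynomials: working with polynomials instead of functions turns Gaussian
integration by parts into an identity free of integrability conditions. -/
noncomputable def gaussianExpectation : MvPolynomial σ ℝ →ₗ[ℝ] ℝ where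
  toFun p := ∫ x, MvPolynomial.eval x p ∂(stdNormal σ)
  map_add' p q := by
    simp only [map_add]
    exact integral_add (integrable_eval p) (integrable_eval q)
  map_smul' c p := by
    simp only [RingHom.id_apply, smul_eq_mul, ← integral_const_mul, MvPolynomial.smul_eval]

end GaussianExpectation

local notation "𝓔" => gaussianExpectation

section ExpectationLemmas

variable {σ : Type*} [Fintype σ]

lemma gaussianExpectation_apply (p : MvPolynomial σ ℝ) :
    𝓔 p = ∫ x, MvPolynomial.eval x p ∂(stdNormal σ) := rfl

lemma gaussianExpectation_monomial (m : σ →₀ ℕ) (a : ℝ) :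
    𝓔 (MvPolynomial.monomial m a) = a * ∏ i, gaussianMoment (m i) := by
  simp only [gaussianExpectation_apply, eval_monomial_eq_prod]
  rw [integral_const_mul, integral_fintype_prod_eq_prod (f := fun i (y : ℝ) => y ^ m i)]
  rfl

lemma gaussianExpectation_C (a : ℝ) : 𝓔 (MvPolynomial.C a : MvPolynomial σ ℝ) = a := by
  simp [gaussianExpectation_apply]

lemma gaussianExpectation_one : 𝓔 (1 : MvPolynomial σ ℝ) = 1 := by
  simp [gaussianExpectation_apply]

lemma gaussianExpectation_C_mul (a : ℝ) (p : MvPolynomial σ ℝ) :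
    𝓔 (MvPolynomial.C a * p) = a * 𝓔 p := by
  rw [← MvPolynomial.smul_eq_C_mul, map_smul, smul_eq_mul]

lemma pow_gaussianExpectation_le (p : MvPolynomial σ ℝ) {k : ℕ} (hk : Even k) :
    𝓔 p ^ k ≤ 𝓔 (p ^ k) := by
  simp only [gaussianExpectation_apply, map_pow]
  exact hk.convexOn_pow.map_integral_le (continuous_pow k).continuousOn isClosed_univ
    (ae_of_all _ fun _ => Set.mem_univ _) (integrable_eval p)
    ((integrable_eval (p ^ k)).congr (ae_of_all _ fun x => by simp))

lemma gaussianExpectation_X_mul (i : σ) (p : MvPolynomial σ ℝ) :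
    𝓔 (MvPolynomial.X i * p) = 𝓔 (MvPolynomial.pderiv i p) := by
  classical
  induction p using MvPolynomial.induction_on' with
  | add p q hp hq => simp only [mul_add, map_add, hp, hq]
  | monomial m a =>
    rw [MvPolynomial.pderiv_monomial, MvPolynomial.X, MvPolynomial.monomial_mul,
      gaussianExpectation_monomial, gaussianExpectation_monomial, one_mul, mul_assoc,
      ← Finset.mul_prod_erase _ _ (Finset.mem_univ i),
      ← Finset.mul_prod_erase _ (fun j => gaussianMoment ((m - Finsupp.single i 1 : σ →₀ ℕ) j))
        (Finset.mem_univ i), ← mul_assoc (m i : ℝ)]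
    congr 2
    · simp only [Finsupp.coe_add, Pi.add_apply, Finsupp.single_eq_same, Finsupp.coe_tsub,
        Pi.sub_apply]
      rcases m i with _ | k
      · simp [gaussianMoment_one]
      · rw [show 1 + (k + 1) = k + 2 by ring, gaussianMoment_add_two]
        simp
    · refine Finset.prod_congr rfl fun j hj => ?_
      simp [(Finset.ne_of_mem_erase hj).symm]

lemma gaussianExpectation_sum_X_mul (F : σ → MvPolynomial σ ℝ) (f : MvPolynomial σ ℝ) :
    𝓔 ((∑ i, MvPolynomial.X i * F i) * f) =
      𝓔 ((∑ i, MvPolynomial.pderiv i (F i)) * f) + 𝓔 (∑ i, F i * MvPolynomial.pderiv i f) := by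
  simp only [Finset.sum_mul, map_sum, ← Finset.sum_add_distrib]
  refine Finset.sum_congr rfl fun i _ => ?_
  rw [mul_assoc, gaussianExpectation_X_mul, Derivation.leibniz, ← map_add, smul_eq_mul,
    smul_eq_mul]
  congr 1
  ring

end ExpectationLemmas

section NormalSample

variable {n d : ℕ}

/-- The joint law of `n` independent standard normal vectors in `ℝ^d`. -/
noncomputable abbrev normalSample (n d : ℕ) : Measure (Fin n → Fin d → ℝ) :=
  Measure.pi fun _ => stdNormal (Fin d)

/-- Real polynomials in the coordinates of a sample of `n` vectors in `ℝ^d`; the variable `(j, a)`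
is the `a`-th coordinate of the `j`-th vector. -/
abbrev SamplePoly (n d : ℕ) : Type := MvPolynomial (Fin n × Fin d) ℝ

/-- Evaluation of a polynomial at a sample. -/
noncomputable def evalSample (x : Fin n → Fin d → ℝ) : SamplePoly n d →ₐ[ℝ] ℝ :=
  MvPolynomial.aeval fun i => x i.1 i.2

lemma evalSample_eq_eval (x : Fin n → Fin d → ℝ) (p : SamplePoly n d) :
    evalSample x p = MvPolynomial.eval (fun i => x i.1 i.2) p :=
  congrFun (MvPolynomial.aeval_eq_eval _) p

@[simp]
lemma evalSample_X (x : Fin n → Fin d → ℝ) (i : Fin n × Fin d) :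
    evalSample x (MvPolynomial.X i) = x i.1 i.2 :=
  MvPolynomial.aeval_X ..

@[simp]
lemma evalSample_C (x : Fin n → Fin d → ℝ) (a : ℝ) : evalSample x (MvPolynomial.C a) = a :=
  MvPolynomial.aeval_C ..

lemma measurePreserving_uncurry_normalSample :
    MeasurePreserving (fun (x : Fin n → Fin d → ℝ) i => x i.1 i.2)
      (normalSample n d) (stdNormal (Fin n × Fin d)) where
  measurable := by fun_prop
  map_eq := by
    have h := Measure.infinitePi_map_curry_symm fun (_ : Fin n) (_ : Fin d) => gaussianReal 0 1
    simp only [Measure.infinitePi_eq_pi] at h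
    exact h

lemma measurable_evalSample (p : SamplePoly n d) : Measurable fun x => evalSample x p := by
  simp only [evalSample_eq_eval]
  exact (MvPolynomial.continuous_eval p).measurable.comp (by fun_prop)

lemma integrable_evalSample (p : SamplePoly n d) :
    Integrable (fun x => evalSample x p) (normalSample n d) := by
  simp only [evalSample_eq_eval]
  exact measurePreserving_uncurry_normalSample.integrable_comp_of_integrable (integrable_eval p)

lemma integral_evalSample (p : SamplePoly n d) :
    ∫ x, evalSample x p ∂(normalSample n d) = gaussianExpectation p := by
  simp only [evalSample_eq_eval, gaussianExpectation_apply]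
  rw [← measurePreserving_uncurry_normalSample.map_eq,
    integral_map measurePreserving_uncurry_normalSample.aemeasurable]
  exact (MvPolynomial.continuous_eval p).aestronglyMeasurable

end NormalSample

/-! ### The loop equation for trace moments -/

section MatrixDerivation

variable {S R ι κ μ : Type*} [CommSemiring S] [CommRing R] [Algebra S R] (D : Derivation S R R)

lemma map_derivation_mul [Fintype κ] (A : Matrix ι κ R) (B : Matrix κ μ R) :
    (A * B).map D = A.map D * B + A * B.map D := by
  ext x y
  simp only [Matrix.map_apply, Matrix.mul_apply, Matrix.add_apply, map_sum, Derivation.leibniz,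
    smul_eq_mul, ← Finset.sum_add_distrib]
  exact Finset.sum_congr rfl fun k _ => by ring

lemma map_derivation_one [DecidableEq ι] : (1 : Matrix ι ι R).map D = 0 := by
  ext x y
  by_cases h : x = y <;> simp [h]

variable [Fintype ι] [DecidableEq ι]

lemma map_derivation_pow (A : Matrix ι ι R) (p : ℕ) :
    (A ^ p).map D = ∑ q ∈ Finset.range p, A ^ q * A.map D * A ^ (p - 1 - q) := by
  induction p with
  | zero => simp [map_derivation_one]
  | succ p ih =>
    rw [pow_succ, map_derivation_mul, ih, Finset.sum_range_succ, Finset.sum_mul]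
    congr 1
    · refine Finset.sum_congr rfl fun q hq => ?_
      rw [Finset.mem_range] at hq
      rw [mul_assoc (A ^ q * _), ← pow_succ, show p - 1 - q + 1 = p + 1 - 1 - q by omega]
    · simp

lemma derivation_trace_pow (A : Matrix ι ι R) (q : ℕ) :
    D (trace (A ^ q)) = q • trace (A ^ (q - 1) * A.map D) := by
  have hcyclic : ∀ r ∈ Finset.range q,
      trace (A ^ r * A.map D * A ^ (q - 1 - r)) = trace (A ^ (q - 1) * A.map D) := by
    intro r hr
    rw [Finset.mem_range] at hr
    rw [Matrix.trace_mul_comm, ← Matrix.mul_assoc, ← pow_add,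
      show q - 1 - r + r = q - 1 by omega]
  calc D (trace (A ^ q)) = trace ((A ^ q).map D) := by simp [Matrix.trace]
    _ = q • trace (A ^ (q - 1) * A.map D) := by
      rw [map_derivation_pow, Matrix.trace_sum, Finset.sum_congr rfl hcyclic, Finset.sum_const,
        Finset.card_range]

end MatrixDerivation

lemma trace_mul_transpose_eq_sum {R ι κ : Type*} [CommRing R] [Fintype ι] [Fintype κ]
    (A B : Matrix ι κ R) : trace (A * Bᵀ) = ∑ i : ι × κ, A i.1 i.2 * B i.1 i.2 := by
  simp [Matrix.trace, Matrix.mul_apply, Fintype.sum_prod_type]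

lemma transpose_mul_symmetrized_mul_apply {R ι κ : Type*} [CommRing R] [Fintype κ]
    [DecidableEq κ] (G : Matrix κ ι R) (B B' : Matrix κ κ R) (j : ι) (a : κ) :
    (Gᵀ * (B * (vecMulVec (Pi.single a 1) (G.col j) + vecMulVec (G.col j) (Pi.single a 1)) *
        B')) j a =
      (Gᵀ * B) j a * (Gᵀ * B') j a + (Gᵀ * B * G) j j * B' a a := by
  rw [← Matrix.mul_assoc, ← Matrix.mul_assoc, Matrix.mul_add, Matrix.add_mul, Matrix.add_apply,
    mul_vecMulVec, vecMulVec_mul, mul_vecMulVec, vecMulVec_mul, vecMulVec_apply, vecMulVec_apply,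
    mulVec_single_one, single_one_vecMul]
  rfl

section LoopEquation

open MvPolynomial (pderiv)

/-- The `d × n` matrix whose columns are the vectors of a generic sample. -/
noncomputable def dataMatrix (n d : ℕ) : Matrix (Fin d) (Fin n) (SamplePoly n d) :=
  Matrix.of fun a j => MvPolynomial.X (j, a)

/-- The factor `1/√(nd)` for which `S* = (G Gᵗ - n I)/√(nd)`, where `G` is the data matrix. -/
noncomputable def gramScale (n d : ℕ) : ℝ := (√(n * d))⁻¹

/-- The square root of the aspect ratio `d/n`. -/
noncomputable def sqrtAspect (n d : ℕ) : ℝ := √(d / n)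

/-- The matrix `S* = √(n/d) (S - I)` of a generic sample, with polynomial entries. -/
noncomputable def fluctPoly (n d : ℕ) : Matrix (Fin d) (Fin d) (SamplePoly n d) :=
  gramScale n d • (dataMatrix n d * (dataMatrix n d)ᵀ - (n : ℝ) • 1)

/-- The normalized trace `d⁻¹ tr (S*)^q` of a generic sample, as a polynomial. -/
noncomputable def normTrace (n d q : ℕ) : SamplePoly n d :=
  (d : ℝ)⁻¹ • trace (fluctPoly n d ^ q)

variable {n d : ℕ}

local notation "𝐆" => dataMatrix n d
local notation "𝐖" => fluctPoly n d
local notation "𝐭" => normTrace n d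
local notation "ρ" => sqrtAspect n d

lemma transpose_fluctPoly_pow (p : ℕ) : (𝐖 ^ p)ᵀ = 𝐖 ^ p := by
  rw [Matrix.transpose_pow]
  simp [fluctPoly]

lemma dataMatrix_map_pderiv (j : Fin n) (a : Fin d) :
    𝐆.map (pderiv (j, a)) = vecMulVec (Pi.single a 1) (Pi.single j 1) := by
  ext b k
  rw [Matrix.map_apply, dataMatrix, Matrix.of_apply, MvPolynomial.pderiv_X]
  simp only [vecMulVec_apply, Pi.single_apply, Prod.mk.injEq]
  grind

lemma fluctPoly_map_pderiv (j : Fin n) (a : Fin d) :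
    𝐖.map (pderiv (j, a)) = gramScale n d •
      (vecMulVec (Pi.single a 1) (𝐆.col j) + vecMulVec (𝐆.col j) (Pi.single a 1)) := by
  have hsub : 𝐖.map (pderiv (j, a)) = gramScale n d • (𝐆 * 𝐆ᵀ).map (pderiv (j, a)) := by
    have hone := map_derivation_one (ι := Fin d) (pderiv (R := ℝ) (j, a))
    ext1 x y
    have := congrFun₂ hone x y
    simp only [Matrix.map_apply, Matrix.zero_apply] at this
    simp [fluctPoly, this]
  rw [hsub, map_derivation_mul, Matrix.transpose_map, dataMatrix_map_pderiv,
    transpose_vecMulVec, vecMulVec_mul, mul_vecMulVec]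
  simp

lemma pderiv_trace_fluctPoly_pow (i : Fin n × Fin d) (q : ℕ) :
    pderiv i (trace (𝐖 ^ q)) = (2 * q * gramScale n d) • (𝐆ᵀ * 𝐖 ^ (q - 1)) i.1 i.2 := by
  obtain ⟨j, a⟩ := i
  have hsymm : ∀ x y, (𝐖 ^ (q - 1)) x y = (𝐖 ^ (q - 1)) y x := fun x y =>
    congrFun₂ (transpose_fluctPoly_pow (q - 1)) y x
  have hleft : trace (𝐖 ^ (q - 1) * vecMulVec (Pi.single a 1) (𝐆.col j)) =
      (𝐆ᵀ * 𝐖 ^ (q - 1)) j a := by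
    rw [mul_vecMulVec, trace_vecMulVec, Matrix.mulVec_single_one, Matrix.mul_apply]
    exact Finset.sum_congr rfl fun x _ => mul_comm _ _
  have hright : trace (𝐖 ^ (q - 1) * vecMulVec (𝐆.col j) (Pi.single a 1)) =
      (𝐆ᵀ * 𝐖 ^ (q - 1)) j a := by
    rw [mul_vecMulVec, trace_vecMulVec, dotProduct_single_one, Matrix.mul_apply]
    simp only [Matrix.mulVec, dotProduct, Matrix.col_apply, Matrix.transpose_apply]
    exact Finset.sum_congr rfl fun x _ => by rw [hsymm, mul_comm]
  rw [derivation_trace_pow, fluctPoly_map_pderiv, Matrix.mul_smul, Matrix.trace_smul,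
    Matrix.mul_add, Matrix.trace_add, hleft, hright, ← two_smul ℝ, smul_smul,
    ← Nat.cast_smul_eq_nsmul ℝ, smul_smul]
  congr 1
  ring

lemma sum_mul_fluctPoly_map_pderiv_mul (B B' : Matrix (Fin d) (Fin d) (SamplePoly n d))
    (hB' : B'ᵀ = B') :
    ∑ i : Fin n × Fin d, (𝐆ᵀ * (B * 𝐖.map (pderiv i) * B')) i.1 i.2 =
      gramScale n d • (trace (B * B' * (𝐆 * 𝐆ᵀ)) + trace (B * (𝐆 * 𝐆ᵀ)) * trace B') := by
  have hentry : ∀ i : Fin n × Fin d, (𝐆ᵀ * (B * 𝐖.map (pderiv i) * B')) i.1 i.2 =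
      gramScale n d • ((𝐆ᵀ * B) i.1 i.2 * (𝐆ᵀ * B') i.1 i.2 +
        (𝐆ᵀ * B * 𝐆) i.1 i.1 * B' i.2 i.2) := by
    rintro ⟨j, a⟩
    rw [fluctPoly_map_pderiv, Matrix.mul_smul, Matrix.smul_mul, Matrix.mul_smul,
      Matrix.smul_apply, transpose_mul_symmetrized_mul_apply]
  have hcross : trace (B * B' * (𝐆 * 𝐆ᵀ)) = trace ((𝐆ᵀ * B) * (𝐆ᵀ * B')ᵀ) := by
    rw [Matrix.transpose_mul, hB', Matrix.transpose_transpose, ← Matrix.mul_assoc,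
      Matrix.trace_mul_comm, Matrix.mul_assoc 𝐆ᵀ, Matrix.mul_assoc B B']
  have hsplit : trace (B * (𝐆 * 𝐆ᵀ)) = trace (𝐆ᵀ * B * 𝐆) := by
    rw [← Matrix.mul_assoc, Matrix.trace_mul_comm, Matrix.mul_assoc]
  simp only [hentry, ← Finset.smul_sum, Finset.sum_add_distrib, hcross, hsplit,
    trace_mul_transpose_eq_sum]
  simp only [Matrix.trace, Matrix.diag_apply, Finset.sum_mul_sum, Fintype.sum_prod_type]

lemma trace_fluctPoly_pow_succ (p : ℕ) :
    trace (𝐖 ^ (p + 1)) = gramScale n d •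
      (∑ i : Fin n × Fin d, MvPolynomial.X i * (𝐆ᵀ * 𝐖 ^ p) i.1 i.2 -
        (n : ℝ) • trace (𝐖 ^ p)) := by
  have hpow : 𝐖 ^ (p + 1) = gramScale n d • (𝐆 * (𝐆ᵀ * 𝐖 ^ p) - (n : ℝ) • 𝐖 ^ p) := by
    rw [pow_succ']
    nth_rw 1 [fluctPoly]
    rw [Matrix.smul_mul, Matrix.sub_mul, Matrix.smul_mul, one_mul, Matrix.mul_assoc]
  rw [hpow, Matrix.trace_smul, Matrix.trace_sub, Matrix.trace_smul, Matrix.trace_mul_comm,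
    ← Matrix.transpose_transpose 𝐆, trace_mul_transpose_eq_sum, Matrix.transpose_transpose]
  simp [dataMatrix, mul_comm]

lemma pderiv_transpose_mul_fluctPoly_pow (p : ℕ) (i : Fin n × Fin d) :
    pderiv i ((𝐆ᵀ * 𝐖 ^ p) i.1 i.2) =
      (𝐖 ^ p) i.2 i.2 + (𝐆ᵀ * (𝐖 ^ p).map (pderiv i)) i.1 i.2 := by
  obtain ⟨j, a⟩ := i
  have h := congrFun₂ (map_derivation_mul (pderiv (R := ℝ) (j, a)) 𝐆ᵀ (𝐖 ^ p)) j a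
  rw [Matrix.add_apply, Matrix.transpose_map, dataMatrix_map_pderiv, transpose_vecMulVec,
    vecMulVec_mul, single_one_vecMul, vecMulVec_apply, Pi.single_eq_same, one_mul,
    Matrix.map_apply] at h
  exact h

lemma sum_pderiv_transpose_mul_fluctPoly_pow (p : ℕ) :
    ∑ i : Fin n × Fin d, pderiv i ((𝐆ᵀ * 𝐖 ^ p) i.1 i.2) =
      (n : ℝ) • trace (𝐖 ^ p) + ∑ q ∈ Finset.range p, gramScale n d •
        (trace (𝐖 ^ (p - 1) * (𝐆 * 𝐆ᵀ)) +
          trace (𝐖 ^ q * (𝐆 * 𝐆ᵀ)) * trace (𝐖 ^ (p - 1 - q))) := by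
  simp only [pderiv_transpose_mul_fluctPoly_pow, Finset.sum_add_distrib]
  congr 1
  · simp [Fintype.sum_prod_type, Matrix.trace, MvPolynomial.smul_eq_C_mul]
  · simp only [map_derivation_pow, Matrix.mul_sum, Matrix.sum_apply]
    rw [Finset.sum_comm]
    refine Finset.sum_congr rfl fun q hq => ?_
    rw [Finset.mem_range] at hq
    rw [sum_mul_fluctPoly_map_pderiv_mul _ _ (transpose_fluctPoly_pow _), ← pow_add,
      show q + (p - 1 - q) = p - 1 by omega]

/-- The derivation `(nd)^{-1/2} d⁻¹ ∑ (Gᵗ W^p)_{ja} ∂_{ja}`, which collects the terms of the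
integration by parts of `tr W^(p+1) f` in which `f` is differentiated. -/
noncomputable def loopDeriv (n d p : ℕ) : Derivation ℝ (SamplePoly n d) (SamplePoly n d) :=
  (gramScale n d / d) • ∑ i : Fin n × Fin d,
    ((dataMatrix n d)ᵀ * fluctPoly n d ^ p) i.1 i.2 • pderiv i

lemma loopDeriv_apply (p : ℕ) (f : SamplePoly n d) :
    loopDeriv n d p f =
      (gramScale n d / d) • ∑ i : Fin n × Fin d, (𝐆ᵀ * 𝐖 ^ p) i.1 i.2 * pderiv i f := by
  rw [loopDeriv, Derivation.smul_apply, ← Derivation.coeFnAddMonoidHom_apply, map_sum,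
    Finset.sum_apply]
  rfl

lemma gramScale_sq_mul [NeZero n] : gramScale n d ^ 2 * n = (d : ℝ)⁻¹ := by
  have hn := NeZero.ne (n : ℝ)
  rw [gramScale, inv_pow, Real.sq_sqrt (by positivity)]
  field_simp

lemma gramScale_eq [NeZero d] : gramScale n d = (d : ℝ)⁻¹ * ρ := by
  have hd := NeZero.ne (d : ℝ)
  have hinv : (d : ℝ)⁻¹ = √((d : ℝ)⁻¹ ^ 2) := (Real.sqrt_sq (by positivity)).symm
  rw [gramScale, sqrtAspect, hinv, ← Real.sqrt_inv, ← Real.sqrt_mul (by positivity)]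
  congr 1
  field_simp

lemma trace_fluctPoly_pow [NeZero d] (q : ℕ) : trace (𝐖 ^ q) = (d : ℝ) • 𝐭 q := by
  rw [normTrace, smul_smul, mul_inv_cancel₀ (NeZero.ne _), one_smul]

variable [NeZero n] [NeZero d]

lemma gramScale_sq_smul_gram : gramScale n d ^ 2 • (𝐆 * 𝐆ᵀ) = (d : ℝ)⁻¹ • (1 + ρ • 𝐖) := by
  have h : gramScale n d ^ 2 • (𝐆 * 𝐆ᵀ) =
      gramScale n d • 𝐖 + (gramScale n d ^ 2 * n) • (1 : Matrix (Fin d) (Fin d) _) := by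
    rw [fluctPoly, smul_smul, smul_sub, smul_smul, ← sq, sub_add_cancel]
  rw [h, gramScale_sq_mul, smul_add, smul_smul, add_comm, ← gramScale_eq]

lemma gramScale_sq_smul_trace (q : ℕ) :
    gramScale n d ^ 2 • trace (𝐖 ^ q * (𝐆 * 𝐆ᵀ)) = 𝐭 q + ρ • 𝐭 (q + 1) := by
  rw [← Matrix.trace_smul, ← Matrix.mul_smul, gramScale_sq_smul_gram, Matrix.mul_smul,
    Matrix.mul_add, Matrix.mul_smul, mul_one, ← pow_succ]
  simp only [normTrace, Matrix.trace_smul, Matrix.trace_add, smul_add]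
  rw [smul_comm]

lemma loopDeriv_normTrace (p q : ℕ) :
    loopDeriv n d p (𝐭 q) = (2 * q / d ^ 2 : ℝ) • (𝐭 (p + q - 1) + ρ • 𝐭 (p + q)) := by
  rcases Nat.eq_zero_or_pos q with rfl | hq
  · simp [normTrace]
  have hpderiv : ∀ i, pderiv i (𝐭 q) =
      ((d : ℝ)⁻¹ * (2 * q * gramScale n d)) • (𝐆ᵀ * 𝐖 ^ (q - 1)) i.1 i.2 := fun i => by
    rw [normTrace, Derivation.map_smul, pderiv_trace_fluctPoly_pow, smul_smul]
  have htrace : trace (𝐖 ^ (p + q - 1) * (𝐆 * 𝐆ᵀ)) =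
      ∑ i : Fin n × Fin d, (𝐆ᵀ * 𝐖 ^ p) i.1 i.2 * (𝐆ᵀ * 𝐖 ^ (q - 1)) i.1 i.2 := by
    rw [← trace_mul_transpose_eq_sum, Matrix.transpose_mul, transpose_fluctPoly_pow,
      Matrix.transpose_transpose, Matrix.mul_assoc 𝐆ᵀ, Matrix.trace_mul_comm 𝐆ᵀ,
      show p + q - 1 = p + (q - 1) by omega, pow_add]
    simp only [Matrix.mul_assoc]
  have hscaled := gramScale_sq_smul_trace (n := n) (d := d) (p + q - 1)
  rw [show p + q - 1 + 1 = p + q by omega] at hscaled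
  simp only [loopDeriv_apply, hpderiv, mul_smul_comm, ← Finset.smul_sum, smul_smul, ← htrace,
    ← hscaled]
  congr 1
  have hd := NeZero.ne (d : ℝ)
  field_simp

lemma gramScale_smul_sum_pderiv (p : ℕ) :
    gramScale n d • ∑ i : Fin n × Fin d, pderiv i ((𝐆ᵀ * 𝐖 ^ p) i.1 i.2) =
      (gramScale n d * n) • trace (𝐖 ^ p) + (p : ℝ) • (𝐭 (p - 1) + ρ • 𝐭 p) +
        (d : ℝ) • ∑ q ∈ Finset.range p, (𝐭 q + ρ • 𝐭 (q + 1)) * 𝐭 (p - 1 - q) := by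
  rw [sum_pderiv_transpose_mul_fluctPoly_pow, smul_add, smul_smul, add_assoc]
  congr 1
  rcases Nat.eq_zero_or_pos p with rfl | hp
  · simp
  have hterm : ∀ q, gramScale n d • gramScale n d • (trace (𝐖 ^ (p - 1) * (𝐆 * 𝐆ᵀ)) +
      trace (𝐖 ^ q * (𝐆 * 𝐆ᵀ)) * trace (𝐖 ^ (p - 1 - q))) =
      (𝐭 (p - 1) + ρ • 𝐭 p) + (d : ℝ) • ((𝐭 q + ρ • 𝐭 (q + 1)) * 𝐭 (p - 1 - q)) := fun q => by
    rw [smul_smul, ← sq, smul_add, ← smul_mul_assoc, gramScale_sq_smul_trace,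
      gramScale_sq_smul_trace, trace_fluctPoly_pow, Nat.sub_add_cancel hp, mul_smul_comm]
  rw [Finset.smul_sum, Finset.sum_congr rfl fun q _ => hterm q, Finset.sum_add_distrib,
    Finset.sum_const, Finset.card_range, ← Finset.smul_sum, ← Nat.cast_smul_eq_nsmul ℝ p]

lemma loop_equation (p : ℕ) (f : SamplePoly n d) :
    𝓔 (𝐭 (p + 1) * f) =
      𝓔 ((∑ q ∈ Finset.range p, (𝐭 q + ρ • 𝐭 (q + 1)) * 𝐭 (p - 1 - q)) * f) +
        (p / d : ℝ) * 𝓔 ((𝐭 (p - 1) + ρ • 𝐭 p) * f) + 𝓔 (loopDeriv n d p f) := by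
  have hd := NeZero.ne (d : ℝ)
  have hparts := congrArg (gramScale n d * ·)
    (gaussianExpectation_sum_X_mul (fun i : Fin n × Fin d => (𝐆ᵀ * 𝐖 ^ p) i.1 i.2) f)
  have hdiv := congrArg (fun g => 𝓔 (g * f)) (gramScale_smul_sum_pderiv (n := n) (d := d) p)
  simp only [add_mul, smul_mul_assoc, map_add, map_smul, smul_eq_mul] at hdiv hparts ⊢
  rw [normTrace, trace_fluctPoly_pow_succ, loopDeriv_apply]
  simp only [sub_mul, smul_mul_assoc, map_sub, map_smul, smul_eq_mul]
  field_simp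
  linear_combination hparts + hdiv

end LoopEquation

/-! ### Perturbed Catalan numbers -/

/-- The even Catalan sequence `1, 0, 1, 0, 2, 0, 5, …` (the moments of the semicircle law)
perturbed by `ε`: its generating function solves `f(z) = 1 + (z² + ε z) f(z)²`. It dominates the
expected trace moments of `S*`. -/
noncomputable def perturbedCatalan (ε : ℝ) : ℕ → ℝ
  | 0 => 1
  | p + 1 => ∑ i : Fin p, perturbedCatalan ε i * perturbedCatalan ε (p - 1 - i) +
      ε * ∑ i : Fin (p + 1), perturbedCatalan ε i * perturbedCatalan ε (p - i)
decreasing_by all_goals omega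

section PerturbedCatalan

local notation "𝐛" => perturbedCatalan

@[simp]
lemma perturbedCatalan_zero (ε : ℝ) : 𝐛 ε 0 = 1 := by rw [perturbedCatalan]

lemma perturbedCatalan_succ (ε : ℝ) (p : ℕ) :
    𝐛 ε (p + 1) = ∑ i ∈ Finset.range p, 𝐛 ε i * 𝐛 ε (p - 1 - i) +
      ε * ∑ i ∈ Finset.range (p + 1), 𝐛 ε i * 𝐛 ε (p - i) := by
  rw [perturbedCatalan, Finset.sum_range, Finset.sum_range]

lemma continuous_perturbedCatalan (q : ℕ) : Continuous fun ε => 𝐛 ε q := by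
  induction q using Nat.strong_induction_on with
  | _ q ih =>
    rcases q with _ | p
    · simpa only [perturbedCatalan_zero] using continuous_const
    · simp only [perturbedCatalan_succ]
      refine .add ?_ (continuous_id.mul ?_) <;>
      · refine continuous_finsetSum _ fun i hi => ?_
        rw [Finset.mem_range] at hi
        exact (ih _ (by omega)).mul (ih _ (by omega))

variable {ε : ℝ}

lemma perturbedCatalan_nonneg (hε : 0 ≤ ε) (q : ℕ) : 0 ≤ 𝐛 ε q := by
  induction q using Nat.strong_induction_on with
  | _ q ih =>
    rcases q with _ | p
    · simp
    · rw [perturbedCatalan_succ]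
      refine add_nonneg ?_ (mul_nonneg hε ?_) <;>
      · refine Finset.sum_nonneg fun i hi => ?_
        rw [Finset.mem_range] at hi
        exact mul_nonneg (ih _ (by omega)) (ih _ (by omega))

lemma mul_perturbedCatalan_le_succ (hε : 0 ≤ ε) (p : ℕ) : ε * 𝐛 ε p ≤ 𝐛 ε (p + 1) := by
  have hmul_nonneg : ∀ i j, 0 ≤ 𝐛 ε i * 𝐛 ε j := fun i j =>
    mul_nonneg (perturbedCatalan_nonneg hε i) (perturbedCatalan_nonneg hε j)
  have hfirst : 𝐛 ε p ≤ ∑ i ∈ Finset.range (p + 1), 𝐛 ε i * 𝐛 ε (p - i) := by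
    simpa using Finset.single_le_sum (f := fun i => 𝐛 ε i * 𝐛 ε (p - i))
      (fun i _ => hmul_nonneg _ _) (Finset.mem_range.2 p.succ_pos)
  rw [perturbedCatalan_succ]
  exact le_add_of_nonneg_of_le (Finset.sum_nonneg fun i _ => hmul_nonneg _ _)
    (mul_le_mul_of_nonneg_left hfirst hε)

lemma sum_range_conv_mul_pow_le {a : ℕ → ℝ} (ha : ∀ i, 0 ≤ a i) {z : ℝ} (hz : 0 ≤ z) (N : ℕ) :
    ∑ p ∈ Finset.range N, (∑ i ∈ Finset.range (p + 1), a i * a (p - i)) * z ^ p ≤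
      (∑ i ∈ Finset.range N, a i * z ^ i) ^ 2 := by
  let c : ℕ × ℕ → ℝ := fun x => (a x.1 * z ^ x.1) * (a x.2 * z ^ x.2)
  have hconv : ∀ p, (∑ i ∈ Finset.range (p + 1), a i * a (p - i)) * z ^ p =
      ∑ x ∈ Finset.HasAntidiagonal.antidiagonal p, c x := fun p => by
    rw [← Finset.Nat.sum_antidiagonal_eq_sum_range_succ (fun i j => a i * a j), Finset.sum_mul]
    refine Finset.sum_congr rfl fun x hx => ?_
    rw [← Finset.HasAntidiagonal.mem_antidiagonal.1 hx, pow_add]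
    exact mul_mul_mul_comm _ _ _ _
  have hdisjoint : Set.PairwiseDisjoint ↑(Finset.range N)
      (Finset.HasAntidiagonal.antidiagonal (A := ℕ)) :=
    fun p _ q _ hpq => Finset.disjoint_left.2 fun x hp hq => by
      rw [Finset.HasAntidiagonal.mem_antidiagonal] at hp hq
      exact hpq (hp.symm.trans hq)
  simp only [hconv]
  rw [sq, Finset.sum_mul_sum, ← Finset.sum_product', ← Finset.sum_biUnion hdisjoint]
  refine Finset.sum_le_sum_of_subset_of_nonneg (fun x hx => ?_) fun x _ _ =>
    mul_nonneg (mul_nonneg (ha _) (pow_nonneg hz _)) (mul_nonneg (ha _) (pow_nonneg hz _))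
  simp only [Finset.mem_biUnion, Finset.mem_range, Finset.HasAntidiagonal.mem_antidiagonal,
    Finset.mem_product] at hx ⊢
  omega

lemma sum_perturbedCatalan_succ_mul_pow (z : ℝ) (N : ℕ) :
    ∑ p ∈ Finset.range (N + 1), 𝐛 ε (p + 1) * z ^ (p + 1) =
      z ^ 2 * ∑ p ∈ Finset.range N,
          (∑ i ∈ Finset.range (p + 1), 𝐛 ε i * 𝐛 ε (p - i)) * z ^ p +
        ε * z * ∑ p ∈ Finset.range (N + 1),
          (∑ i ∈ Finset.range (p + 1), 𝐛 ε i * 𝐛 ε (p - i)) * z ^ p := by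
  simp only [perturbedCatalan_succ, add_mul, Finset.sum_add_distrib, Finset.mul_sum]
  congr 1
  · rw [Finset.sum_range_succ']
    simp only [Finset.range_zero, Finset.sum_empty, zero_mul, add_zero, Nat.add_sub_cancel]
    exact Finset.sum_congr rfl fun p _ => by ring
  · exact Finset.sum_congr rfl fun p _ => by rw [← Finset.mul_sum]; ring

-- Inductively `f_{N+1}(z) ≤ 1 + (z² + ε z) f_N(z)² ≤ 1 + 2²/4` for the truncated series `f_N`.
lemma sum_perturbedCatalan_mul_pow_le_two (hε : 0 ≤ ε) {z : ℝ} (hz : 0 ≤ z)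
    (h : z ^ 2 + ε * z ≤ 1 / 4) (N : ℕ) : ∑ q ∈ Finset.range (N + 1), 𝐛 ε q * z ^ q ≤ 2 := by
  have hterm : ∀ i, 0 ≤ 𝐛 ε i * z ^ i := fun i =>
    mul_nonneg (perturbedCatalan_nonneg hε i) (pow_nonneg hz i)
  induction N with
  | zero => simp
  | succ N ih =>
    have hconv : ∀ M ≤ N + 1, ∑ p ∈ Finset.range M,
        (∑ i ∈ Finset.range (p + 1), 𝐛 ε i * 𝐛 ε (p - i)) * z ^ p ≤ 2 ^ 2 := fun M hM =>
      (sum_range_conv_mul_pow_le (perturbedCatalan_nonneg hε) hz M).trans <|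
        pow_le_pow_left₀ (Finset.sum_nonneg fun i _ => hterm i)
          ((Finset.sum_le_sum_of_subset_of_nonneg (Finset.range_mono hM)
            fun i _ _ => hterm i).trans ih) 2
    rw [Finset.sum_range_succ', sum_perturbedCatalan_succ_mul_pow, perturbedCatalan_zero,
      pow_zero, mul_one]
    have hfst := mul_le_mul_of_nonneg_left (hconv N N.le_succ) (sq_nonneg z)
    have hsnd := mul_le_mul_of_nonneg_left (hconv (N + 1) le_rfl) (mul_nonneg hε hz)
    linarith

lemma perturbedCatalan_le {x : ℝ} (hε : 0 ≤ ε) (hx : 0 < x)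
    (h : x⁻¹ ^ 2 + ε * x⁻¹ ≤ 1 / 4) (q : ℕ) : 𝐛 ε q ≤ 2 * x ^ q := by
  have hq : 𝐛 ε q * x⁻¹ ^ q ≤ 2 :=
    (Finset.single_le_sum (f := fun q => 𝐛 ε q * x⁻¹ ^ q)
      (fun i _ => mul_nonneg (perturbedCatalan_nonneg hε i) (by positivity))
      (Finset.self_mem_range_succ q)).trans
      (sum_perturbedCatalan_mul_pow_le_two hε (by positivity) h q)
  rwa [inv_pow, ← div_eq_mul_inv, div_le_iff₀ (by positivity)] at hq

lemma catalan_le_perturbedCatalan (hε : 0 ≤ ε) (a : ℕ) : (catalan a : ℝ) ≤ 𝐛 ε (2 * a) := by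
  have hmul_nonneg : ∀ i j, 0 ≤ 𝐛 ε i * 𝐛 ε j := fun i j =>
    mul_nonneg (perturbedCatalan_nonneg hε i) (perturbedCatalan_nonneg hε j)
  induction a using Nat.strong_induction_on with
  | _ a ih =>
    rcases a with _ | a
    · simp
    calc ((catalan (a + 1) : ℕ) : ℝ)
        = ∑ s ∈ Finset.range (a + 1), (catalan s : ℝ) * catalan (a - s) := by
          rw [catalan_succ, Finset.sum_range]
          push_cast
          rfl
      _ ≤ ∑ s ∈ Finset.range (a + 1), 𝐛 ε (2 * s) * 𝐛 ε (2 * a - 2 * s) := by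
          refine Finset.sum_le_sum fun s hs => ?_
          rw [Finset.mem_range] at hs
          rw [← Nat.mul_sub]
          exact mul_le_mul (ih _ (by omega)) (ih _ (by omega)) (by positivity)
            (perturbedCatalan_nonneg hε _)
      _ = ∑ i ∈ (Finset.range (a + 1)).image (2 * ·), 𝐛 ε i * 𝐛 ε (2 * a - i) := by
          rw [Finset.sum_image (mul_right_injective₀ two_ne_zero).injOn]
      _ ≤ ∑ i ∈ Finset.range (2 * a + 1), 𝐛 ε i * 𝐛 ε (2 * a - i) := by
          refine Finset.sum_le_sum_of_subset_of_nonneg (fun i hi => ?_)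
            fun i _ _ => hmul_nonneg _ _
          simp only [Finset.mem_image, Finset.mem_range] at hi ⊢
          omega
      _ ≤ 𝐛 ε (2 * (a + 1)) := by
          rw [show 2 * (a + 1) = 2 * a + 1 + 1 by ring, perturbedCatalan_succ]
          exact le_add_of_nonneg_right
            (mul_nonneg hε (Finset.sum_nonneg fun i _ => hmul_nonneg _ _))

lemma four_pow_le_mul_catalan (a : ℕ) : 4 ^ a ≤ 2 * (a + 1) ^ 2 * catalan a := by
  rcases Nat.eq_zero_or_pos a with rfl | ha
  · simp
  calc 4 ^ a ≤ 2 * a * Nat.centralBinom a := Nat.four_pow_le_two_mul_self_mul_centralBinom a ha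
    _ ≤ 2 * (a + 1) * Nat.centralBinom a := by gcongr; omega
    _ = 2 * (a + 1) ^ 2 * catalan a := by rw [← succ_mul_catalan_eq_centralBinom]; ring

lemma mul_two_pow_le_perturbedCatalan (hε : 0 < ε) (hε1 : ε ≤ 1) (q : ℕ) :
    ε * 2 ^ q ≤ 4 * (q + 1) ^ 2 * 𝐛 ε q := by
  have heven : ∀ a : ℕ, (4 : ℝ) ^ a ≤ 2 * (a + 1) ^ 2 * 𝐛 ε (2 * a) := fun a =>
    calc (4 : ℝ) ^ a ≤ 2 * (a + 1) ^ 2 * catalan a := mod_cast four_pow_le_mul_catalan a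
      _ ≤ _ := by gcongr; exact catalan_le_perturbedCatalan hε.le a
  have hpos := perturbedCatalan_nonneg hε.le
  rcases Nat.even_or_odd' q with ⟨a, rfl | rfl⟩
  · calc ε * 2 ^ (2 * a) ≤ 1 * 4 ^ a := by rw [pow_mul]; norm_num1; gcongr
      _ ≤ 2 * (a + 1) ^ 2 * 𝐛 ε (2 * a) := by rw [one_mul]; exact heven a
      _ ≤ 4 * ((2 * a : ℕ) + 1) ^ 2 * 𝐛 ε (2 * a) := by
        gcongr
        · exact hpos _
        · norm_num
        · linarith [a.cast_nonneg (α := ℝ)]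
  · calc ε * 2 ^ (2 * a + 1) = 2 * (ε * 4 ^ a) := by rw [pow_succ, pow_mul]; norm_num1; ring
      _ ≤ 2 * (ε * (2 * (a + 1) ^ 2 * 𝐛 ε (2 * a))) := by gcongr; exact heven a
      _ = 4 * (a + 1) ^ 2 * (ε * 𝐛 ε (2 * a)) := by ring
      _ ≤ 4 * (a + 1) ^ 2 * 𝐛 ε (2 * a + 1) := by
        gcongr
        exact mul_perturbedCatalan_le_succ hε.le _
      _ ≤ 4 * ((2 * a + 1 : ℕ) + 1) ^ 2 * 𝐛 ε (2 * a + 1) := by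
        gcongr
        · exact hpos _
        · linarith [a.cast_nonneg (α := ℝ)]

end PerturbedCatalan

/-! ### Comparison of trace moments with perturbed Catalan numbers -/

lemma derivation_multiset_prod_map {S R ι : Type*} [CommSemiring S] [CommRing R] [Algebra S R]
    [DecidableEq ι] (D : Derivation S R R) (f : ι → R) (l : Multiset ι) :
    D (l.map f).prod = (l.map fun q => D (f q) * ((l.erase q).map f).prod).sum := by
  induction l using Multiset.induction with
  | empty => simp
  | cons a l ih =>
    have htail : ∀ q ∈ l, D (f q) * (((a ::ₘ l).erase q).map f).prod =
        f a * (D (f q) * ((l.erase q).map f).prod) := fun q hq => by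
      rw [Multiset.erase_cons_tail_of_mem hq, Multiset.map_cons, Multiset.prod_cons]
      ring
    rw [Multiset.map_cons, Multiset.prod_cons, Derivation.leibniz, ih, Multiset.map_cons,
      Multiset.sum_cons, Multiset.map_congr rfl htail, Multiset.sum_map_mul_left,
      Multiset.erase_cons_head, smul_eq_mul, smul_eq_mul]
    ring

lemma multiset_sum_induction {motive : Multiset ℕ → Prop} (zero : motive 0)
    (zero_cons : ∀ l, motive l → motive (0 ::ₘ l))
    (succ_cons : ∀ p l, (∀ l' : Multiset ℕ, l'.sum ≤ p + l.sum → motive l') →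
      motive ((p + 1) ::ₘ l)) (l : Multiset ℕ) : motive l := by
  induction hN : l.sum using Nat.strong_induction_on generalizing l with
  | _ N ih =>
    induction l using Multiset.induction with
    | empty => exact zero
    | cons a l ihl =>
      rw [Multiset.sum_cons] at hN
      rcases a with _ | p
      · exact zero_cons l (ihl (by omega))
      · exact succ_cons p l fun l' hl' => ih l'.sum (by omega) l' rfl

/-- The expectation of a product of normalized traces `d⁻¹ tr (S*)^q`, `q ∈ l`. -/
noncomputable def traceMoment (n d : ℕ) (l : Multiset ℕ) : ℝ :=
  gaussianExpectation (l.map (normTrace n d)).prod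

/-- The product of the perturbed Catalan numbers of the indices in `l`. -/
noncomputable def perturbedCatalanProd (ε : ℝ) (l : Multiset ℕ) : ℝ :=
  (l.map (perturbedCatalan ε)).prod

section TraceMoment

local notation "𝐛" => perturbedCatalan
local notation "𝐁" => perturbedCatalanProd

@[simp]
lemma perturbedCatalanProd_zero (ε : ℝ) : 𝐁 ε 0 = 1 := by simp [perturbedCatalanProd]

@[simp]
lemma perturbedCatalanProd_cons (ε : ℝ) (q : ℕ) (l : Multiset ℕ) :
    𝐁 ε (q ::ₘ l) = 𝐛 ε q * 𝐁 ε l := by simp [perturbedCatalanProd]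

lemma perturbedCatalanProd_nonneg {ε : ℝ} (hε : 0 ≤ ε) (l : Multiset ℕ) : 0 ≤ 𝐁 ε l := by
  induction l using Multiset.induction with
  | empty => simp
  | cons q l ih =>
    rw [perturbedCatalanProd_cons]
    exact mul_nonneg (perturbedCatalan_nonneg hε q) ih

variable {n d : ℕ}

local notation "𝐞" => traceMoment n d
local notation "ρ" => sqrtAspect n d

lemma sqrtAspect_nonneg : 0 ≤ ρ := Real.sqrt_nonneg _

@[simp]
lemma traceMoment_zero : 𝐞 0 = 1 := by simp [traceMoment, gaussianExpectation_one]

lemma normTrace_zero [NeZero d] : normTrace n d 0 = 1 := by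
  have hd := NeZero.ne (d : ℝ)
  have hcast : ((d : ℕ) : SamplePoly n d) = (d : ℝ) • 1 := by
    rw [Algebra.smul_def, mul_one, map_natCast]
  rw [normTrace, pow_zero, Matrix.trace_one, Fintype.card_fin, hcast, smul_smul,
    inv_mul_cancel₀ hd, one_smul]

lemma traceMoment_zero_cons [NeZero d] (l : Multiset ℕ) : 𝐞 (0 ::ₘ l) = 𝐞 l := by
  simp [traceMoment, normTrace_zero]

lemma gaussianExpectation_add_smul_mul (q r : ℕ) (l : Multiset ℕ) :
    𝓔 ((normTrace n d q + ρ • normTrace n d r) * (l.map (normTrace n d)).prod) =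
      𝐞 (q ::ₘ l) + ρ * 𝐞 (r ::ₘ l) := by
  simp [traceMoment, add_mul]

variable [NeZero n] [NeZero d]

lemma gaussianExpectation_loopDeriv_prod (p : ℕ) (l : Multiset ℕ) :
    𝓔 (loopDeriv n d p (l.map (normTrace n d)).prod) =
      (l.map fun q : ℕ => (2 * q / d ^ 2 : ℝ) *
        (𝐞 ((p + q - 1) ::ₘ l.erase q) + ρ * 𝐞 ((p + q) ::ₘ l.erase q))).sum := by
  rw [derivation_multiset_prod_map, map_multiset_sum, Multiset.map_map]
  refine congrArg Multiset.sum (Multiset.map_congr rfl fun q _ => ?_)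
  rw [Function.comp_apply, loopDeriv_normTrace, smul_mul_assoc, map_smul, smul_eq_mul,
    gaussianExpectation_add_smul_mul]

lemma traceMoment_succ_cons (p : ℕ) (l : Multiset ℕ) :
    𝐞 ((p + 1) ::ₘ l) =
      ∑ q ∈ Finset.range p,
          (𝐞 (q ::ₘ (p - 1 - q) ::ₘ l) + ρ * 𝐞 ((q + 1) ::ₘ (p - 1 - q) ::ₘ l)) +
        (p / d : ℝ) * (𝐞 ((p - 1) ::ₘ l) + ρ * 𝐞 (p ::ₘ l)) +
        (l.map fun q : ℕ => (2 * q / d ^ 2 : ℝ) *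
          (𝐞 ((p + q - 1) ::ₘ l.erase q) + ρ * 𝐞 ((p + q) ::ₘ l.erase q))).sum := by
  rw [← gaussianExpectation_loopDeriv_prod, ← gaussianExpectation_add_smul_mul (p - 1) p l,
    traceMoment, Multiset.map_cons, Multiset.prod_cons, loop_equation, Finset.sum_mul, map_sum]
  congr 2
  refine Finset.sum_congr rfl fun q _ => ?_
  rw [← gaussianExpectation_add_smul_mul, Multiset.map_cons, Multiset.prod_cons, mul_assoc]

lemma perturbedCatalanProd_le_traceMoment (l : Multiset ℕ) : 𝐁 0 l ≤ 𝐞 l := by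
  induction l using multiset_sum_induction with
  | zero => simp
  | zero_cons l ih => rwa [traceMoment_zero_cons, perturbedCatalanProd_cons,
      perturbedCatalan_zero, one_mul]
  | succ_cons p l ih =>
    have hρ : 0 ≤ ρ := sqrtAspect_nonneg
    have hnonneg : ∀ l' : Multiset ℕ, l'.sum ≤ p + l.sum → 0 ≤ 𝐞 l' := fun l' hl' =>
      (perturbedCatalanProd_nonneg le_rfl l').trans (ih l' hl')
    have hconv : 𝐁 0 ((p + 1) ::ₘ l) ≤ ∑ q ∈ Finset.range p,
        (𝐞 (q ::ₘ (p - 1 - q) ::ₘ l) + ρ * 𝐞 ((q + 1) ::ₘ (p - 1 - q) ::ₘ l)) := by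
      rw [perturbedCatalanProd_cons, perturbedCatalan_succ, zero_mul, add_zero, Finset.sum_mul]
      refine Finset.sum_le_sum fun q hq => ?_
      rw [Finset.mem_range] at hq
      have hmain := ih (q ::ₘ (p - 1 - q) ::ₘ l) (by simp; omega)
      rw [perturbedCatalanProd_cons, perturbedCatalanProd_cons, ← mul_assoc] at hmain
      exact le_add_of_le_of_nonneg hmain (mul_nonneg hρ (hnonneg _ (by simp; omega)))
    have hlower : 0 ≤ (p / d : ℝ) * (𝐞 ((p - 1) ::ₘ l) + ρ * 𝐞 (p ::ₘ l)) :=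
      mul_nonneg (by positivity)
        (add_nonneg (hnonneg _ (by simp)) (mul_nonneg hρ (hnonneg _ (by simp))))
    have hcross : 0 ≤ (l.map fun q : ℕ => (2 * q / d ^ 2 : ℝ) *
        (𝐞 ((p + q - 1) ::ₘ l.erase q) + ρ * 𝐞 ((p + q) ::ₘ l.erase q))).sum := by
      refine Multiset.sum_nonneg (Multiset.forall_mem_map_iff.2 fun q hq => ?_)
      have herase := Multiset.sum_erase hq
      exact mul_nonneg (by positivity) (add_nonneg (hnonneg _ (by simp; omega))
        (mul_nonneg hρ (hnonneg _ (by simp; omega))))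
    rw [traceMoment_succ_cons]
    linarith

lemma traceMoment_nonneg (l : Multiset ℕ) : 0 ≤ 𝐞 l :=
  (perturbedCatalanProd_nonneg le_rfl l).trans (perturbedCatalanProd_le_traceMoment l)

section UpperBound

variable {ε E : ℝ} {p : ℕ} {l : Multiset ℕ}

lemma sum_traceMoment_le (hρ : ρ ≤ ε) (hE : 0 ≤ E)
    (hbound : ∀ l' : Multiset ℕ, l'.sum ≤ p + l.sum → 𝐞 l' ≤ E * 𝐁 ε l') :
    ∑ q ∈ Finset.range p,
        (𝐞 (q ::ₘ (p - 1 - q) ::ₘ l) + ρ * 𝐞 ((q + 1) ::ₘ (p - 1 - q) ::ₘ l)) ≤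
      E * 𝐁 ε ((p + 1) ::ₘ l) := by
  have hρ0 : 0 ≤ ρ := sqrtAspect_nonneg
  have hε := hρ0.trans hρ
  have hterm : ∀ q ∈ Finset.range p,
      𝐞 (q ::ₘ (p - 1 - q) ::ₘ l) + ρ * 𝐞 ((q + 1) ::ₘ (p - 1 - q) ::ₘ l) ≤
        E * 𝐁 ε l * (𝐛 ε q * 𝐛 ε (p - 1 - q) + ε * (𝐛 ε (q + 1) * 𝐛 ε (p - (q + 1)))) := by
    intro q hq
    rw [Finset.mem_range] at hq
    have hmoment := traceMoment_nonneg (n := n) (d := d) ((q + 1) ::ₘ (p - 1 - q) ::ₘ l)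
    calc _ ≤ E * 𝐁 ε (q ::ₘ (p - 1 - q) ::ₘ l) +
          ε * (E * 𝐁 ε ((q + 1) ::ₘ (p - 1 - q) ::ₘ l)) := by
          gcongr
          · exact hbound _ (by simp; omega)
          · exact hbound _ (by simp; omega)
      _ = _ := by
          rw [show p - (q + 1) = p - 1 - q by omega]
          simp only [perturbedCatalanProd_cons]
          ring
  calc _ ≤ E * 𝐁 ε l * (∑ q ∈ Finset.range p, 𝐛 ε q * 𝐛 ε (p - 1 - q) +
        ε * ∑ q ∈ Finset.range p, 𝐛 ε (q + 1) * 𝐛 ε (p - (q + 1))) := by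
        rw [Finset.mul_sum, ← Finset.sum_add_distrib, Finset.mul_sum]
        exact Finset.sum_le_sum hterm
    _ ≤ E * 𝐁 ε l * 𝐛 ε (p + 1) := by
        have hB := perturbedCatalanProd_nonneg hε l
        rw [perturbedCatalan_succ, Finset.sum_range_succ' _ p]
        gcongr
        exact le_add_of_nonneg_right
          (mul_nonneg (perturbedCatalan_nonneg hε _) (perturbedCatalan_nonneg hε _))
    _ = E * 𝐁 ε ((p + 1) ::ₘ l) := by rw [perturbedCatalanProd_cons]; ring

lemma lower_order_traceMoment_le (hε : 0 < ε) (hρ : ρ ≤ ε) (hE : 0 ≤ E)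
    (hbound : ∀ l' : Multiset ℕ, l'.sum ≤ p + l.sum → 𝐞 l' ≤ E * 𝐁 ε l') :
    (p / d : ℝ) * (𝐞 ((p - 1) ::ₘ l) + ρ * 𝐞 (p ::ₘ l)) ≤
      (p * (ε⁻¹ ^ 2 + 1) / d) * (E * 𝐁 ε ((p + 1) ::ₘ l)) := by
  rcases Nat.eq_zero_or_pos p with rfl | hp
  · simp
  have := sqrtAspect_nonneg (n := n) (d := d)
  have hB := perturbedCatalanProd_nonneg hε.le l
  have hstep := fun q => mul_perturbedCatalan_le_succ hε.le q
  have hpred : 𝐛 ε (p - 1) ≤ ε⁻¹ ^ 2 * 𝐛 ε (p + 1) := by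
    have h := mul_le_mul_of_nonneg_left (hstep (p - 1)) hε.le
    rw [Nat.sub_add_cancel hp] at h
    rw [inv_pow, inv_mul_eq_div, le_div_iff₀ (by positivity)]
    linarith [hstep p]
  have hfst : 𝐞 ((p - 1) ::ₘ l) ≤ ε⁻¹ ^ 2 * (E * 𝐁 ε ((p + 1) ::ₘ l)) := by
    calc _ ≤ E * (𝐛 ε (p - 1) * 𝐁 ε l) := by
          rw [← perturbedCatalanProd_cons]
          exact hbound _ (by simp)
      _ ≤ E * (ε⁻¹ ^ 2 * 𝐛 ε (p + 1) * 𝐁 ε l) := by gcongr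
      _ = _ := by rw [perturbedCatalanProd_cons]; ring
  have hsnd : ρ * 𝐞 (p ::ₘ l) ≤ E * 𝐁 ε ((p + 1) ::ₘ l) := by
    calc _ ≤ ε * (E * (𝐛 ε p * 𝐁 ε l)) := by
          have hmoment := traceMoment_nonneg (n := n) (d := d) (p ::ₘ l)
          rw [← perturbedCatalanProd_cons]
          gcongr
          exact hbound _ (by simp)
      _ = E * ((ε * 𝐛 ε p) * 𝐁 ε l) := by ring
      _ ≤ E * (𝐛 ε (p + 1) * 𝐁 ε l) := by gcongr; exact hstep p
      _ = _ := by rw [perturbedCatalanProd_cons]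
  calc _ ≤ (p / d : ℝ) * (ε⁻¹ ^ 2 * (E * 𝐁 ε ((p + 1) ::ₘ l)) + E * 𝐁 ε ((p + 1) ::ₘ l)) := by
        gcongr
    _ = _ := by ring

lemma cross_traceMoment_le {Λ : ℝ} (hε : 0 ≤ ε) (hρ : ρ ≤ 1) (hE : 0 ≤ E)
    (hΛ : ∀ q ∈ l, 𝐛 ε (p + q - 1) + 𝐛 ε (p + q) ≤ Λ * (𝐛 ε (p + 1) * 𝐛 ε q))
    (hbound : ∀ l' : Multiset ℕ, l'.sum ≤ p + l.sum → 𝐞 l' ≤ E * 𝐁 ε l') :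
    (l.map fun q : ℕ => (2 * q / d ^ 2 : ℝ) *
        (𝐞 ((p + q - 1) ::ₘ l.erase q) + ρ * 𝐞 ((p + q) ::ₘ l.erase q))).sum ≤
      (2 * l.sum * Λ / d ^ 2) * (E * 𝐁 ε ((p + 1) ::ₘ l)) := by
  have := sqrtAspect_nonneg (n := n) (d := d)
  have hterm : ∀ q ∈ l, (2 * q / d ^ 2 : ℝ) *
      (𝐞 ((p + q - 1) ::ₘ l.erase q) + ρ * 𝐞 ((p + q) ::ₘ l.erase q)) ≤
      (q : ℝ) * (2 * Λ / d ^ 2 * (E * 𝐁 ε ((p + 1) ::ₘ l))) := by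
    intro q hq
    have herase := Multiset.sum_erase hq
    have hB := perturbedCatalanProd_nonneg hε (l.erase q)
    have hmoment := traceMoment_nonneg (n := n) (d := d) ((p + q) ::ₘ l.erase q)
    calc _ ≤ (2 * q / d ^ 2 : ℝ) *
          (E * 𝐁 ε ((p + q - 1) ::ₘ l.erase q) + 1 * (E * 𝐁 ε ((p + q) ::ₘ l.erase q))) := by
          gcongr
          · exact hbound _ (by simp; omega)
          · exact hbound _ (by simp; omega)
      _ = (2 * q / d ^ 2 : ℝ) * (E * 𝐁 ε (l.erase q) * (𝐛 ε (p + q - 1) + 𝐛 ε (p + q))) := by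
          simp only [perturbedCatalanProd_cons]
          ring
      _ ≤ (2 * q / d ^ 2 : ℝ) * (E * 𝐁 ε (l.erase q) * (Λ * (𝐛 ε (p + 1) * 𝐛 ε q))) := by
          gcongr
          exact hΛ q hq
      _ = _ := by
          rw [perturbedCatalanProd_cons, ← Multiset.cons_erase hq, perturbedCatalanProd_cons,
            Multiset.erase_cons_head]
          ring
  calc _ ≤ (l.map fun q : ℕ => (q : ℝ) * (2 * Λ / d ^ 2 * (E * 𝐁 ε ((p + 1) ::ₘ l)))).sum :=
        Multiset.sum_map_le_sum_map _ _ hterm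
    _ = _ := by
        rw [Multiset.sum_map_mul_right, ← Nat.cast_multiset_sum]
        ring

lemma traceMoment_le {δ Λ : ℝ} {M : ℕ} (hε : 0 < ε) (hε1 : ε ≤ 1) (hδ : 0 ≤ δ) (hρ : ρ ≤ ε)
    (hΛ0 : 0 ≤ Λ) (hΛ : ∀ p q, p + 1 + q ≤ M →
      𝐛 ε (p + q - 1) + 𝐛 ε (p + q) ≤ Λ * (𝐛 ε (p + 1) * 𝐛 ε q))
    (hM : M * (ε⁻¹ ^ 2 + 1) / d + 2 * M * Λ / d ^ 2 ≤ δ) (l : Multiset ℕ) (hl : l.sum ≤ M) :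
    𝐞 l ≤ (1 + δ) ^ l.sum * 𝐁 ε l := by
  induction l using multiset_sum_induction with
  | zero => simp
  | zero_cons l ih => simpa [traceMoment_zero_cons] using ih (by simpa using hl)
  | succ_cons p l ih =>
    rw [Multiset.sum_cons] at hl ⊢
    set E := (1 + δ) ^ (p + l.sum) with hEdef
    have hE : 0 ≤ E := by positivity
    have hbound : ∀ l' : Multiset ℕ, l'.sum ≤ p + l.sum → 𝐞 l' ≤ E * 𝐁 ε l' := fun l' hl' =>
      (ih l' hl' (by omega)).trans <| mul_le_mul_of_nonneg_right
        (pow_le_pow_right₀ (by linarith) hl') (perturbedCatalanProd_nonneg hε.le l')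
    have hEB := mul_nonneg hE (perturbedCatalanProd_nonneg hε.le ((p + 1) ::ₘ l))
    have hconv := sum_traceMoment_le hρ hE hbound
    have hlower := lower_order_traceMoment_le hε hρ hE hbound
    have hcross := cross_traceMoment_le hε.le (hρ.trans hε1) hE
      (fun q hq => hΛ p q (by have := Multiset.single_le_sum (by simp) q hq; omega)) hbound
    have hcoeff : p * (ε⁻¹ ^ 2 + 1) / d + 2 * l.sum * Λ / d ^ 2 ≤ δ := by
      refine le_trans ?_ hM
      gcongr <;> omega
    have := mul_le_mul_of_nonneg_right hcoeff hEB
    rw [traceMoment_succ_cons, show p + 1 + l.sum = p + l.sum + 1 by ring,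
      pow_succ (1 + δ), ← hEdef]
    linarith

end UpperBound

end TraceMoment

section Asymptotics

open scoped Topology

local notation "𝐛" => perturbedCatalan
local notation "𝐁" => perturbedCatalanProd

variable {ε : ℝ}

lemma perturbedCatalan_le_two_mul_pow (hε : 0 ≤ ε) (q : ℕ) : 𝐛 ε q ≤ 2 * (2 + 4 * ε) ^ q := by
  have hx : 0 < 2 + 4 * ε := by positivity
  refine perturbedCatalan_le hε hx ?_ q
  have hclear : (2 + 4 * ε)⁻¹ ^ 2 + ε * (2 + 4 * ε)⁻¹ =
      (1 + ε * (2 + 4 * ε)) / (2 + 4 * ε) ^ 2 := by field_simp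
  rw [hclear, div_le_iff₀ (by positivity)]
  nlinarith

/-- An explicit bound for `(b_{p+q-1} + b_{p+q}) / (b_{p+1} b_q)` on the range `p + 1 + q ≤ M`,
where `b` is the sequence of perturbed Catalan numbers. -/
noncomputable def catalanRatioBound (ε : ℝ) (M : ℕ) : ℝ :=
  64 * ε⁻¹ ^ 2 * (M + 2) ^ 4 * (1 + 2 * ε) ^ M

lemma two_pow_le_perturbedCatalan (hε : 0 < ε) (hε1 : ε ≤ 1) {q M : ℕ} (hq : q ≤ M) :
    2 ^ q ≤ ε⁻¹ * (4 * (M + 2) ^ 2 * 𝐛 ε q) := by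
  have hb := perturbedCatalan_nonneg hε.le q
  have hqM : (q : ℝ) + 1 ≤ M + 2 := by
    have : (q : ℝ) ≤ M := mod_cast hq
    linarith
  rw [inv_mul_eq_div, le_div_iff₀ hε, mul_comm]
  exact (mul_two_pow_le_perturbedCatalan hε hε1 q).trans (by gcongr)

lemma perturbedCatalan_add_le (hε : 0 < ε) (hε1 : ε ≤ 1) {M p q : ℕ} (hpq : p + 1 + q ≤ M) :
    𝐛 ε (p + q - 1) + 𝐛 ε (p + q) ≤ catalanRatioBound ε M * (𝐛 ε (p + 1) * 𝐛 ε q) := by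
  have hupper : ∀ r ≤ p + q, 𝐛 ε r ≤ 2 * (2 + 4 * ε) ^ (p + q) := fun r hr =>
    (perturbedCatalan_le_two_mul_pow hε.le r).trans
      (by gcongr 2 * ?_; exact pow_le_pow_right₀ (by linarith) hr)
  have hb := fun q => perturbedCatalan_nonneg hε.le q
  have hlower : (2 : ℝ) ^ (p + q) ≤ (ε⁻¹ * (4 * (M + 2) ^ 2 * 𝐛 ε (p + 1))) *
      (ε⁻¹ * (4 * (M + 2) ^ 2 * 𝐛 ε q)) := by
    calc (2 : ℝ) ^ (p + q) ≤ 2 ^ (p + 1) * 2 ^ q := by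
          rw [← pow_add]
          exact pow_le_pow_right₀ one_le_two (by omega)
      _ ≤ _ := by
          have := hb (p + 1)
          gcongr
          · exact two_pow_le_perturbedCatalan hε hε1 (by omega)
          · exact two_pow_le_perturbedCatalan hε hε1 (by omega)
  calc 𝐛 ε (p + q - 1) + 𝐛 ε (p + q) ≤ 4 * (2 + 4 * ε) ^ (p + q) := by
        linarith [hupper (p + q - 1) (Nat.sub_le _ _), hupper (p + q) le_rfl]
    _ = 4 * (2 ^ (p + q) * (1 + 2 * ε) ^ (p + q)) := by rw [← mul_pow]; ring_nf
    _ ≤ 4 * (((ε⁻¹ * (4 * (M + 2) ^ 2 * 𝐛 ε (p + 1))) * (ε⁻¹ * (4 * (M + 2) ^ 2 * 𝐛 ε q))) *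
          (1 + 2 * ε) ^ M) := by
        have hp := hb (p + 1)
        have hq := hb q
        gcongr
        · linarith
        · omega
    _ = _ := by rw [catalanRatioBound]; ring

/-- The relative error made at each step of the loop recursion when trace moments of total order
at most `M` are compared with perturbed Catalan numbers. -/
noncomputable def loopError (ε : ℝ) (d M : ℕ) : ℝ :=
  M * (ε⁻¹ ^ 2 + 1) / d + 2 * M * catalanRatioBound ε M / d ^ 2

lemma loopError_nonneg (hε : 0 < ε) (d M : ℕ) : 0 ≤ loopError ε d M := by
  unfold loopError catalanRatioBound
  positivity

lemma traceMoment_le_loopError {n d : ℕ} [NeZero n] [NeZero d] (hε : 0 < ε) (hε1 : ε ≤ 1)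
    (hρ : sqrtAspect n d ≤ ε) (l : Multiset ℕ) :
    traceMoment n d l ≤ (1 + loopError ε d l.sum) ^ l.sum * 𝐁 ε l :=
  traceMoment_le hε hε1 (loopError_nonneg hε d _) hρ (by unfold catalanRatioBound; positivity)
    (fun _ _ => perturbedCatalan_add_le hε hε1) le_rfl l le_rfl

variable {n : ℕ → ℕ}

lemma tendsto_sqrtAspect (hdn : Tendsto (fun d : ℕ => (d : ℝ) / n d) atTop (𝓝 0)) :
    Tendsto (fun d => sqrtAspect (n d) d) atTop (𝓝 0) := by
  simpa [sqrtAspect, Function.comp_def] using (Real.continuous_sqrt.tendsto 0).comp hdn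

lemma tendsto_loopError (ε : ℝ) (M : ℕ) : Tendsto (fun d => loopError ε d M) atTop (𝓝 0) := by
  have hfst := tendsto_const_div_atTop_nhds_zero_nat (M * (ε⁻¹ ^ 2 + 1) : ℝ)
  have hsnd : Tendsto (fun d : ℕ => 2 * M * catalanRatioBound ε M / (d : ℝ) ^ 2) atTop (𝓝 0) :=
    tendsto_const_nhds.div_atTop
      ((tendsto_pow_atTop two_ne_zero).comp tendsto_natCast_atTop_atTop)
  simpa only [loopError, add_zero] using hfst.add hsnd

theorem tendsto_traceMoment (hn : Tendsto n atTop atTop)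
    (hdn : Tendsto (fun d : ℕ => (d : ℝ) / n d) atTop (𝓝 0)) (l : Multiset ℕ) :
    Tendsto (fun d => traceMoment (n d) d l) atTop (𝓝 (𝐁 0 l)) := by
  have hcont : Continuous fun ε => 𝐁 ε l :=
    continuous_multiset_prod l fun q _ => continuous_perturbedCatalan q
  refine tendsto_order.2 ⟨fun b hb => ?_, fun b hb => ?_⟩
  · filter_upwards [hn.eventually_gt_atTop 0, eventually_gt_atTop 0] with d hnd hd
    have : NeZero (n d) := ⟨hnd.ne'⟩
    have : NeZero d := ⟨hd.ne'⟩
    exact hb.trans_le (perturbedCatalanProd_le_traceMoment l)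
  · obtain ⟨ε, hεb, hε, hε1⟩ : ∃ ε, 𝐁 ε l < b ∧ 0 < ε ∧ ε ≤ 1 :=
      (((hcont.tendsto 0).eventually_lt_const hb).filter_mono nhdsWithin_le_nhds |>.and
        (Ioc_mem_nhdsGT one_pos)).exists
    have hbound : Tendsto (fun d => (1 + loopError ε d l.sum) ^ l.sum * 𝐁 ε l) atTop
        (𝓝 (𝐁 ε l)) := by
      simpa using (((tendsto_loopError ε l.sum).const_add 1).pow l.sum).mul_const (𝐁 ε l)
    filter_upwards [hbound.eventually_lt_const hεb,
      (tendsto_sqrtAspect hdn).eventually_le_const hε, hn.eventually_gt_atTop 0,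
      eventually_gt_atTop 0] with d hlt hρ hnd hd
    have : NeZero (n d) := ⟨hnd.ne'⟩
    have : NeZero d := ⟨hd.ne'⟩
    exact (traceMoment_le_loopError hε hε1 hρ l).trans_lt hlt

/-- An exponent `k(d)` of order `log d` with `d ≤ a ^ k(d) ≤ a d`. -/
noncomputable def growthIndex (a : ℝ) (d : ℕ) : ℕ := ⌈Real.logb a d⌉₊

lemma natCast_le_pow_growthIndex {a : ℝ} (ha : 1 < a) {d : ℕ} (hd : 0 < d) :
    (d : ℝ) ≤ a ^ growthIndex a d := by
  rw [← Real.rpow_natCast, ← Real.logb_le_iff_le_rpow ha (mod_cast hd)]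
  exact Nat.le_ceil _

lemma growthIndex_le {a : ℝ} (ha : 1 < a) {d : ℕ} (hd : 0 < d) :
    (growthIndex a d : ℝ) ≤ Real.logb a d + 1 :=
  (Nat.ceil_lt_add_one (Real.logb_nonneg ha (mod_cast hd))).le

lemma pow_growthIndex_le {a : ℝ} (ha : 1 < a) {d : ℕ} (hd : 0 < d) :
    a ^ growthIndex a d ≤ a * d := by
  have ha0 : 0 < a := by linarith
  calc a ^ growthIndex a d ≤ a ^ (Real.logb a d + 1) := by
        rw [← Real.rpow_natCast]
        exact Real.rpow_le_rpow_of_exponent_le ha.le (growthIndex_le ha hd)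
    _ = a * d := by
        rw [Real.rpow_add_one ha0.ne', Real.rpow_logb ha0 ha.ne' (mod_cast hd), mul_comm]

lemma tendsto_growthIndex_pow_div {a : ℝ} (ha : 1 < a) :
    Tendsto (fun d : ℕ => ((2 * growthIndex a d : ℕ) + 2 : ℝ) ^ 6 / d) atTop (𝓝 0) := by
  have hlog : Tendsto (fun d : ℕ => (2 / Real.log a + 4) ^ 6 * (Real.log d ^ 6 / d)) atTop
      (𝓝 0) := by
    simpa using ((Real.isLittleO_pow_log_id_atTop (n := 6)).tendsto_div_nhds_zero.comp
      tendsto_natCast_atTop_atTop).const_mul ((2 / Real.log a + 4) ^ 6)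
  have hlog_ge : ∀ᶠ d : ℕ in atTop, 1 ≤ Real.log d :=
    (Real.tendsto_log_atTop.comp tendsto_natCast_atTop_atTop).eventually_ge_atTop 1
  refine squeeze_zero' (.of_forall fun d => by positivity) ?_ hlog
  filter_upwards [hlog_ge, eventually_gt_atTop 0] with d hd1 hd
  have hindex : ((2 * growthIndex a d : ℕ) + 2 : ℝ) ≤ (2 / Real.log a + 4) * Real.log d := by
    have := growthIndex_le ha hd
    have hexpand : (2 / Real.log a + 4) * Real.log d = 2 * Real.logb a d + 4 * Real.log d := by
      rw [Real.logb]; ring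
    push_cast
    linarith
  calc _ ≤ ((2 / Real.log a + 4) * Real.log d) ^ 6 / d := by gcongr
    _ = _ := by ring

lemma loopError_mul_le {a : ℝ} {d M : ℕ} (hε : 0 ≤ ε) (hd : 0 < d) (ha : 0 ≤ a)
    (hM : (1 + 2 * ε) ^ M ≤ a * d) :
    loopError ε d M * M ≤ (ε⁻¹ ^ 2 + 1 + 128 * ε⁻¹ ^ 2 * a) * ((M + 2) ^ 6 / d) := by
  have : (0 : ℝ) < d := mod_cast hd
  have hMle : (M : ℝ) ≤ M + 2 := by linarith
  have hratio : catalanRatioBound ε M ≤ 64 * ε⁻¹ ^ 2 * (M + 2) ^ 4 * (a * d) := by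
    unfold catalanRatioBound
    gcongr
  have : 0 ≤ catalanRatioBound ε M := by unfold catalanRatioBound; positivity
  calc loopError ε d M * M
      ≤ ((M + 2) * (ε⁻¹ ^ 2 + 1) / d +
          2 * (M + 2) * (64 * ε⁻¹ ^ 2 * (M + 2) ^ 4 * (a * d)) / d ^ 2) * (M + 2) := by
        unfold loopError
        gcongr
    _ = (ε⁻¹ ^ 2 + 1) * ((M + 2) ^ 2 / d) + 128 * ε⁻¹ ^ 2 * a * ((M + 2) ^ 6 / d) := by
        field_simp
        ring
    _ ≤ (ε⁻¹ ^ 2 + 1) * ((M + 2) ^ 6 / d) + 128 * ε⁻¹ ^ 2 * a * ((M + 2) ^ 6 / d) := by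
        gcongr (ε⁻¹ ^ 2 + 1) * (?_ / d) + _
        exact pow_le_pow_right₀ (by linarith [M.cast_nonneg (α := ℝ)]) (by norm_num)
    _ = _ := by ring

lemma traceMoment_growthIndex_le {n d : ℕ} [NeZero n] [NeZero d] {a : ℝ} (hε : 0 < ε)
    (hε1 : ε ≤ 1) (hρ : sqrtAspect n d ≤ ε) (ha : 1 < a) (hεa : (1 + 2 * ε) ^ 2 ≤ a)
    (hsmall : (ε⁻¹ ^ 2 + 1 + 128 * ε⁻¹ ^ 2 * a) *
      (((2 * growthIndex a d : ℕ) + 2) ^ 6 / d) ≤ 1) :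
    d ^ 2 * traceMoment n d {2 * growthIndex a d} ≤
      2 * Real.exp 1 * (a * (2 + 4 * ε)) ^ (2 * growthIndex a d) := by
  have hd := Nat.pos_of_neZero d
  set k := growthIndex a d
  have herror : loopError ε d (2 * k) * (2 * k : ℕ) ≤ 1 := by
    refine (loopError_mul_le hε.le hd (zero_le_one.trans ha.le) ?_).trans hsmall
    rw [pow_mul]
    exact (pow_le_pow_left₀ (by positivity) hεa k).trans (pow_growthIndex_le ha hd)
  have hexp : (1 + loopError ε d (2 * k)) ^ (2 * k) ≤ Real.exp 1 := by
    calc (1 + loopError ε d (2 * k)) ^ (2 * k) ≤ Real.exp (loopError ε d (2 * k)) ^ (2 * k) := by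
          refine pow_le_pow_left₀ (add_nonneg zero_le_one (loopError_nonneg hε _ _)) ?_ _
          linarith [Real.add_one_le_exp (loopError ε d (2 * k))]
      _ = Real.exp (loopError ε d (2 * k) * (2 * k : ℕ)) := by rw [← Real.exp_nat_mul, mul_comm]
      _ ≤ Real.exp 1 := Real.exp_le_exp.2 herror
  have hmoment : traceMoment n d {2 * k} ≤ Real.exp 1 * (2 * (2 + 4 * ε) ^ (2 * k)) := by
    have h := traceMoment_le_loopError hε hε1 hρ {2 * k}
    rw [Multiset.sum_singleton, ← Multiset.cons_zero, perturbedCatalanProd_cons,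
      perturbedCatalanProd_zero, mul_one] at h
    exact h.trans (mul_le_mul hexp (perturbedCatalan_le_two_mul_pow hε.le _)
      (perturbedCatalan_nonneg hε.le _) (Real.exp_pos _).le)
  have hdim : (d : ℝ) ^ 2 ≤ a ^ (2 * k) := by
    rw [mul_comm, pow_mul]
    exact pow_le_pow_left₀ d.cast_nonneg (natCast_le_pow_growthIndex ha hd) 2
  calc d ^ 2 * traceMoment n d {2 * k}
      ≤ a ^ (2 * k) * (Real.exp 1 * (2 * (2 + 4 * ε) ^ (2 * k))) := by
        have := traceMoment_nonneg (n := n) (d := d) {2 * k}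
        gcongr
    _ = 2 * Real.exp 1 * (a * (2 + 4 * ε)) ^ (2 * k) := by rw [mul_pow]; ring

theorem exists_tendsto_mul_traceMoment_div (hn : Tendsto n atTop atTop)
    (hdn : Tendsto (fun d : ℕ => (d : ℝ) / n d) atTop (𝓝 0)) {τ : ℝ} (hτ : 0 < τ) :
    ∃ k : ℕ → ℕ, Tendsto
      (fun d : ℕ => (d : ℝ) * traceMoment (n d) d {2 * k d} / (2 + τ) ^ (2 * k d))
      atTop (𝓝 0) := by
  set a := (2 + τ) / (2 + τ / 2) with ha_def
  have ha : 1 < a := by rw [ha_def, one_lt_div (by positivity)]; linarith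
  obtain ⟨ε, hεa, hε, hε1⟩ : ∃ ε : ℝ, (1 + 2 * ε) ^ 2 < a ∧ 0 < ε ∧ ε ≤ min 1 (τ / 8) := by
    have hcont : Continuous fun ε : ℝ => (1 + 2 * ε) ^ 2 := by fun_prop
    exact (((hcont.tendsto 0).eventually_lt_const (by simpa using ha)).filter_mono
      nhdsWithin_le_nhds |>.and (Ioc_mem_nhdsGT (by positivity))).exists
  rw [le_min_iff] at hε1
  have hbase : a * (2 + 4 * ε) ≤ 2 + τ := by
    rw [ha_def, div_mul_eq_mul_div, div_le_iff₀ (by positivity)]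
    gcongr
    linarith
  have hsmall : Tendsto (fun d : ℕ => (ε⁻¹ ^ 2 + 1 + 128 * ε⁻¹ ^ 2 * a) *
      (((2 * growthIndex a d : ℕ) + 2 : ℝ) ^ 6 / d)) atTop (𝓝 0) := by
    simpa only [mul_zero] using
      (tendsto_growthIndex_pow_div ha).const_mul (ε⁻¹ ^ 2 + 1 + 128 * ε⁻¹ ^ 2 * a)
  refine ⟨growthIndex a, squeeze_zero' ?_ ?_
    (tendsto_const_div_atTop_nhds_zero_nat (2 * Real.exp 1))⟩
  · filter_upwards [hn.eventually_gt_atTop 0, eventually_gt_atTop 0] with d hnd hd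
    have : NeZero (n d) := ⟨hnd.ne'⟩
    have : NeZero d := ⟨hd.ne'⟩
    have := traceMoment_nonneg (n := n d) (d := d) {2 * growthIndex a d}
    positivity
  · filter_upwards [hsmall.eventually_le_const one_pos,
      (tendsto_sqrtAspect hdn).eventually_le_const hε, hn.eventually_gt_atTop 0,
      eventually_gt_atTop 0] with d hsmall hρ hnd hd
    have : NeZero (n d) := ⟨hnd.ne'⟩
    have : NeZero d := ⟨hd.ne'⟩
    rw [div_le_div_iff₀ (by positivity) (mod_cast hd)]
    calc d * traceMoment (n d) d {2 * growthIndex a d} * d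
        = d ^ 2 * traceMoment (n d) d {2 * growthIndex a d} := by ring
      _ ≤ 2 * Real.exp 1 * (a * (2 + 4 * ε)) ^ (2 * growthIndex a d) :=
          traceMoment_growthIndex_le hε hε1.1 hρ ha hεa.le hsmall
      _ ≤ 2 * Real.exp 1 * (2 + τ) ^ (2 * growthIndex a d) := by gcongr

end Asymptotics

/-! ### Quadratic forms and eigenvalues of symmetric matrices -/

section QuadraticForms

variable {ι : Type*} [Fintype ι] {M : Matrix ι ι ℝ} {s : ℝ}

/-- The quadratic form of `M` is bounded by `s` in absolute value on the unit sphere. For symmetric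
`M` this says that the spectral norm is at most `s`. -/
def QuadBounded (M : Matrix ι ι ℝ) (s : ℝ) : Prop :=
  ∀ v, |v ⬝ᵥ M *ᵥ v| ≤ s * (v ⬝ᵥ v)

lemma dotProduct_self_nonneg (v : ι → ℝ) : 0 ≤ v ⬝ᵥ v :=
  Finset.sum_nonneg fun _ _ => mul_self_nonneg _

lemma dotProduct_self_pos {v : ι → ℝ} (hv : v ≠ 0) : 0 < v ⬝ᵥ v :=
  (dotProduct_self_nonneg v).lt_of_ne' fun h => hv (dotProduct_self_eq_zero.1 h)

lemma QuadBounded.mono {r : ℝ} (h : QuadBounded M s) (hsr : s ≤ r) : QuadBounded M r :=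
  fun v => (h v).trans (mul_le_mul_of_nonneg_right hsr (dotProduct_self_nonneg v))

lemma QuadBounded.smul {c : ℝ} (h : QuadBounded M s) (hc : 0 ≤ c) :
    QuadBounded (c • M) (c * s) := by
  intro v
  rw [smul_mulVec, dotProduct_smul, smul_eq_mul, abs_mul, abs_of_nonneg hc, mul_assoc]
  exact mul_le_mul_of_nonneg_left (h v) hc

variable [DecidableEq ι] (hM : M.IsHermitian)

/-- The `i`-th vector of the orthonormal eigenbasis of a symmetric matrix, as a plain function. -/
noncomputable def eigenvector (i : ι) : ι → ℝ := (hM.eigenvectorBasis i).ofLp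

lemma eigenvector_dotProduct_eigenvector (i j : ι) :
    eigenvector hM i ⬝ᵥ eigenvector hM j = if i = j then 1 else 0 := by
  have h := orthonormal_iff_ite.1 hM.eigenvectorBasis.orthonormal j i
  rw [EuclideanSpace.inner_eq_star_dotProduct, star_trivial] at h
  rw [eigenvector, eigenvector, h]
  simp only [eq_comm]

lemma eigenvector_dotProduct_self (i : ι) : eigenvector hM i ⬝ᵥ eigenvector hM i = 1 := by
  rw [eigenvector_dotProduct_eigenvector, if_pos rfl]

lemma mulVec_eigenvector (i : ι) :
    M *ᵥ eigenvector hM i = hM.eigenvalues i • eigenvector hM i :=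
  hM.mulVec_eigenvectorBasis i

lemma eq_sum_smul_eigenvector (v : ι → ℝ) :
    v = ∑ i, (eigenvector hM i ⬝ᵥ v) • eigenvector hM i := by
  have h := congrArg WithLp.ofLp (hM.eigenvectorBasis.sum_repr (WithLp.toLp 2 v))
  simp only [WithLp.ofLp_sum, WithLp.ofLp_smul, OrthonormalBasis.repr_apply_apply,
    EuclideanSpace.inner_eq_star_dotProduct, star_trivial] at h
  simpa only [eigenvector, dotProduct_comm] using h.symm

lemma dotProduct_self_eq_sum_eigenvector (v : ι → ℝ) :
    v ⬝ᵥ v = ∑ i, (eigenvector hM i ⬝ᵥ v) ^ 2 := by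
  conv_lhs => enter [2]; rw [eq_sum_smul_eigenvector hM v]
  rw [dotProduct_sum]
  refine Finset.sum_congr rfl fun i _ => ?_
  rw [dotProduct_smul, smul_eq_mul, dotProduct_comm v, sq]

lemma dotProduct_mulVec_eq_sum_of_mulVec_eigenvector {A : Matrix ι ι ℝ} {c : ι → ℝ}
    (hA : ∀ i, A *ᵥ eigenvector hM i = c i • eigenvector hM i) (v : ι → ℝ) :
    v ⬝ᵥ A *ᵥ v = ∑ i, c i * (eigenvector hM i ⬝ᵥ v) ^ 2 := by
  conv_lhs => enter [2]; rw [eq_sum_smul_eigenvector hM v]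
  rw [Matrix.mulVec_sum, dotProduct_sum]
  refine Finset.sum_congr rfl fun i _ => ?_
  rw [Matrix.mulVec_smul, hA, dotProduct_smul, dotProduct_smul, smul_eq_mul, smul_eq_mul,
    dotProduct_comm v]
  ring

lemma quadBounded_of_mulVec_eigenvector {A : Matrix ι ι ℝ} {c : ι → ℝ}
    (hA : ∀ i, A *ᵥ eigenvector hM i = c i • eigenvector hM i) (hc : ∀ i, |c i| ≤ s) :
    QuadBounded A s := by
  intro v
  rw [dotProduct_mulVec_eq_sum_of_mulVec_eigenvector hM hA, dotProduct_self_eq_sum_eigenvector hM,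
    Finset.mul_sum]
  refine (Finset.abs_sum_le_sum_abs _ _).trans (Finset.sum_le_sum fun i _ => ?_)
  rw [abs_mul, abs_sq]
  exact mul_le_mul_of_nonneg_right (hc i) (sq_nonneg _)

lemma dotProduct_mulVec_eigenvector_self (i : ι) :
    eigenvector hM i ⬝ᵥ M *ᵥ eigenvector hM i = hM.eigenvalues i := by
  rw [mulVec_eigenvector, dotProduct_smul, eigenvector_dotProduct_self, smul_eq_mul, mul_one]

lemma quadBounded_iff_abs_eigenvalues_le :
    QuadBounded M s ↔ ∀ i, |hM.eigenvalues i| ≤ s := by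
  refine ⟨fun h i => ?_, quadBounded_of_mulVec_eigenvector hM (mulVec_eigenvector hM)⟩
  simpa only [dotProduct_mulVec_eigenvector_self, eigenvector_dotProduct_self, mul_one] using
    h (eigenvector hM i)

omit [DecidableEq ι] in
include hM in
lemma exists_lt_abs_of_not_quadBounded (h : ¬ QuadBounded M s) :
    ∃ v, v ⬝ᵥ v = 1 ∧ s < |v ⬝ᵥ M *ᵥ v| := by
  classical
  rw [quadBounded_iff_abs_eigenvalues_le hM] at h
  push Not at h
  obtain ⟨i, hi⟩ := h
  exact ⟨eigenvector hM i, eigenvector_dotProduct_self hM i,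
    by rwa [dotProduct_mulVec_eigenvector_self]⟩

lemma trace_pow_eq_sum_eigenvalues (q : ℕ) : trace (M ^ q) = ∑ i, hM.eigenvalues i ^ q := by
  have hpow : M ^ q = Unitary.conjStarAlgAut ℝ _ hM.eigenvectorUnitary
      (diagonal (RCLike.ofReal ∘ hM.eigenvalues) ^ q) := by
    rw [map_pow, ← hM.spectral_theorem]
  rw [hpow, Unitary.conjStarAlgAut_apply, Matrix.trace_mul_cycle, Unitary.coe_star_mul_self,
    one_mul, Matrix.diagonal_pow, Matrix.trace_diagonal]
  simp

include hM

lemma trace_pow_two_mul_nonneg (k : ℕ) : 0 ≤ trace (M ^ (2 * k)) := by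
  rw [trace_pow_eq_sum_eigenvalues hM]
  exact Finset.sum_nonneg fun i _ => (even_two_mul k).pow_nonneg _

lemma quad_pow_two_mul_le_trace {v : ι → ℝ} (hv : v ⬝ᵥ v = 1) (k : ℕ) :
    (v ⬝ᵥ M *ᵥ v) ^ (2 * k) ≤ trace (M ^ (2 * k)) := by
  have hweights : ∑ i, (eigenvector hM i ⬝ᵥ v) ^ 2 = 1 := by
    rw [← dotProduct_self_eq_sum_eigenvector, hv]
  calc (v ⬝ᵥ M *ᵥ v) ^ (2 * k)
      = (∑ i, (eigenvector hM i ⬝ᵥ v) ^ 2 * hM.eigenvalues i) ^ (2 * k) := by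
        rw [dotProduct_mulVec_eq_sum_of_mulVec_eigenvector hM (mulVec_eigenvector hM)]
        simp only [mul_comm]
    _ ≤ ∑ i, (eigenvector hM i ⬝ᵥ v) ^ 2 * hM.eigenvalues i ^ (2 * k) :=
        Real.pow_arith_mean_le_arith_mean_pow_of_even _ _ _ (fun i _ => sq_nonneg _) hweights
          (even_two_mul k)
    _ ≤ ∑ i, hM.eigenvalues i ^ (2 * k) := by
        refine Finset.sum_le_sum fun i hi =>
          mul_le_of_le_one_left ((even_two_mul k).pow_nonneg _) ?_
        rw [← hweights]
        exact Finset.single_le_sum (f := fun i => (eigenvector hM i ⬝ᵥ v) ^ 2)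
          (fun i _ => sq_nonneg _) hi
    _ = trace (M ^ (2 * k)) := (trace_pow_eq_sum_eigenvalues hM _).symm

lemma trace_pow_two_mul_le (h : QuadBounded M s) (k : ℕ) :
    trace (M ^ (2 * k)) ≤ Fintype.card ι * s ^ (2 * k) := by
  rw [trace_pow_eq_sum_eigenvalues hM, ← nsmul_eq_mul]
  refine Finset.sum_le_card_nsmul _ _ _ fun i _ => ?_
  rw [← (even_two_mul k).pow_abs]
  exact pow_le_pow_left₀ (abs_nonneg _) ((quadBounded_iff_abs_eigenvalues_le hM).1 h i) _

end QuadraticForms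

section SampleCovariance

variable {n d : ℕ}

/-- The sample covariance matrix `S` of a sample with known mean zero. -/
noncomputable def sampleCov (x : Fin n → Fin d → ℝ) : Matrix (Fin d) (Fin d) ℝ :=
  (n : ℝ)⁻¹ • ∑ j : Fin n, vecMulVec (x j) (x j)

/-- The rescaled deviation `M* = √(n/d) (M - I)` from the identity of an estimator `M` based on a
sample of size `n`. -/
noncomputable def fluctuation (n : ℕ) (M : Matrix (Fin d) (Fin d) ℝ) :
    Matrix (Fin d) (Fin d) ℝ :=
  √((n : ℝ) / d) • (M - 1)

lemma isHermitian_sampleCov (x : Fin n → Fin d → ℝ) : (sampleCov x).IsHermitian := by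
  ext a b
  simp [sampleCov, Matrix.sum_apply, vecMulVec_apply, mul_comm]

lemma isHermitian_fluctuation {M : Matrix (Fin d) (Fin d) ℝ} (hM : M.IsHermitian) (n : ℕ) :
    (fluctuation n M).IsHermitian :=
  (hM.sub Matrix.isHermitian_one).smul (IsSelfAdjoint.all _)

lemma isHermitian_fluctuation_sampleCov (x : Fin n → Fin d → ℝ) :
    (fluctuation n (sampleCov x)).IsHermitian :=
  isHermitian_fluctuation (isHermitian_sampleCov x) n

lemma sampleCov_quad (x : Fin n → Fin d → ℝ) (v : Fin d → ℝ) :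
    v ⬝ᵥ sampleCov x *ᵥ v = ∑ j, (n : ℝ)⁻¹ * (x j ⬝ᵥ v) ^ 2 := by
  rw [sampleCov, smul_mulVec, dotProduct_smul, Matrix.sum_mulVec, dotProduct_sum, smul_eq_mul,
    Finset.mul_sum]
  refine Finset.sum_congr rfl fun j _ => ?_
  rw [vecMulVec_mulVec, op_smul_eq_smul, dotProduct_smul, smul_eq_mul, dotProduct_comm v, sq]

lemma sub_one_quad {ι : Type*} [Fintype ι] [DecidableEq ι] (M : Matrix ι ι ℝ) (v : ι → ℝ) :
    v ⬝ᵥ (M - 1) *ᵥ v = v ⬝ᵥ M *ᵥ v - v ⬝ᵥ v := by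
  rw [Matrix.sub_mulVec, dotProduct_sub, Matrix.one_mulVec]

variable [NeZero n]

lemma map_evalSample_fluctPoly (x : Fin n → Fin d → ℝ) :
    (fluctPoly n d).map (evalSample x) = fluctuation n (sampleCov x) := by
  have hn : (n : ℝ) ≠ 0 := NeZero.ne _
  have hscale : gramScale n d = √((n : ℝ) / d) * (n : ℝ)⁻¹ := by
    have : √(n : ℝ) ≠ 0 := by positivity
    rw [gramScale, Real.sqrt_mul n.cast_nonneg, Real.sqrt_div n.cast_nonneg]
    field_simp
    rw [Real.sq_sqrt n.cast_nonneg]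
  have hone : ∀ a b, evalSample x ((1 : Matrix (Fin d) (Fin d) (SamplePoly n d)) a b) =
      (1 : Matrix (Fin d) (Fin d) ℝ) a b := fun a b => by
    rw [Matrix.one_apply, Matrix.one_apply]; split_ifs <;> simp
  ext a b
  simp only [fluctPoly, fluctuation, sampleCov, dataMatrix, hscale, Matrix.map_apply,
    Matrix.smul_apply, Matrix.sub_apply, Matrix.mul_apply, Matrix.transpose_apply, Matrix.of_apply,
    Matrix.sum_apply, vecMulVec_apply, map_smul, map_sub, map_sum, map_mul, evalSample_X, hone,
    smul_eq_mul]
  field_simp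

lemma evalSample_normTrace (x : Fin n → Fin d → ℝ) (q : ℕ) :
    evalSample x (normTrace n d q) = (d : ℝ)⁻¹ * trace (fluctuation n (sampleCov x) ^ q) := by
  rw [normTrace, map_smul, smul_eq_mul, ← map_evalSample_fluctPoly]
  congr 1
  rw [← AlgHom.mapMatrix_apply, ← map_pow]
  exact AddMonoidHom.map_trace (evalSample x : SamplePoly n d →+ ℝ) _

end SampleCovariance

/-! ### The spectral norm of the rescaled sample covariance matrix -/

section AsympAlmostSurely

open scoped Topology

variable {α : ℕ → Type*} [∀ d, MeasurableSpace (α d)] {μ : ∀ d, Measure (α d)}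
  {p q : ∀ d, α d → Prop}

/-- The events `p d` have `μ d`-probability tending to one. Stating this for the outer measure of
the complements avoids all measurability side conditions. -/
def AsympAlmostSurely (μ : ∀ d, Measure (α d)) (p : ∀ d, α d → Prop) : Prop :=
  Tendsto (fun d => μ d {x | ¬ p d x}) atTop (𝓝 0)

namespace AsympAlmostSurely

lemma mono (hp : AsympAlmostSurely μ p) (hpq : ∀ᶠ d in atTop, ∀ x, p d x → q d x) :
    AsympAlmostSurely μ q :=
  tendsto_of_tendsto_of_tendsto_of_le_of_le' tendsto_const_nhds hp (.of_forall fun _ => zero_le)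
    (hpq.mono fun _ h => measure_mono fun x hx hpx => hx (h x hpx))

lemma and (hp : AsympAlmostSurely μ p) (hq : AsympAlmostSurely μ q) :
    AsympAlmostSurely μ fun d x => p d x ∧ q d x := by
  refine tendsto_of_tendsto_of_tendsto_of_le_of_le tendsto_const_nhds
    (by simpa only [add_zero] using Tendsto.add hp hq) (fun _ => zero_le) fun d => ?_
  refine (measure_mono fun x hx => ?_).trans (measure_union_le _ _)
  exact not_and_or.1 hx

lemma of_ae (h : ∀ᶠ d in atTop, ∀ᵐ x ∂μ d, p d x) : AsympAlmostSurely μ p :=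
  tendsto_nhds_of_eventually_eq (h.mono fun _ => ae_iff.1)

lemma of_measure_le_ofReal {f : ℕ → ℝ} (hf : Tendsto f atTop (𝓝 0))
    (h : ∀ᶠ d in atTop, μ d {x | ¬ p d x} ≤ ENNReal.ofReal (f d)) : AsympAlmostSurely μ p :=
  tendsto_of_tendsto_of_tendsto_of_le_of_le' tendsto_const_nhds
    (by simpa only [ENNReal.ofReal_zero] using ENNReal.tendsto_ofReal hf)
    (.of_forall fun _ => zero_le) h

lemma of_map {β : ℕ → Type*} [∀ d, MeasurableSpace (β d)] {ν : ∀ d, Measure (β d)}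
    {f : ∀ d, β d → α d} (hf : ∀ d, Measurable (f d)) (hmap : ∀ d, (ν d).map (f d) = μ d)
    (hp : AsympAlmostSurely μ p) : AsympAlmostSurely ν fun d y => p d (f d y) := by
  refine tendsto_of_tendsto_of_tendsto_of_le_of_le tendsto_const_nhds hp (fun _ => zero_le)
    fun d => ?_
  simp only [← hmap]
  exact Measure.le_map_apply (hf d).aemeasurable _

end AsympAlmostSurely

end AsympAlmostSurely

lemma meas_ge_le_ofReal_integral_div {α : Type*} [MeasurableSpace α] {μ : Measure α} {f : α → ℝ}
    (hf : Integrable f μ) (h0 : ∀ x, 0 ≤ f x) {c : ℝ} (hc : 0 < c) :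
    μ {x | c ≤ f x} ≤ ENNReal.ofReal ((∫ x, f x ∂μ) / c) := by
  have h := meas_ge_le_lintegral_div (μ := μ) (f := fun x => ENNReal.ofReal (f x))
    hf.aestronglyMeasurable.aemeasurable.ennreal_ofReal (ε := ENNReal.ofReal c)
    (by simpa using hc) (by simp)
  rw [ENNReal.ofReal_div_of_pos hc, ofReal_integral_eq_lintegral_ofReal hf (ae_of_all _ h0)]
  exact (measure_mono fun x hx => ENNReal.ofReal_le_ofReal hx).trans h

lemma measure_evalSample_ge_le {n d : ℕ} {p : SamplePoly n d} (hp : ∀ x, 0 ≤ evalSample x p)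
    {c : ℝ} (hc : 0 < c) :
    normalSample n d {x | c ≤ evalSample x p} ≤ ENNReal.ofReal (𝓔 p / c) := by
  rw [← integral_evalSample]
  exact meas_ge_le_ofReal_integral_div (integrable_evalSample p) hp hc

section SpectralNorm

open scoped Topology

lemma traceMoment_singleton (n d q : ℕ) : traceMoment n d {q} = 𝓔 (normTrace n d q) := by
  rw [traceMoment, Multiset.map_singleton, Multiset.prod_singleton]

lemma measure_not_quadBounded_le {n d : ℕ} [NeZero n] [NeZero d] {s : ℝ} (hs : 0 < s) (k : ℕ) :
    normalSample n d {x | ¬ QuadBounded (fluctuation n (sampleCov x)) s} ≤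
      ENNReal.ofReal (d * traceMoment n d {2 * k} / s ^ (2 * k)) := by
  have hd : (0 : ℝ) < d := mod_cast Nat.pos_of_neZero d
  have htail := measure_evalSample_ge_le (p := normTrace n d (2 * k)) (c := (d : ℝ)⁻¹ * s ^ (2 * k))
    (fun x => by
      rw [evalSample_normTrace]
      have := trace_pow_two_mul_nonneg (isHermitian_fluctuation_sampleCov x) k
      positivity) (by positivity)
  refine (measure_mono fun x hx => ?_).trans (htail.trans_eq ?_)
  · obtain ⟨v, hv, hlt⟩ := exists_lt_abs_of_not_quadBounded (isHermitian_fluctuation_sampleCov x) hx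
    rw [Set.mem_ofPred_eq, evalSample_normTrace]
    gcongr
    refine le_trans ?_ (quad_pow_two_mul_le_trace (isHermitian_fluctuation_sampleCov x) hv k)
    rw [← (even_two_mul k).pow_abs (v ⬝ᵥ _)]
    gcongr
  · rw [traceMoment_singleton]
    field_simp

variable {n : ℕ → ℕ}

theorem asympAlmostSurely_quadBounded_sampleCov (hn : Tendsto n atTop atTop)
    (hdn : Tendsto (fun d : ℕ => (d : ℝ) / n d) atTop (𝓝 0)) {τ : ℝ} (hτ : 0 < τ) :
    AsympAlmostSurely (fun d => normalSample (n d) d)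
      fun d x => QuadBounded (fluctuation (n d) (sampleCov x)) (2 + τ) := by
  obtain ⟨k, hk⟩ := exists_tendsto_mul_traceMoment_div hn hdn hτ
  refine .of_measure_le_ofReal hk ?_
  filter_upwards [hn.eventually_gt_atTop 0, eventually_gt_atTop 0] with d hnd hd
  have : NeZero (n d) := ⟨hnd.ne'⟩
  have : NeZero d := ⟨hd.ne'⟩
  exact measure_not_quadBounded_le (by positivity) (k d)

/-- The even moments of the semicircle law grow like `4 ^ k` up to a polynomial factor. -/
lemma exists_two_mul_pow_le_perturbedCatalan {s : ℝ} (hs : 0 < s) (hs2 : s < 2) :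
    ∃ k, 2 * s ^ (2 * k) ≤ perturbedCatalan 0 (2 * k) := by
  set r := (s / 2) ^ 2 with hr
  have hr1 : r < 1 := by rw [hr, sq_lt_one_iff₀ (by positivity)]; linarith
  have hlim : Tendsto (fun k : ℕ => ((k + 1 : ℕ) : ℝ) ^ 2 * r ^ (k + 1)) atTop (𝓝 0) :=
    (tendsto_add_atTop_iff_nat 1).2
      (tendsto_pow_const_mul_const_pow_of_lt_one 2 (by positivity) hr1)
  obtain ⟨k, hk⟩ := (hlim.eventually_le_const (u := r / 4) (by positivity)).exists
  refine ⟨k, le_trans ?_ (catalan_le_perturbedCatalan le_rfl k)⟩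
  have hcatalan : (4 : ℝ) ^ k ≤ 2 * ((k + 1 : ℕ) : ℝ) ^ 2 * catalan k :=
    mod_cast four_pow_le_mul_catalan k
  have hsmall : ((k + 1 : ℕ) : ℝ) ^ 2 * r ^ k ≤ 1 / 4 := by
    refine le_of_mul_le_mul_right ?_ (show 0 < r by positivity)
    rw [mul_assoc, ← pow_succ]
    linarith
  calc 2 * s ^ (2 * k) = 2 * (4 ^ k * r ^ k) := by
        rw [hr, ← mul_pow, pow_mul]; ring_nf
    _ ≤ 2 * ((2 * ((k + 1 : ℕ) : ℝ) ^ 2 * catalan k) * r ^ k) := by gcongr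
    _ = 4 * (((k + 1 : ℕ) : ℝ) ^ 2 * r ^ k) * catalan k := by ring
    _ ≤ 4 * (1 / 4) * catalan k := by gcongr
    _ = catalan k := by ring

lemma tendsto_variance_normTrace (hn : Tendsto n atTop atTop)
    (hdn : Tendsto (fun d : ℕ => (d : ℝ) / n d) atTop (𝓝 0)) (q : ℕ) :
    Tendsto (fun d => 𝓔 ((normTrace (n d) d q - MvPolynomial.C (perturbedCatalan 0 q)) ^ 2))
      atTop (𝓝 0) := by
  set β := perturbedCatalan 0 q
  have hfst : Tendsto (fun d => traceMoment (n d) d {q}) atTop (𝓝 β) := by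
    simpa [← Multiset.cons_zero] using tendsto_traceMoment hn hdn {q}
  have hsnd : Tendsto (fun d => traceMoment (n d) d {q, q}) atTop (𝓝 (β * β)) := by
    simpa [← Multiset.cons_zero] using tendsto_traceMoment hn hdn {q, q}
  have hexpand : ∀ d, 𝓔 ((normTrace (n d) d q - MvPolynomial.C β) ^ 2) =
      traceMoment (n d) d {q, q} - 2 * β * traceMoment (n d) d {q} + β ^ 2 := by
    intro d
    have hsq : (normTrace (n d) d q - MvPolynomial.C β) ^ 2 = normTrace (n d) d q *
        normTrace (n d) d q - MvPolynomial.C (2 * β) * normTrace (n d) d q +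
        MvPolynomial.C (β ^ 2) := by
      simp only [map_mul, map_pow, map_ofNat]
      ring
    have hpair : traceMoment (n d) d {q, q} = 𝓔 (normTrace (n d) d q * normTrace (n d) d q) := by
      simp [traceMoment]
    rw [hsq, map_add, map_sub, gaussianExpectation_C, gaussianExpectation_C_mul, hpair,
      ← traceMoment_singleton]
  simp only [hexpand]
  convert (hsnd.sub (hfst.const_mul (2 * β))).add_const (β ^ 2) using 2
  ring

/-- Second moment method: `d⁻¹ tr (S*)^{2k}` concentrates at a value exceeding twice its bound on
the event `‖S*‖ ≤ s`. -/
theorem asympAlmostSurely_not_quadBounded_sampleCov (hn : Tendsto n atTop atTop)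
    (hdn : Tendsto (fun d : ℕ => (d : ℝ) / n d) atTop (𝓝 0)) {s : ℝ} (hs : 0 < s) (hs2 : s < 2) :
    AsympAlmostSurely (fun d => normalSample (n d) d)
      fun d x => ¬ QuadBounded (fluctuation (n d) (sampleCov x)) s := by
  obtain ⟨k, hk⟩ := exists_two_mul_pow_le_perturbedCatalan hs hs2
  set β := perturbedCatalan 0 (2 * k)
  have hβ : 0 < β := lt_of_lt_of_le (by positivity) hk
  refine .of_measure_le_ofReal (f := fun d => 𝓔 ((normTrace (n d) d (2 * k) -
    MvPolynomial.C β) ^ 2) / (β / 2) ^ 2) (by simpa only [zero_div] using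
      (tendsto_variance_normTrace hn hdn (2 * k)).div_const _) ?_
  filter_upwards [hn.eventually_gt_atTop 0, eventually_gt_atTop 0] with d hnd hd
  have : NeZero (n d) := ⟨hnd.ne'⟩
  have : NeZero d := ⟨hd.ne'⟩
  have heval : ∀ x, evalSample x ((normTrace (n d) d (2 * k) - MvPolynomial.C β) ^ 2) =
      (evalSample x (normTrace (n d) d (2 * k)) - β) ^ 2 := fun x => by simp
  refine (measure_mono fun x hx => ?_).trans (measure_evalSample_ge_le
    (fun x => by rw [heval]; positivity) (by positivity))
  have htrace : evalSample x (normTrace (n d) d (2 * k)) ≤ s ^ (2 * k) := by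
    rw [evalSample_normTrace, inv_mul_le_iff₀ (mod_cast hd)]
    simpa using trace_pow_two_mul_le (isHermitian_fluctuation_sampleCov x) (not_not.1 hx) k
  rw [Set.mem_ofPred_eq, heval, ← neg_sq (_ - β)]
  gcongr
  linarith

end SpectralNorm

/-! ### Perturbation of the Tyler fixed point equation -/

lemma inv_mul_le_add_abs_sub_one {b t : ℝ} (hb : 0 < b) (hbt : b ≤ t) :
    t⁻¹ * b ≤ b + |t - 1| := by
  have ht := hb.trans_le hbt
  rw [inv_mul_eq_div, div_le_iff₀ ht]
  nlinarith [neg_abs_le (t - 1), abs_nonneg (t - 1)]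

lemma abs_inv_sub_one_le {t : ℝ} (ht : 1 / 2 ≤ t) : |t⁻¹ - 1| ≤ 2 * |t - 1| := by
  have ht0 : 0 < t := by linarith
  have hfactor : t⁻¹ - 1 = t⁻¹ * (1 - t) := by field_simp
  rw [hfactor, abs_mul, abs_of_pos (inv_pos.2 ht0), abs_sub_comm]
  refine mul_le_mul_of_nonneg_right ?_ (abs_nonneg _)
  rw [inv_le_comm₀ ht0 two_pos]
  linarith

section TylerSystem

variable {ι J : Type*} [Fintype ι] [Fintype J] {a : ι → ℝ} {x : J → ℝ} {w : ι → J → ℝ} {σ κ : ℝ}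

/-- Tyler's fixed point equation in an eigenbasis: `a` are the eigenvalues of `T⁻¹` rescaled to
have mean one, `x j` is the quadratic form of that matrix at the `j`-th direction of the sample,
and `w i j` is the squared `i`-th coordinate of that direction, up to scaling. The weights are
close to stochastic (up to `σ`), and they pair with `|x - 1|` like `κ` times `|a - 1|`. -/
structure TylerSystem (a : ι → ℝ) (x : J → ℝ) (w : ι → J → ℝ) (σ κ : ℝ) : Prop where
  pos : ∀ i, 0 < a i
  sum_eq : ∑ i, a i = Fintype.card ι
  weight_nonneg : ∀ i j, 0 ≤ w i j
  sum_weight : ∑ i, ∑ j, w i j = Fintype.card ι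
  le_of_forall_le : ∀ c, (∀ i, c ≤ a i) → ∀ j, c ≤ x j
  inv_eq : ∀ i, (a i)⁻¹ = ∑ j, w i j * (x j)⁻¹
  abs_sum_weight_sub_one_le : ∀ i, |∑ j, w i j - 1| ≤ σ
  sum_weight_mul_abs_le : ∀ β, (∀ i, |a i - 1| ≤ β) → ∀ i, ∑ j, w i j * |x j - 1| ≤ κ * β
  σ_le : σ ≤ 1 / 20
  κ_nonneg : 0 ≤ κ
  κ_le : κ ≤ 1 / 20

namespace TylerSystem

lemma exists_forall_ge [Nonempty ι] (h : TylerSystem a x w σ κ) :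
    ∃ i₀, (∀ i, a i₀ ≤ a i) ∧ ∀ j, a i₀ ≤ x j := by
  obtain ⟨i₀, hi₀⟩ := Finite.exists_min a
  exact ⟨i₀, hi₀, h.le_of_forall_le _ hi₀⟩

lemma x_pos [Nonempty ι] (h : TylerSystem a x w σ κ) (j : J) : 0 < x j := by
  obtain ⟨i₀, -, hx⟩ := h.exists_forall_ge
  exact (h.pos i₀).trans_le (hx j)

lemma sum_weight_le (h : TylerSystem a x w σ κ) (i : ι) : ∑ j, w i j ≤ 1 + σ := by
  linarith [(abs_le.1 (h.abs_sum_weight_sub_one_le i)).2]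

lemma le_sum_weight (h : TylerSystem a x w σ κ) (i : ι) : 1 - σ ≤ ∑ j, w i j := by
  linarith [(abs_le.1 (h.abs_sum_weight_sub_one_le i)).1]

lemma σ_nonneg [Nonempty ι] (h : TylerSystem a x w σ κ) : 0 ≤ σ :=
  (abs_nonneg _).trans (h.abs_sum_weight_sub_one_le (Classical.arbitrary ι))

lemma sum_weight_mul_abs_le_of_forall_le [Nonempty ι] (h : TylerSystem a x w σ κ) {M : ℝ}
    (hM : ∀ i, a i ≤ M) (i : ι) : ∑ j, w i j * |x j - 1| ≤ κ * M := by
  have one_le : 1 ≤ M := by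
    have hsum : ∑ i, a i ≤ ∑ _i : ι, M := Finset.sum_le_sum fun i _ => hM i
    have hcard : (0 : ℝ) < Fintype.card ι := by exact_mod_cast Fintype.card_pos
    rw [h.sum_eq, Finset.sum_const, nsmul_eq_mul, Finset.card_univ] at hsum
    nlinarith
  refine h.sum_weight_mul_abs_le M (fun i => abs_le.2 ⟨?_, ?_⟩) i <;>
    linarith [hM i, h.pos i]

-- The Cauchy-Schwarz inequality bounds `(∑ j, w i j)²` by `(a i)⁻¹ * ∑ j, w i j * x j`.
lemma le_five_fourths [Nonempty ι] (h : TylerSystem a x w σ κ) (i : ι) : a i ≤ 5 / 4 := by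
  obtain ⟨m, hm⟩ := Finite.exists_max a
  refine (hm i).trans ?_
  have hsum : ∑ j, w m j * x j ≤ 1 + σ + κ * a m :=
    calc ∑ j, w m j * x j
      _ ≤ ∑ j, (w m j + w m j * |x j - 1|) := Finset.sum_le_sum fun j _ => by
          nlinarith [h.weight_nonneg m j, le_abs_self (x j - 1)]
      _ ≤ 1 + σ + κ * a m := by
          rw [Finset.sum_add_distrib]
          exact add_le_add (h.sum_weight_le m) (h.sum_weight_mul_abs_le_of_forall_le hm m)
  have cauchy_schwarz : (∑ j, w m j) ^ 2 ≤ (a m)⁻¹ * ∑ j, w m j * x j := by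
    rw [h.inv_eq m]
    refine Finset.sum_sq_le_sum_mul_sum_of_sq_le_mul _
      (fun j _ => mul_nonneg (h.weight_nonneg _ _) (inv_nonneg.2 (h.x_pos j).le))
      (fun j _ => mul_nonneg (h.weight_nonneg _ _) (h.x_pos j).le) fun j _ => ?_
    have := (h.x_pos j).ne'
    exact le_of_eq (by field_simp)
  have hσ := h.σ_le
  have hlower : (19 / 20 : ℝ) ^ 2 ≤ (∑ j, w m j) ^ 2 :=
    pow_le_pow_left₀ (by norm_num) (by linarith [h.le_sum_weight m]) 2
  have hquot := (hlower.trans cauchy_schwarz).trans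
    (mul_le_mul_of_nonneg_left hsum (inv_nonneg.2 (h.pos m).le))
  rw [inv_mul_eq_div, le_div_iff₀ (h.pos m)] at hquot
  linarith [mul_le_mul_of_nonneg_right h.κ_le (h.pos m).le]

lemma half_le [Nonempty ι] (h : TylerSystem a x w σ κ) (i : ι) : 1 / 2 ≤ a i := by
  obtain ⟨m, hm, hmx⟩ := h.exists_forall_ge
  refine le_trans ?_ (hm i)
  have hone : 1 ≤ (1 + σ) * a m + κ * (5 / 4) :=
    calc 1 = ∑ j, w m j * ((x j)⁻¹ * a m) := by
          rw [← inv_mul_cancel₀ (h.pos m).ne', h.inv_eq m, Finset.sum_mul]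
          simp only [mul_assoc]
      _ ≤ ∑ j, (w m j * a m + w m j * |x j - 1|) := Finset.sum_le_sum fun j _ => by
          rw [← mul_add]
          exact mul_le_mul_of_nonneg_left (inv_mul_le_add_abs_sub_one (h.pos m) (hmx j))
            (h.weight_nonneg m j)
      _ ≤ (1 + σ) * a m + κ * (5 / 4) := by
          rw [Finset.sum_add_distrib, ← Finset.sum_mul]
          exact add_le_add (mul_le_mul_of_nonneg_right (h.sum_weight_le m) (h.pos m).le)
            (h.sum_weight_mul_abs_le_of_forall_le h.le_five_fourths m)
  nlinarith [h.pos m, h.σ_le, h.κ_le]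

lemma abs_inv_sub_sum_weight_le [Nonempty ι] (h : TylerSystem a x w σ κ) {β : ℝ}
    (hβ : ∀ i, |a i - 1| ≤ β) (i : ι) : |(a i)⁻¹ - ∑ j, w i j| ≤ 2 * κ * β := by
  have hx : ∀ j, 1 / 2 ≤ x j := h.le_of_forall_le _ h.half_le
  calc |(a i)⁻¹ - ∑ j, w i j|
    _ = |∑ j, w i j * ((x j)⁻¹ - 1)| := by
        rw [h.inv_eq i, ← Finset.sum_sub_distrib]
        simp only [mul_sub_one]
    _ ≤ ∑ j, |w i j * ((x j)⁻¹ - 1)| := Finset.abs_sum_le_sum_abs _ _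
    _ ≤ ∑ j, 2 * (w i j * |x j - 1|) := Finset.sum_le_sum fun j _ => by
        rw [abs_mul, abs_of_nonneg (h.weight_nonneg i j), mul_left_comm]
        exact mul_le_mul_of_nonneg_left (abs_inv_sub_one_le (hx j)) (h.weight_nonneg i j)
    _ ≤ 2 * κ * β := by
        rw [← Finset.mul_sum, mul_assoc]
        exact mul_le_mul_of_nonneg_left (h.sum_weight_mul_abs_le β hβ i) zero_le_two

lemma abs_inv_sub_one_le_add [Nonempty ι] (h : TylerSystem a x w σ κ) {β : ℝ}
    (hβ : ∀ i, |a i - 1| ≤ β) (i : ι) : |(a i)⁻¹ - 1| ≤ σ + 2 * κ * β := by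
  linarith [abs_sub_le (a i)⁻¹ (∑ j, w i j) 1, h.abs_inv_sub_sum_weight_le hβ i,
    h.abs_sum_weight_sub_one_le i]

lemma abs_sub_one_le_two_mul [Nonempty ι] (h : TylerSystem a x w σ κ) (i : ι) :
    |a i - 1| ≤ 2 * σ := by
  obtain ⟨m, hm⟩ := Finite.exists_max fun i => |a i - 1|
  refine (hm i).trans ?_
  have hfactor : |a m - 1| = a m * |(a m)⁻¹ - 1| := by
    rw [← abs_of_pos (h.pos m), ← abs_mul, abs_of_pos (h.pos m), mul_sub,
      mul_inv_cancel₀ (h.pos m).ne', mul_one, abs_sub_comm]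
  have hself : |a m - 1| ≤ 5 / 4 * (σ + 2 * κ * |a m - 1|) := hfactor.le.trans <|
    mul_le_mul (h.le_five_fourths m) (h.abs_inv_sub_one_le_add hm m) (abs_nonneg _) (by norm_num)
  nlinarith [abs_nonneg (a m - 1), h.κ_le, h.κ_nonneg, h.σ_nonneg]

lemma abs_mean_inv_sub_one_le [Nonempty ι] (h : TylerSystem a x w σ κ) :
    |(∑ i, (a i)⁻¹) / Fintype.card ι - 1| ≤ 4 * κ * σ := by
  have hcard : (0 : ℝ) < Fintype.card ι := by exact_mod_cast Fintype.card_pos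
  rw [div_sub_one hcard.ne', abs_div, abs_of_pos hcard, div_le_iff₀ hcard]
  calc |∑ i, (a i)⁻¹ - Fintype.card ι|
    _ = |∑ i, ((a i)⁻¹ - ∑ j, w i j)| := by rw [Finset.sum_sub_distrib, h.sum_weight]
    _ ≤ ∑ i, |(a i)⁻¹ - ∑ j, w i j| := Finset.abs_sum_le_sum_abs _ _
    _ ≤ ∑ _i : ι, 4 * κ * σ := Finset.sum_le_sum fun i _ =>
        (h.abs_inv_sub_sum_weight_le h.abs_sub_one_le_two_mul i).trans (by linarith)
    _ = 4 * κ * σ * Fintype.card ι := by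
        rw [Finset.sum_const, nsmul_eq_mul, Finset.card_univ, mul_comm]

theorem abs_mul_inv_sub_one_le [Nonempty ι] (h : TylerSystem a x w σ κ) {s : ℝ}
    (hs : s * ∑ i, (a i)⁻¹ = Fintype.card ι) (i : ι) :
    |s * (a i)⁻¹ - 1| ≤ (1 + 20 * κ) * σ := by
  have hcard : (0 : ℝ) < Fintype.card ι := by exact_mod_cast Fintype.card_pos
  have hmean := h.abs_mean_inv_sub_one_le
  set m := (∑ i, (a i)⁻¹) / Fintype.card ι with hm
  have hsm : s * m = 1 := by rw [hm, mul_div_assoc', hs, div_self hcard.ne']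
  have hσ := h.σ_nonneg
  have hκσ : 0 ≤ κ * σ := mul_nonneg h.κ_nonneg hσ
  have hm_ge : 1 - κ / 5 ≤ m := by
    nlinarith [(abs_le.1 hmean).1, h.σ_le, h.κ_nonneg]
  have hm_pos : 0 < m := by linarith [h.κ_le]
  have hquot : s * (a i)⁻¹ - 1 = ((a i)⁻¹ - m) / m := by
    rw [eq_div_iff hm_pos.ne', sub_mul, mul_right_comm, hsm]
    ring
  rw [hquot, abs_div, abs_of_pos hm_pos, div_le_iff₀ hm_pos]
  have htriangle := abs_sub_le (a i)⁻¹ 1 m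
  rw [abs_sub_comm 1 m] at htriangle
  have hprod : (1 + 20 * κ) * σ * (1 - κ / 5) ≤ (1 + 20 * κ) * σ * m :=
    mul_le_mul_of_nonneg_left hm_ge (mul_nonneg (by linarith [h.κ_nonneg]) hσ)
  nlinarith [h.abs_inv_sub_one_le_add h.abs_sub_one_le_two_mul i, h.κ_le]

end TylerSystem

end TylerSystem

section Rayleigh

variable {ι : Type*} [Fintype ι] {A : Matrix ι ι ℝ} {s : ℝ} {v : ι → ℝ}

/-- The Rayleigh quotient of a real matrix at a vector. -/
noncomputable def rayleigh (A : Matrix ι ι ℝ) (v : ι → ℝ) : ℝ := v ⬝ᵥ A *ᵥ v / (v ⬝ᵥ v)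

lemma abs_rayleigh_le (hA : QuadBounded A s) (hv : v ≠ 0) : |rayleigh A v| ≤ s := by
  have hpos := dotProduct_self_pos hv
  rw [rayleigh, abs_div, abs_of_pos hpos, div_le_iff₀ hpos]
  exact hA v

lemma rayleigh_smul (c : ℝ) : rayleigh (c • A) v = c * rayleigh A v := by
  rw [rayleigh, smul_mulVec, dotProduct_smul, smul_eq_mul, mul_div_assoc, rayleigh]

variable [DecidableEq ι]

lemma rayleigh_sub_one (hv : v ≠ 0) : rayleigh (A - 1) v = rayleigh A v - 1 := by
  rw [rayleigh, sub_one_quad, sub_div, div_self (dotProduct_self_pos hv).ne', rayleigh]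

lemma le_rayleigh_of_le_eigenvalues (hA : A.IsHermitian) (hs : ∀ i, s ≤ hA.eigenvalues i)
    (hv : v ≠ 0) : s ≤ rayleigh A v := by
  rw [rayleigh, le_div_iff₀ (dotProduct_self_pos hv),
    dotProduct_mulVec_eq_sum_of_mulVec_eigenvector hA (mulVec_eigenvector hA),
    dotProduct_self_eq_sum_eigenvector hA, Finset.mul_sum]
  exact Finset.sum_le_sum fun i _ => mul_le_mul_of_nonneg_right (hs i) (sq_nonneg _)

lemma trace_eq_sum_of_mulVec_eigenvector (hA : A.IsHermitian) {T : Matrix ι ι ℝ} {c : ι → ℝ}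
    (hT : ∀ i, T *ᵥ eigenvector hA i = c i • eigenvector hA i) : T.trace = ∑ i, c i := by
  have hdiag : ∀ k, T k k = ∑ i, c i * eigenvector hA i k ^ 2 := fun k => by
    simpa using dotProduct_mulVec_eq_sum_of_mulVec_eigenvector hA hT (Pi.single k 1)
  have hunit : ∀ i, ∑ k, eigenvector hA i k ^ 2 = 1 := fun i => by
    rw [← eigenvector_dotProduct_self hA i, dotProduct]
    simp only [sq]
  simp only [Matrix.trace, diag_apply, hdiag]
  rw [Finset.sum_comm]
  simp only [← Finset.mul_sum, hunit, mul_one]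

lemma mulVec_eigenvector_of_mul_eq_smul_one (hA : A.IsHermitian) {T : Matrix ι ι ℝ}
    (hT : T * A = s • 1) {i : ι} (hi : hA.eigenvalues i ≠ 0) :
    T *ᵥ eigenvector hA i = (s * (hA.eigenvalues i)⁻¹) • eigenvector hA i := by
  have hTA : T *ᵥ (A *ᵥ eigenvector hA i) = s • eigenvector hA i := by
    rw [Matrix.mulVec_mulVec, hT, smul_mulVec, one_mulVec]
  rw [mulVec_eigenvector, Matrix.mulVec_smul] at hTA
  rw [mul_comm, mul_smul, ← hTA, smul_smul, inv_mul_cancel₀ hi, one_smul]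

end Rayleigh

section Tyler

variable {n d : ℕ} {x : Fin n → Fin d → ℝ} {T : Matrix (Fin d) (Fin d) ℝ} {σ κ : ℝ}

/-- The sample with every vector rescaled to Euclidean length `√d`; Tyler's estimator depends on
the sample only through it. -/
noncomputable def sphericalSample (x : Fin n → Fin d → ℝ) : Fin n → Fin d → ℝ :=
  fun j => (√(d : ℝ) / √(x j ⬝ᵥ x j)) • x j

lemma sphericalSample_dotProduct_sq (x : Fin n → Fin d → ℝ) (j : Fin n) (v : Fin d → ℝ) :
    (sphericalSample x j ⬝ᵥ v) ^ 2 = d / (x j ⬝ᵥ x j) * (x j ⬝ᵥ v) ^ 2 := by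
  rw [sphericalSample, smul_dotProduct, smul_eq_mul, mul_pow, div_pow,
    Real.sq_sqrt d.cast_nonneg, Real.sq_sqrt (dotProduct_self_nonneg _)]

lemma sphericalSample_dotProduct_self {j : Fin n} (hx : x j ≠ 0) :
    sphericalSample x j ⬝ᵥ sphericalSample x j = d := by
  have hpos := dotProduct_self_pos hx
  rw [sphericalSample, smul_dotProduct, dotProduct_smul, smul_eq_mul, smul_eq_mul, ← mul_assoc,
    ← sq, div_pow, Real.sq_sqrt d.cast_nonneg, Real.sq_sqrt hpos.le, div_mul_cancel₀ _ hpos.ne']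

lemma sum_eigenvector_weight [NeZero n] {A : Matrix (Fin d) (Fin d) ℝ} (hA : A.IsHermitian)
    (hx : ∀ j, x j ≠ 0) :
    ∑ i, ∑ j, (n : ℝ)⁻¹ * (sphericalSample x j ⬝ᵥ eigenvector hA i) ^ 2 = d := by
  have hn : (n : ℝ) ≠ 0 := NeZero.ne _
  have hsum : ∀ j, ∑ i, (sphericalSample x j ⬝ᵥ eigenvector hA i) ^ 2 = d := fun j => by
    rw [← sphericalSample_dotProduct_self (hx j), dotProduct_self_eq_sum_eigenvector hA]
    simp only [dotProduct_comm]
  rw [Finset.sum_comm]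
  simp only [← Finset.mul_sum, hsum, Finset.sum_const, Finset.card_univ, Fintype.card_fin,
    nsmul_eq_mul]
  field_simp

/-- The nonlinear part of Tyler's equation is small: averaging the Rayleigh quotients of any
traceless symmetric `D` with spectral norm at most `β`, weighted by the squared components of the
spherical sample in a fixed direction, gives at most `κ * β`. -/
def RemainderBounded (x : Fin n → Fin d → ℝ) (κ : ℝ) : Prop :=
  ∀ D : Matrix (Fin d) (Fin d) ℝ, D.IsHermitian → D.trace = 0 → ∀ β, QuadBounded D β →
    ∀ v, v ⬝ᵥ v = 1 →
      ∑ j, (n : ℝ)⁻¹ * (sphericalSample x j ⬝ᵥ v) ^ 2 * |rayleigh D (x j)| ≤ κ * β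

/-- The inverse of a scatter matrix `T`, rescaled to have trace `d`. -/
noncomputable def shapeInv (T : Matrix (Fin d) (Fin d) ℝ) : Matrix (Fin d) (Fin d) ℝ :=
  ((d : ℝ) / T⁻¹.trace) • T⁻¹

variable [NeZero d]

lemma div_trace_inv_pos (hT : T.PosDef) : 0 < (d : ℝ) / T⁻¹.trace :=
  div_pos (Nat.cast_pos.2 (NeZero.pos d)) hT.inv.trace_pos

lemma posDef_shapeInv (hT : T.PosDef) : (shapeInv T).PosDef :=
  hT.inv.smul (div_trace_inv_pos hT)

lemma trace_shapeInv (hT : T.PosDef) : (shapeInv T).trace = d := by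
  rw [shapeInv, Matrix.trace_smul, smul_eq_mul, div_mul_cancel₀ _ hT.inv.trace_pos.ne']

lemma mulVec_eigenvector_shapeInv (hT : T.PosDef) (i : Fin d) :
    T *ᵥ eigenvector (posDef_shapeInv hT).isHermitian i =
      ((d : ℝ) / T⁻¹.trace * ((posDef_shapeInv hT).isHermitian.eigenvalues i)⁻¹) •
        eigenvector (posDef_shapeInv hT).isHermitian i :=
  mulVec_eigenvector_of_mul_eq_smul_one _
    (by rw [shapeInv, Matrix.mul_smul, Matrix.mul_nonsing_inv _ hT.det_pos.ne'.isUnit])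
    ((posDef_shapeInv hT).eigenvalues_pos i).ne'

lemma quad_eq_sum_of_isTyler (hT : IsTyler x T) (hx : ∀ j, x j ≠ 0) (v : Fin d → ℝ) :
    v ⬝ᵥ T *ᵥ v = (d : ℝ) / T⁻¹.trace *
      ∑ j, (n : ℝ)⁻¹ * (sphericalSample x j ⬝ᵥ v) ^ 2 * (rayleigh (shapeInv T) (x j))⁻¹ := by
  obtain ⟨hpd, -, heq⟩ := hT
  have hs := (div_trace_inv_pos hpd).ne'
  conv_lhs => rw [heq]
  rw [smul_mulVec, dotProduct_smul, Matrix.sum_mulVec, dotProduct_sum, smul_eq_mul,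
    Finset.mul_sum, Finset.mul_sum]
  refine Finset.sum_congr rfl fun j _ => ?_
  have hxx := (dotProduct_self_pos (hx j)).ne'
  have hxTx : x j ⬝ᵥ T⁻¹ *ᵥ x j ≠ 0 := by
    simpa using (hpd.inv.dotProduct_mulVec_pos (hx j)).ne'
  rw [shapeInv, rayleigh_smul, mul_inv, sphericalSample_dotProduct_sq, rayleigh, smul_mulVec,
    dotProduct_smul, vecMulVec_mulVec, dotProduct_smul, dotProduct_comm v, op_smul_eq_smul,
    smul_eq_mul, smul_eq_mul]
  generalize (d : ℝ) / T⁻¹.trace = s at hs ⊢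
  field_simp

variable [NeZero n]

lemma tylerSystem_of_isTyler (hT : IsTyler x T) (hx : ∀ j, x j ≠ 0) (hσ : σ ≤ 1 / 20)
    (hκ0 : 0 ≤ κ) (hκ : κ ≤ 1 / 20) (hcov : QuadBounded (sampleCov (sphericalSample x) - 1) σ)
    (hrem : RemainderBounded x κ) :
    TylerSystem (posDef_shapeInv hT.1).isHermitian.eigenvalues
      (fun j => rayleigh (shapeInv T) (x j))
      (fun i j => (n : ℝ)⁻¹ *
        (sphericalSample x j ⬝ᵥ eigenvector (posDef_shapeInv hT.1).isHermitian i) ^ 2) σ κ := by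
  have hpd := posDef_shapeInv hT.1
  have hA := hpd.isHermitian
  refine ⟨hpd.eigenvalues_pos, ?_, fun i j => by positivity, ?_, ?_, ?_, ?_, ?_, hσ, hκ0, hκ⟩
  · rw [Fintype.card_fin]
    exact (trace_eq_sum_of_mulVec_eigenvector hA (mulVec_eigenvector hA)).symm.trans
      (trace_shapeInv hT.1)
  · rw [Fintype.card_fin, sum_eigenvector_weight hA hx]
  · exact fun c hc j => le_rayleigh_of_le_eigenvalues hA hc (hx j)
  · intro i
    refine mul_left_cancel₀ (div_trace_inv_pos hT.1).ne' ?_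
    rw [← quad_eq_sum_of_isTyler hT hx, mulVec_eigenvector_shapeInv hT.1, dotProduct_smul,
      eigenvector_dotProduct_self, smul_eq_mul, mul_one]
  · intro i
    have hi := hcov (eigenvector hA i)
    rwa [sub_one_quad, sampleCov_quad, eigenvector_dotProduct_self, mul_one] at hi
  · intro β hβ i
    have hsub : QuadBounded (shapeInv T - 1) β :=
      quadBounded_of_mulVec_eigenvector hA (c := fun i => hA.eigenvalues i - 1) (fun i => by
        rw [sub_mulVec, one_mulVec, mulVec_eigenvector, sub_smul, one_smul]) hβ
    have htrace : (shapeInv T - 1).trace = 0 := by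
      rw [Matrix.trace_sub, trace_shapeInv hT.1, Matrix.trace_one, Fintype.card_fin, sub_self]
    simpa only [rayleigh_sub_one (hx _)] using
      hrem _ (hA.sub isHermitian_one) htrace β hsub _ (eigenvector_dotProduct_self hA i)

theorem quadBounded_sub_one_of_isTyler (hT : IsTyler x T) (hx : ∀ j, x j ≠ 0) (hσ : σ ≤ 1 / 20)
    (hκ0 : 0 ≤ κ) (hκ : κ ≤ 1 / 20) (hcov : QuadBounded (sampleCov (sphericalSample x) - 1) σ)
    (hrem : RemainderBounded x κ) : QuadBounded (T - 1) ((1 + 20 * κ) * σ) := by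
  have hA := (posDef_shapeInv hT.1).isHermitian
  have hTe := mulVec_eigenvector_shapeInv hT.1
  have htrace : (d : ℝ) / T⁻¹.trace * ∑ i, (hA.eigenvalues i)⁻¹ = d := by
    rw [Finset.mul_sum]
    exact (trace_eq_sum_of_mulVec_eigenvector hA hTe).symm.trans hT.2.1
  refine quadBounded_of_mulVec_eigenvector hA
    (c := fun i => (d : ℝ) / T⁻¹.trace * (hA.eigenvalues i)⁻¹ - 1) (fun i => ?_) fun i =>
    (tylerSystem_of_isTyler hT hx hσ hκ0 hκ hcov hrem).abs_mul_inv_sub_one_le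
      (by rw [htrace, Fintype.card_fin]) i
  rw [sub_mulVec, one_mulVec, hTe, sub_smul, one_smul]

end Tyler

/-! ### Deterministic control of the remainder -/

section OuterKernel

variable {n d : ℕ}

/-- `u uᵗ - I`, which has mean zero for a standard normal vector `u`. -/
def centeredOuter (u : Fin d → ℝ) : Matrix (Fin d) (Fin d) ℝ := vecMulVec u u - 1

/-- The Frobenius inner product of two centered outer products. -/
def outerKernel (u v : Fin d → ℝ) : ℝ := (u ⬝ᵥ v) ^ 2 - u ⬝ᵥ u - v ⬝ᵥ v + d

/-- The Gram matrix of the centered outer products of a sample, with its diagonal removed. -/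
def offDiagGram (x : Fin n → Fin d → ℝ) : Matrix (Fin n) (Fin n) ℝ :=
  Matrix.of fun i j => if i = j then 0 else outerKernel (x i) (x j)

lemma isHermitian_offDiagGram (x : Fin n → Fin d → ℝ) : (offDiagGram x).IsHermitian := by
  ext i j
  simp only [offDiagGram, conjTranspose_apply, of_apply, star_trivial, outerKernel,
    eq_comm (a := j), dotProduct_comm (x j) (x i)]
  split_ifs <;> ring

lemma sum_centeredOuter_mul (u v : Fin d → ℝ) :
    ∑ a, ∑ b, centeredOuter u a b * centeredOuter v a b = outerKernel u v := by
  have hexpand : ∀ a b, centeredOuter u a b * centeredOuter v a b = (u a * v a) * (u b * v b) -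
      (if a = b then u a * u b else 0) - (if a = b then v a * v b else 0) +
      if a = b then 1 else 0 := fun a b => by
    simp only [centeredOuter, Matrix.sub_apply, vecMulVec_apply, one_apply]
    split_ifs <;> ring
  simp only [hexpand, Finset.sum_add_distrib, Finset.sum_sub_distrib, Finset.sum_ite_eq,
    Finset.mem_univ, if_true, ← Finset.sum_mul_sum, outerKernel, dotProduct, sq]
  simp

lemma sum_mul_centeredOuter {D : Matrix (Fin d) (Fin d) ℝ} (hD : D.trace = 0) (u : Fin d → ℝ) :
    ∑ a, ∑ b, D a b * centeredOuter u a b = u ⬝ᵥ D *ᵥ u := by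
  have hexpand : ∀ a b, D a b * centeredOuter u a b =
      u a * (D a b * u b) - if a = b then D a b else 0 := fun a b => by
    simp only [centeredOuter, Matrix.sub_apply, vecMulVec_apply, one_apply]
    split_ifs <;> ring
  have htrace : ∑ a, D a a = 0 := hD
  simp only [hexpand, Finset.sum_sub_distrib, Finset.sum_ite_eq, Finset.mem_univ, if_true, htrace,
    sub_zero, dotProduct, mulVec, Finset.mul_sum]

lemma sum_sq_sum_mul_centeredOuter (x : Fin n → Fin d → ℝ) (z : Fin n → ℝ) :
    ∑ a, ∑ b, (∑ j, z j * centeredOuter (x j) a b) ^ 2 =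
      ∑ i, ∑ j, z i * z j * outerKernel (x i) (x j) := by
  have hsq : ∀ a b, (∑ j, z j * centeredOuter (x j) a b) ^ 2 =
      ∑ i, ∑ j, z i * z j * (centeredOuter (x i) a b * centeredOuter (x j) a b) := fun a b => by
    simp only [sq, Finset.sum_mul_sum, mul_mul_mul_comm]
  simp only [hsq, ← sum_centeredOuter_mul, Finset.mul_sum]
  rw [Finset.sum_congr rfl fun a _ => Finset.sum_comm, Finset.sum_comm]
  refine Finset.sum_congr rfl fun i _ => ?_
  rw [Finset.sum_congr rfl fun a _ => Finset.sum_comm, Finset.sum_comm]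

lemma quadBounded_of_trace_pow_le {ι : Type*} [Fintype ι] [DecidableEq ι] {M : Matrix ι ι ℝ}
    (hM : M.IsHermitian) {F : ℝ} (hF : 0 ≤ F) {k : ℕ} (hk : k ≠ 0)
    (htrace : trace (M ^ (2 * k)) ≤ F ^ (2 * k)) : QuadBounded M F := by
  rw [quadBounded_iff_abs_eigenvalues_le hM]
  intro i
  refine le_of_pow_le_pow_left₀ (mul_ne_zero two_ne_zero hk) hF ?_
  rw [(even_two_mul k).pow_abs]
  refine le_trans ?_ htrace
  rw [trace_pow_eq_sum_eigenvalues hM]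
  exact Finset.single_le_sum (f := fun i => hM.eigenvalues i ^ (2 * k))
    (fun i _ => (even_two_mul k).pow_nonneg _) (Finset.mem_univ i)

lemma sum_sq_le_of_quadBounded {D : Matrix (Fin d) (Fin d) ℝ} (hD : D.IsHermitian) {s : ℝ}
    (hs : QuadBounded D s) : ∑ a, ∑ b, D a b ^ 2 ≤ d * s ^ 2 := by
  have htrace : trace (D ^ (2 * 1)) = ∑ a, ∑ b, D a b ^ 2 := by
    have hsymm : ∀ a b, D b a = D a b := fun a b => by simpa using hD.apply a b
    simp only [mul_one, sq, Matrix.trace, diag_apply, Matrix.mul_apply, hsymm]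
  simpa [htrace] using trace_pow_two_mul_le hD hs 1

lemma sum_mul_outerKernel_eq (x : Fin n → Fin d → ℝ) (z : Fin n → ℝ) :
    ∑ i, ∑ j, z i * z j * outerKernel (x i) (x j) =
      z ⬝ᵥ offDiagGram x *ᵥ z + ∑ i, z i ^ 2 * outerKernel (x i) (x i) := by
  have hsplit : ∀ i j, z i * z j * outerKernel (x i) (x j) = z i * (offDiagGram x i j * z j) +
      if i = j then z i ^ 2 * outerKernel (x i) (x i) else 0 := fun i j => by
    rw [offDiagGram, of_apply]
    by_cases h : i = j
    · subst h
      simp [sq]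
    · simp only [h, if_false]
      ring
  simp only [hsplit, Finset.sum_add_distrib, Finset.sum_ite_eq, Finset.mem_univ, if_true,
    dotProduct, mulVec, Finset.mul_sum]

lemma sum_mul_outerKernel_le [NeZero d] {x : Fin n → Fin d → ℝ} {F : ℝ}
    (hF : QuadBounded (offDiagGram x) F) {z : Fin n → ℝ}
    (hz : ∀ j, z j ≠ 0 → x j ⬝ᵥ x j ≤ 2 * d) :
    ∑ i, ∑ j, z i * z j * outerKernel (x i) (x j) ≤ (5 * d ^ 2 + F) * ∑ j, z j ^ 2 := by
  have one_le : (1 : ℝ) ≤ d := by exact_mod_cast NeZero.one_le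
  have hoff : z ⬝ᵥ offDiagGram x *ᵥ z ≤ F * ∑ j, z j ^ 2 := by
    simpa only [dotProduct, sq] using (le_abs_self _).trans (hF z)
  have hdiag : ∑ i, z i ^ 2 * outerKernel (x i) (x i) ≤ 5 * d ^ 2 * ∑ j, z j ^ 2 := by
    rw [Finset.mul_sum]
    refine Finset.sum_le_sum fun i _ => ?_
    by_cases hi : z i = 0
    · simp [hi]
    rw [mul_comm]
    refine mul_le_mul_of_nonneg_right ?_ (sq_nonneg _)
    rw [outerKernel]
    nlinarith [hz i hi, dotProduct_self_nonneg (x i)]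
  rw [sum_mul_outerKernel_eq]
  linarith

-- The sum on the left is the Frobenius inner product of `D` with a combination of the centered
-- outer products, whose norm is controlled by the same sum.
lemma sum_quad_sq_le [NeZero d] {x : Fin n → Fin d → ℝ} {F : ℝ} (hF0 : 0 ≤ F)
    (hF : QuadBounded (offDiagGram x) F) {D : Matrix (Fin d) (Fin d) ℝ} (hDh : D.IsHermitian)
    (hD : D.trace = 0) (hD1 : QuadBounded D 1) {J : Finset (Fin n)}
    (hJ : ∀ j ∈ J, x j ⬝ᵥ x j ≤ 2 * d) :
    ∑ j ∈ J, (x j ⬝ᵥ D *ᵥ x j) ^ 2 ≤ d * (5 * d ^ 2 + F) := by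
  set z : Fin n → ℝ := fun j => if j ∈ J then x j ⬝ᵥ D *ᵥ x j else 0 with hz
  set N := ∑ j, z j ^ 2 with hN
  have hsum : ∑ j ∈ J, (x j ⬝ᵥ D *ᵥ x j) ^ 2 = N := by
    rw [hN, ← Finset.sum_subset J.subset_univ fun j _ hj => by simp [hz, hj]]
    exact Finset.sum_congr rfl fun j hj => by simp [hz, hj]
  have hinner : N = ∑ a, ∑ b, D a b * ∑ j, z j * centeredOuter (x j) a b := by
    have hterm : ∀ j, z j ^ 2 = ∑ a, ∑ b, D a b * (z j * centeredOuter (x j) a b) := fun j => by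
      simp only [mul_left_comm (D _ _), ← Finset.mul_sum, sum_mul_centeredOuter hD]
      simp only [hz]
      split_ifs <;> ring
    simp only [hN, hterm, Finset.mul_sum]
    rw [Finset.sum_comm, Finset.sum_congr rfl fun a _ => Finset.sum_comm]
  have hfrob : ∑ a, ∑ b, (∑ j, z j * centeredOuter (x j) a b) ^ 2 ≤ (5 * d ^ 2 + F) * N := by
    rw [sum_sq_sum_mul_centeredOuter]
    exact sum_mul_outerKernel_le hF fun j hj => hJ j (by by_contra h; simp [hz, h] at hj)
  have cauchy_schwarz : N ^ 2 ≤ d * ((5 * d ^ 2 + F) * N) := by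
    have h := Finset.sum_mul_sq_le_sq_mul_sq (Finset.univ : Finset (Fin d × Fin d))
      (fun p => D p.1 p.2) (fun p => ∑ j, z j * centeredOuter (x j) p.1 p.2)
    simp only [Fintype.sum_prod_type] at h
    rw [← hinner] at h
    exact h.trans <| mul_le_mul (by simpa using sum_sq_le_of_quadBounded hDh hD1) hfrob
      (by positivity) (by positivity)
  rw [hsum]
  have hN_nonneg : 0 ≤ N := Finset.sum_nonneg fun j _ => sq_nonneg (z j)
  rcases hN_nonneg.eq_or_lt with hN0 | hN0
  · rw [← hN0]
    positivity
  · exact le_of_mul_le_mul_right (by linarith) hN0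

lemma card_le_of_quad_ge [NeZero d] {x : Fin n → Fin d → ℝ} {F : ℝ} (hF0 : 0 ≤ F)
    (hF : QuadBounded (offDiagGram x) F) {D : Matrix (Fin d) (Fin d) ℝ} (hDh : D.IsHermitian)
    (hD : D.trace = 0) (hD1 : QuadBounded D 1) {J : Finset (Fin n)}
    (hJ : ∀ j ∈ J, x j ⬝ᵥ x j ≤ 2 * d) {η : ℝ} (hη : 0 < η)
    (hJη : ∀ j ∈ J, d / 2 * η ≤ |x j ⬝ᵥ D *ᵥ x j|) :
    (J.card : ℝ) ≤ 4 / η ^ 2 * (5 * d + F / d) := by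
  have hd : (0 : ℝ) < d := Nat.cast_pos.2 (NeZero.pos d)
  have hcheb : (J.card : ℝ) * (d / 2 * η) ^ 2 ≤ d * (5 * d ^ 2 + F) :=
    calc (J.card : ℝ) * (d / 2 * η) ^ 2 = ∑ j ∈ J, (d / 2 * η) ^ 2 := by simp
      _ ≤ ∑ j ∈ J, (x j ⬝ᵥ D *ᵥ x j) ^ 2 := Finset.sum_le_sum fun j hj => by
          rw [← sq_abs (x j ⬝ᵥ D *ᵥ x j)]
          exact pow_le_pow_left₀ (by positivity) (hJη j hj) 2
      _ ≤ d * (5 * d ^ 2 + F) := sum_quad_sq_le hF0 hF hDh hD hD1 hJ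
  rw [← le_div_iff₀ (by positivity)] at hcheb
  refine hcheb.trans (le_of_eq ?_)
  field_simp
  norm_num

end OuterKernel

section TypicalSample

variable {n d : ℕ} {x : Fin n → Fin d → ℝ} {θ η t : ℝ}

/-- The part of `∑ (x j ⬝ᵥ v) ^ 2` that exceeds the level `t` in the individual terms. -/
def truncatedMass (t : ℝ) (x : Fin n → Fin d → ℝ) (v : Fin d → ℝ) : ℝ :=
  ∑ j, max ((x j ⬝ᵥ v) ^ 2 - t) 0

/-- The deterministic properties of a sample that make the remainder in Tyler's equation small:
the off-diagonal Gram matrix has spectral norm `≤ θ n d` (through a fourth moment), few sample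
vectors are atypically short or long, and no direction carries much mass beyond the level `t`. -/
structure TypicalSample (x : Fin n → Fin d → ℝ) (θ η t : ℝ) : Prop where
  ne_zero : ∀ j, x j ≠ 0
  trace_offDiagGram_le : trace (offDiagGram x ^ 4) ≤ (θ * n * d) ^ 4
  card_short_le : d * ((Finset.univ.filter fun j => x j ⬝ᵥ x j < d / 2).card : ℝ) ≤ θ * n
  card_long_le : ((Finset.univ.filter fun j => 2 * (d : ℝ) < x j ⬝ᵥ x j).card : ℝ) ≤ θ * n
  truncatedMass_le : ∀ v, v ⬝ᵥ v = 1 → truncatedMass t x v ≤ η * n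

lemma dotProduct_sq_le {ι : Type*} [Fintype ι] (u v : ι → ℝ) :
    (u ⬝ᵥ v) ^ 2 ≤ (u ⬝ᵥ u) * (v ⬝ᵥ v) := by
  simpa only [dotProduct, sq] using Finset.sum_mul_sq_le_sq_mul_sq Finset.univ u v

lemma sphericalSample_dotProduct_sq_le {j : Fin n} (hx : x j ≠ 0) {v : Fin d → ℝ}
    (hv : v ⬝ᵥ v = 1) : (sphericalSample x j ⬝ᵥ v) ^ 2 ≤ d := by
  simpa only [sphericalSample_dotProduct_self hx, hv, mul_one] using
    dotProduct_sq_le (sphericalSample x j) v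

lemma sphericalSample_dotProduct_sq_le_two_mul {j : Fin n} (hx : x j ≠ 0)
    (hj : (d : ℝ) / 2 ≤ x j ⬝ᵥ x j) (v : Fin d → ℝ) :
    (sphericalSample x j ⬝ᵥ v) ^ 2 ≤ 2 * (x j ⬝ᵥ v) ^ 2 := by
  rw [sphericalSample_dotProduct_sq]
  refine mul_le_mul_of_nonneg_right ?_ (sq_nonneg _)
  rw [div_le_iff₀ (dotProduct_self_pos hx)]
  linarith

/-- The indices of sample vectors of typical length at which the Rayleigh quotient of `D` is
larger than `η`. -/
noncomputable def largeRayleigh (x : Fin n → Fin d → ℝ) (D : Matrix (Fin d) (Fin d) ℝ) (η : ℝ) :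
    Finset (Fin n) :=
  Finset.univ.filter fun j =>
    x j ⬝ᵥ x j ≤ 2 * d ∧ (d : ℝ) / 2 ≤ x j ⬝ᵥ x j ∧ η < |rayleigh D (x j)|

lemma card_largeRayleigh_le [NeZero d] (h : TypicalSample x θ η t) (hθ : 0 ≤ θ) (hη : 0 < η)
    {D : Matrix (Fin d) (Fin d) ℝ} (hDh : D.IsHermitian) (hD : D.trace = 0)
    (hD1 : QuadBounded D 1) :
    ((largeRayleigh x D η).card : ℝ) ≤ 4 / η ^ 2 * (5 * d + θ * n) := by
  have hd : (d : ℝ) ≠ 0 := NeZero.ne _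
  have hgram : QuadBounded (offDiagGram x) (θ * n * d) :=
    quadBounded_of_trace_pow_le (isHermitian_offDiagGram x) (by positivity) two_ne_zero
      h.trace_offDiagGram_le
  refine (card_le_of_quad_ge (by positivity) hgram hDh hD hD1
    (fun j hj => (Finset.mem_filter.1 hj).2.1) hη fun j hj => ?_).trans_eq
    (by rw [mul_div_cancel_right₀ _ hd])
  obtain ⟨-, -, hshort, hlarge⟩ := Finset.mem_filter.1 hj
  have hpos := dotProduct_self_pos (h.ne_zero j)
  rw [rayleigh, abs_div, abs_of_pos hpos, lt_div_iff₀ hpos] at hlarge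
  nlinarith

lemma sphericalSample_sq_mul_rayleigh_le (hx : ∀ j, x j ≠ 0) (hη : 0 < η) (ht : 0 ≤ t)
    {D : Matrix (Fin d) (Fin d) ℝ} (hD1 : QuadBounded D 1) {v : Fin d → ℝ} (hv : v ⬝ᵥ v = 1)
    (j : Fin n) :
    (sphericalSample x j ⬝ᵥ v) ^ 2 * |rayleigh D (x j)| ≤
      (if x j ⬝ᵥ x j < d / 2 then (d : ℝ) else 0) + η * (sphericalSample x j ⬝ᵥ v) ^ 2 +
      2 * t * ((if 2 * (d : ℝ) < x j ⬝ᵥ x j then 1 else 0) +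
        if j ∈ largeRayleigh x D η then 1 else 0) + 2 * max ((x j ⬝ᵥ v) ^ 2 - t) 0 := by
  set w := (sphericalSample x j ⬝ᵥ v) ^ 2
  set r := |rayleigh D (x j)|
  have hw0 : 0 ≤ w := sq_nonneg _
  have hwr : w * r ≤ w := mul_le_of_le_one_right hw0 (abs_rayleigh_le hD1 (hx j))
  have hmax0 : 0 ≤ max ((x j ⬝ᵥ v) ^ 2 - t) 0 := le_max_right _ _
  have hcount0 : 0 ≤ 2 * t * ((if 2 * (d : ℝ) < x j ⬝ᵥ x j then 1 else 0) +
      if j ∈ largeRayleigh x D η then 1 else 0) := by positivity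
  have hηw : 0 ≤ η * w := by positivity
  by_cases hshort : x j ⬝ᵥ x j < d / 2
  · rw [if_pos hshort]
    linarith [sphericalSample_dotProduct_sq_le (hx j) hv]
  rw [if_neg hshort]
  by_cases hsmall : r ≤ η
  · linarith [mul_le_mul_of_nonneg_left hsmall hw0]
  have hcount : (1 : ℝ) ≤ (if 2 * (d : ℝ) < x j ⬝ᵥ x j then 1 else 0) +
      if j ∈ largeRayleigh x D η then 1 else 0 := by
    by_cases hlong : 2 * (d : ℝ) < x j ⬝ᵥ x j
    · rw [if_pos hlong]
      exact le_add_of_nonneg_right (by positivity)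
    · rw [if_neg hlong, if_pos, zero_add]
      exact Finset.mem_filter.2 ⟨Finset.mem_univ j, not_lt.1 hlong, not_lt.1 hshort,
        not_le.1 hsmall⟩
  linarith [sphericalSample_dotProduct_sq_le_two_mul (hx j) (not_lt.1 hshort) v,
    le_max_left ((x j ⬝ᵥ v) ^ 2 - t) 0, mul_le_mul_of_nonneg_left hcount ht]

lemma sum_ite_const_eq_mul_card {ι : Type*} [Fintype ι] (p : ι → Prop) [DecidablePred p] (c : ℝ) :
    ∑ j, (if p j then c else 0) = c * (Finset.univ.filter p).card := by
  rw [← Finset.sum_filter, Finset.sum_const, nsmul_eq_mul, mul_comm]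

variable [NeZero n] [NeZero d]

lemma sum_sphericalSample_sq_mul_rayleigh_le (h : TypicalSample x θ η t) (hθ : 0 ≤ θ)
    (hη : 0 < η) (ht : 0 ≤ t) (hcov : QuadBounded (sampleCov (sphericalSample x) - 1) 1)
    {D : Matrix (Fin d) (Fin d) ℝ} (hDh : D.IsHermitian) (hD : D.trace = 0)
    (hD1 : QuadBounded D 1) {v : Fin d → ℝ} (hv : v ⬝ᵥ v = 1) :
    ∑ j, (n : ℝ)⁻¹ * (sphericalSample x j ⬝ᵥ v) ^ 2 * |rayleigh D (x j)| ≤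
      (1 + 2 * t * (1 + 4 / η ^ 2)) * θ + 4 * η + 40 * t / η ^ 2 * (d / n) := by
  have hn : (0 : ℝ) < n := Nat.cast_pos.2 (NeZero.pos n)
  have hmass : ∑ j, (sphericalSample x j ⬝ᵥ v) ^ 2 ≤ 2 * n := by
    have hle := (abs_le.1 (hcov v)).2
    rw [sub_one_quad, sampleCov_quad, hv, ← Finset.mul_sum, ← div_eq_inv_mul] at hle
    rw [← div_le_iff₀ hn]
    linarith
  simp only [mul_assoc, ← Finset.mul_sum]
  rw [inv_mul_le_iff₀ hn]
  refine (Finset.sum_le_sum fun j _ =>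
    sphericalSample_sq_mul_rayleigh_le h.ne_zero hη ht hD1 hv j).trans ?_
  simp only [Finset.sum_add_distrib, ← Finset.mul_sum, sum_ite_const_eq_mul_card, one_mul,
    Finset.filter_univ_mem]
  calc d * ((Finset.univ.filter fun j => x j ⬝ᵥ x j < d / 2).card : ℝ) +
        η * ∑ j, (sphericalSample x j ⬝ᵥ v) ^ 2 +
        2 * t * ((Finset.univ.filter fun j => 2 * (d : ℝ) < x j ⬝ᵥ x j).card +
          (largeRayleigh x D η).card) + 2 * truncatedMass t x v
    _ ≤ θ * n + η * (2 * n) + 2 * t * (θ * n + 4 / η ^ 2 * (5 * d + θ * n)) + 2 * (η * n) := by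
        refine add_le_add (add_le_add (add_le_add h.card_short_le ?_) ?_) ?_
        · exact mul_le_mul_of_nonneg_left hmass hη.le
        · exact mul_le_mul_of_nonneg_left (add_le_add h.card_long_le
            (card_largeRayleigh_le h hθ hη hDh hD hD1)) (by positivity)
        · exact mul_le_mul_of_nonneg_left (h.truncatedMass_le v hv) zero_le_two
    _ = _ := by
        field_simp
        ring

theorem TypicalSample.remainderBounded (h : TypicalSample x θ η t) (hθ : 0 ≤ θ) (hη : 0 < η)
    (ht : 0 ≤ t) (hcov : QuadBounded (sampleCov (sphericalSample x) - 1) 1) :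
    RemainderBounded x
      ((1 + 2 * t * (1 + 4 / η ^ 2)) * θ + 4 * η + 40 * t / η ^ 2 * (d / n)) := by
  intro D hDh hD β hβ v hv
  have hβ0 : 0 ≤ β := by simpa only [hv, mul_one] using (abs_nonneg _).trans (hβ v)
  rcases hβ0.eq_or_lt with rfl | hβpos
  · rw [mul_zero]
    refine Finset.sum_nonpos fun j _ => mul_nonpos_of_nonneg_of_nonpos (by positivity) ?_
    exact abs_rayleigh_le hβ (h.ne_zero j)
  · have hunit : QuadBounded (β⁻¹ • D) 1 := by
      simpa only [inv_mul_cancel₀ hβpos.ne'] using hβ.smul (inv_nonneg.2 hβ0)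
    have hscaled := sum_sphericalSample_sq_mul_rayleigh_le h hθ hη ht hcov
      (hDh.smul (IsSelfAdjoint.all _)) (by rw [Matrix.trace_smul, hD, smul_zero]) hunit hv
    simp only [rayleigh_smul, abs_mul, abs_of_pos (inv_pos.2 hβpos), mul_left_comm _ β⁻¹,
      ← Finset.mul_sum] at hscaled
    rwa [inv_mul_le_iff₀ hβpos, mul_comm β] at hscaled

end TypicalSample

/-! ### Gaussian tails -/

section GaussianTails

open scoped Topology

variable {ι : Type*} [Fintype ι] {a : ℝ}

lemma gaussianPDFReal_mul_exp_mul_sq (a x : ℝ) :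
    gaussianPDFReal 0 1 x * Real.exp (a * x ^ 2) =
      (√(2 * Real.pi))⁻¹ * Real.exp (-(1 / 2 - a) * x ^ 2) := by
  rw [gaussianPDFReal, mul_assoc, ← Real.exp_add, NNReal.coe_one, mul_one, mul_one, sub_zero]
  ring_nf

lemma integrable_exp_mul_sq (ha : a < 1 / 2) :
    Integrable (fun x => Real.exp (a * x ^ 2)) (gaussianReal 0 1) := by
  rw [gaussianReal_of_var_ne_zero 0 one_ne_zero, integrable_withDensity_iff_integrable_smul'
    (measurable_gaussianPDF _ _) (ae_of_all _ fun _ => gaussianPDF_lt_top)]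
  simp only [toReal_gaussianPDF, smul_eq_mul, gaussianPDFReal_mul_exp_mul_sq]
  exact (integrable_exp_neg_mul_sq (sub_pos.2 ha)).const_mul _

lemma integral_exp_mul_sq (ha : a < 1 / 2) :
    ∫ x, Real.exp (a * x ^ 2) ∂(gaussianReal 0 1) = √((1 - 2 * a)⁻¹) := by
  have hne : 1 - 2 * a ≠ 0 := by linarith
  rw [integral_gaussianReal_eq_integral_smul one_ne_zero]
  simp only [smul_eq_mul, gaussianPDFReal_mul_exp_mul_sq]
  rw [integral_const_mul, integral_gaussian, ← Real.sqrt_inv, ← Real.sqrt_mul (by positivity),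
    show 1 / 2 - a = (1 - 2 * a) / 2 by ring]
  congr 1
  field_simp

lemma exp_mul_dotProduct_self (a : ℝ) (x : ι → ℝ) :
    Real.exp (a * (x ⬝ᵥ x)) = ∏ i, Real.exp (a * x i ^ 2) := by
  simp only [← Real.exp_sum, dotProduct, Finset.mul_sum, sq]

lemma integrable_exp_mul_dotProduct_self (ha : a < 1 / 2) :
    Integrable (fun x : ι → ℝ => Real.exp (a * (x ⬝ᵥ x))) (stdNormal ι) := by
  simp only [exp_mul_dotProduct_self]
  exact Integrable.fintype_prod (f := fun _ (y : ℝ) => Real.exp (a * y ^ 2))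
    fun _ => integrable_exp_mul_sq ha

lemma integral_exp_mul_dotProduct_self (ha : a < 1 / 2) :
    ∫ x, Real.exp (a * (x ⬝ᵥ x)) ∂(stdNormal ι) = √((1 - 2 * a)⁻¹) ^ Fintype.card ι := by
  simp only [exp_mul_dotProduct_self]
  rw [integral_fintype_prod_eq_prod (f := fun _ (y : ℝ) => Real.exp (a * y ^ 2))]
  simp only [integral_exp_mul_sq ha, Finset.prod_const, Finset.card_univ]

lemma measure_le_mul_dotProduct_self_le (ha : a < 1 / 2) (c : ℝ) :
    stdNormal ι {x | c ≤ a * (x ⬝ᵥ x)} ≤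
      ENNReal.ofReal (√((1 - 2 * a)⁻¹) ^ Fintype.card ι * Real.exp (-c)) := by
  rw [← integral_exp_mul_dotProduct_self ha, Real.exp_neg, ← div_eq_mul_inv]
  simpa only [Real.exp_le_exp] using meas_ge_le_ofReal_integral_div
    (integrable_exp_mul_dotProduct_self ha) (fun _ => (Real.exp_pos _).le) (Real.exp_pos c)

lemma measure_dotProduct_self_lt_le (d : ℕ) :
    stdNormal (Fin d) {x | x ⬝ᵥ x < d / 2} ≤
      ENNReal.ofReal ((Real.exp (1 / 4) * √(1 / 2)) ^ d) := by
  refine (measure_mono fun x hx => ?_).trans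
    ((measure_le_mul_dotProduct_self_le (a := -(1 / 2)) (by norm_num) (-(d / 4))).trans_eq ?_)
  · simp only [Set.mem_ofPred_eq] at hx ⊢
    linarith
  · rw [Fintype.card_fin, neg_neg, mul_pow, ← Real.exp_nat_mul, mul_comm]
    ring_nf

lemma measure_lt_dotProduct_self_le (d : ℕ) :
    stdNormal (Fin d) {x | 2 * (d : ℝ) < x ⬝ᵥ x} ≤
      ENNReal.ofReal ((Real.exp (-(1 / 2)) * √2) ^ d) := by
  refine (measure_mono fun x hx => ?_).trans
    ((measure_le_mul_dotProduct_self_le (a := 1 / 4) (by norm_num) (d / 2)).trans_eq ?_)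
  · simp only [Set.mem_ofPred_eq] at hx ⊢
    linarith
  · rw [Fintype.card_fin, mul_pow, ← Real.exp_nat_mul, mul_comm,
      show (1 - 2 * (1 / 4) : ℝ)⁻¹ = 2 by norm_num]
    ring_nf

lemma exp_quarter_mul_sqrt_half_lt_one : Real.exp (1 / 4) * √(1 / 2) < 1 := by
  have hexp : Real.exp (1 / 4) ^ 4 < 4 := by
    rw [← Real.exp_nat_mul]
    norm_num
    linarith [Real.exp_one_lt_d9]
  have hsqrt : √(1 / 2 : ℝ) ^ 4 = 1 / 4 := by
    rw [show 4 = 2 * 2 from rfl, pow_mul, Real.sq_sqrt (by norm_num)]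
    norm_num
  rw [← pow_lt_one_iff_of_nonneg (by positivity) four_ne_zero, mul_pow, hsqrt]
  linarith

lemma exp_neg_half_mul_sqrt_two_lt_one : Real.exp (-(1 / 2)) * √2 < 1 := by
  rw [Real.exp_neg, inv_mul_lt_iff₀ (Real.exp_pos _), mul_one,
    Real.sqrt_lt' (Real.exp_pos _), ← Real.exp_nat_mul]
  norm_num
  linarith [Real.exp_one_gt_d9]

open scoped Classical in
lemma measure_pi_lt_card_le {α : Type*} [MeasurableSpace α] (μ : Measure α)
    [IsProbabilityMeasure μ] {p : α → Prop} (hp : MeasurableSet {y | p y}) {r : ℝ} (hr : 0 ≤ r)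
    (hμ : μ {y | p y} ≤ ENNReal.ofReal r) {c : ℝ} (hc : 0 < c) :
    Measure.pi (fun _ : ι => μ) {x | c < ((Finset.univ.filter fun j => p (x j)).card : ℝ)} ≤
      ENNReal.ofReal (Fintype.card ι * r / c) := by
  set count : (ι → α) → ENNReal := fun x => ∑ j, {y | p y}.indicator 1 (x j)
  have hmeas : ∀ j, Measurable fun x : ι → α => {y | p y}.indicator (1 : α → ENNReal) (x j) :=
    fun j => (measurable_one.indicator hp).comp (measurable_pi_apply j)
  have hcount : ∀ x, count x =
      ENNReal.ofReal ((Finset.univ.filter fun j => p (x j)).card : ℝ) := fun x => by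
    simp only [count, Set.indicator_apply, Set.mem_ofPred_eq, Pi.one_apply]
    rw [Finset.sum_boole, ENNReal.ofReal_natCast]
  have hlintegral : ∫⁻ x, count x ∂Measure.pi (fun _ : ι => μ) = Fintype.card ι * μ {y | p y} := by
    have heach : ∀ j, ∫⁻ x, {y | p y}.indicator (1 : α → ENNReal) (x j)
        ∂Measure.pi (fun _ : ι => μ) = μ {y | p y} := fun j => by
      rw [(measurePreserving_eval (fun _ : ι => μ) j).lintegral_comp (measurable_one.indicator hp),
        lintegral_indicator_one hp]
    rw [lintegral_finsetSum _ fun j _ => hmeas j]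
    simp only [heach, Finset.sum_const, Finset.card_univ, nsmul_eq_mul]
  calc Measure.pi (fun _ : ι => μ) {x | c < ((Finset.univ.filter fun j => p (x j)).card : ℝ)}
      ≤ Measure.pi (fun _ : ι => μ) {x | ENNReal.ofReal c ≤ count x} :=
        measure_mono fun x hx => (ENNReal.ofReal_le_ofReal hx.le).trans_eq (hcount x).symm
    _ ≤ Fintype.card ι * μ {y | p y} / ENNReal.ofReal c := by
        rw [← hlintegral]
        exact meas_ge_le_lintegral_div (Finset.measurable_sum _ fun j _ => hmeas j).aemeasurable
          (by simpa using hc) ENNReal.ofReal_ne_top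
    _ ≤ Fintype.card ι * ENNReal.ofReal r / ENNReal.ofReal c := by gcongr
    _ = ENNReal.ofReal (Fintype.card ι * r / c) := by
        rw [ENNReal.ofReal_div_of_pos hc, ENNReal.ofReal_mul' hr, ENNReal.ofReal_natCast]

@[fun_prop]
lemma measurable_dotProduct : Measurable fun p : (ι → ℝ) × (ι → ℝ) => p.1 ⬝ᵥ p.2 := by
  unfold dotProduct
  fun_prop

variable {n : ℕ → ℕ} {θ : ℝ}

lemma asympAlmostSurely_card_short_le (hn : Tendsto n atTop atTop) (hθ : 0 < θ) :
    AsympAlmostSurely (fun d => normalSample (n d) d) fun d x =>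
      d * ((Finset.univ.filter fun j => x j ⬝ᵥ x j < d / 2).card : ℝ) ≤ θ * n d := by
  have hlim := (tendsto_self_mul_const_pow_of_lt_one (by positivity)
    exp_quarter_mul_sqrt_half_lt_one).div_const θ
  rw [zero_div] at hlim
  refine .of_measure_le_ofReal hlim ?_
  filter_upwards [hn.eventually_gt_atTop 0, eventually_gt_atTop 0] with d hnd hd
  have : (0 : ℝ) < n d := Nat.cast_pos.2 hnd
  have hd : (0 : ℝ) < d := Nat.cast_pos.2 hd
  refine (measure_mono fun x hx => ?_).trans ((measure_pi_lt_card_le (ι := Fin (n d))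
    (stdNormal (Fin d)) (measurableSet_lt (by fun_prop) measurable_const) (by positivity)
    (measure_dotProduct_self_lt_le d) (c := θ * n d / d) (by positivity)).trans_eq ?_)
  · rw [Set.mem_ofPred_eq, div_lt_iff₀' hd]
    convert! not_le.1 hx
  · rw [Fintype.card_fin]
    field_simp

lemma asympAlmostSurely_card_long_le (hn : Tendsto n atTop atTop) (hθ : 0 < θ) :
    AsympAlmostSurely (fun d => normalSample (n d) d) fun d x =>
      ((Finset.univ.filter fun j => 2 * (d : ℝ) < x j ⬝ᵥ x j).card : ℝ) ≤ θ * n d := by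
  have hlim := (tendsto_pow_atTop_nhds_zero_of_lt_one (by positivity)
    exp_neg_half_mul_sqrt_two_lt_one).div_const θ
  rw [zero_div] at hlim
  refine .of_measure_le_ofReal hlim ?_
  filter_upwards [hn.eventually_gt_atTop 0] with d hnd
  have : (0 : ℝ) < n d := Nat.cast_pos.2 hnd
  refine (measure_mono fun x hx => ?_).trans ((measure_pi_lt_card_le (ι := Fin (n d))
    (stdNormal (Fin d)) (measurableSet_lt measurable_const (by fun_prop)) (by positivity)
    (measure_lt_dotProduct_self_le d) (c := θ * n d) (by positivity)).trans_eq ?_)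
  · convert! not_le.1 hx
  · rw [Fintype.card_fin]
    field_simp

lemma stdNormal_singleton_zero [Nonempty ι] : stdNormal ι {0} = 0 := by
  have : NullSingletonClass (gaussianReal 0 1) := nullSingletonClass_gaussianReal one_ne_zero
  rw [← Set.univ_pi_singleton, Measure.pi_pi]
  exact Finset.prod_eq_zero (Finset.mem_univ (Classical.arbitrary ι)) (by simp)

lemma ae_normalSample_ne_zero (n d : ℕ) [NeZero d] :
    ∀ᵐ x ∂(normalSample n d), ∀ j, x j ≠ 0 := by
  refine ae_all_iff.2 fun j => ?_
  have hne : ∀ᵐ y ∂(stdNormal (Fin d)), y ≠ 0 :=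
    compl_mem_ae_iff.2 stdNormal_singleton_zero
  exact (measurePreserving_eval (fun _ : Fin n => stdNormal (Fin d)) j).quasiMeasurePreserving.ae
    hne

lemma map_dotProduct_stdNormal (v : ι → ℝ) :
    (stdNormal ι).map (fun x => x ⬝ᵥ v) = gaussianReal 0 (v ⬝ᵥ v).toNNReal := by
  set V : EuclideanSpace ℝ ι := WithLp.toLp 2 v with hV
  have hcomp : (fun x => x ⬝ᵥ v) = innerSL ℝ V ∘ WithLp.toLp 2 := by
    ext x
    simp [hV, EuclideanSpace.inner_eq_star_dotProduct]
  have hnorm : ‖V‖ ^ 2 = v ⬝ᵥ v := by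
    simp [hV, EuclideanSpace.real_norm_sq_eq, dotProduct, ← sq]
  rw [hcomp, ← Measure.map_map (by fun_prop) (by fun_prop), map_pi_eq_stdGaussian,
    IsGaussian.map_eq_gaussianReal, variance_dual_stdGaussian, integral_strongDual_stdGaussian,
    innerSL_apply_norm, hnorm]

lemma lintegral_exp_dotProduct_sq_le {v : ι → ℝ} (hv : v ⬝ᵥ v ≤ 4) :
    ∫⁻ x, ENNReal.ofReal (Real.exp ((x ⬝ᵥ v) ^ 2 / 16)) ∂(stdNormal ι) ≤ 2 := by
  have hlaw : (stdNormal ι).map (fun x => x ⬝ᵥ v) =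
      (gaussianReal 0 1).map (fun y => √(v ⬝ᵥ v) * y) := by
    rw [map_dotProduct_stdNormal, gaussianReal_map_const_mul]
    congr 1
    · simp
    · ext
      simp [Real.sq_sqrt (dotProduct_self_nonneg v), dotProduct_self_nonneg v]
  calc ∫⁻ x, ENNReal.ofReal (Real.exp ((x ⬝ᵥ v) ^ 2 / 16)) ∂(stdNormal ι)
      = ∫⁻ y, ENNReal.ofReal (Real.exp ((√(v ⬝ᵥ v) * y) ^ 2 / 16)) ∂(gaussianReal 0 1) := by
        rw [← lintegral_map (f := fun y => ENNReal.ofReal (Real.exp (y ^ 2 / 16)))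
          (g := fun x => x ⬝ᵥ v) (by fun_prop) (by fun_prop), hlaw,
          lintegral_map (by fun_prop) (by fun_prop)]
    _ ≤ ∫⁻ y, ENNReal.ofReal (Real.exp (1 / 4 * y ^ 2)) ∂(gaussianReal 0 1) := by
        refine lintegral_mono fun y => ENNReal.ofReal_le_ofReal (Real.exp_le_exp.2 ?_)
        rw [mul_pow, Real.sq_sqrt (dotProduct_self_nonneg v)]
        nlinarith [sq_nonneg y]
    _ = ENNReal.ofReal √2 := by
        rw [← ofReal_integral_eq_lintegral_ofReal (integrable_exp_mul_sq (by norm_num))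
          (ae_of_all _ fun _ => (Real.exp_pos _).le), integral_exp_mul_sq (by norm_num)]
        norm_num
    _ ≤ 2 := by
        rw [← ENNReal.ofReal_ofNat]
        exact ENNReal.ofReal_le_ofReal (Real.sqrt_le_left zero_le_two |>.2 (by norm_num))

end GaussianTails

section TruncatedMass

open scoped Topology Pointwise

variable {n d : ℕ}

-- Each summand is convex and increasing in `|x j ⬝ᵥ v|`, which makes the sum midpoint convex.
lemma two_mul_truncatedMass_le (t : ℝ) (x : Fin n → Fin d → ℝ) (v u : Fin d → ℝ) :
    2 * truncatedMass t x v ≤ truncatedMass t x (v + u) + truncatedMass t x (v - u) := by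
  simp only [truncatedMass]
  rw [← Finset.sum_add_distrib, Finset.mul_sum]
  refine Finset.sum_le_sum fun j _ => ?_
  rw [dotProduct_add, dotProduct_sub]
  set p := x j ⬝ᵥ v
  set q := x j ⬝ᵥ u
  have hadd := le_max_left ((p + q) ^ 2 - t) 0
  have hsub := le_max_left ((p - q) ^ 2 - t) 0
  have hadd0 := le_max_right ((p + q) ^ 2 - t) 0
  have hsub0 := le_max_right ((p - q) ^ 2 - t) 0
  rcases max_cases (p ^ 2 - t) 0 with ⟨hmax, -⟩ | ⟨hmax, -⟩ <;> rw [hmax]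
  · nlinarith [sq_nonneg q]
  · linarith

/-- The exponential weight whose integral over a ball detects directions of large truncated mass. -/
noncomputable def massWeight (t : ℝ) (x : Fin n → Fin d → ℝ) (v : Fin d → ℝ) : ENNReal :=
  ENNReal.ofReal (Real.exp (truncatedMass t x v / 16))

lemma ofReal_exp_le_massWeight_add {t M : ℝ} {x : Fin n → Fin d → ℝ} {v : Fin d → ℝ}
    (hM : M ≤ truncatedMass t x v) (u : Fin d → ℝ) :
    ENNReal.ofReal (Real.exp (M / 16)) ≤ massWeight t x (v + u) + massWeight t x (v - u) := by
  have hmid := two_mul_truncatedMass_le t x v u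
  rcases le_total M (truncatedMass t x (v + u)) with h | h
  · exact (ENNReal.ofReal_le_ofReal (Real.exp_le_exp.2 (by linarith))).trans le_self_add
  · exact (ENNReal.ofReal_le_ofReal (Real.exp_le_exp.2 (by linarith))).trans le_add_self

lemma measurable_massWeight (t : ℝ) :
    Measurable fun p : (Fin n → Fin d → ℝ) × (Fin d → ℝ) => massWeight t p.1 p.2 := by
  unfold massWeight truncatedMass
  fun_prop

/-- The Euclidean ball of squared radius `r`. -/
def sqBall (ι : Type*) [Fintype ι] (r : ℝ) : Set (ι → ℝ) := {u | u ⬝ᵥ u < r}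

section SqBall

variable {ι : Type*} [Fintype ι]

lemma isOpen_sqBall (r : ℝ) : IsOpen (sqBall ι r) := by
  unfold sqBall dotProduct
  exact isOpen_lt (by fun_prop) (by fun_prop)

lemma volume_sqBall_four :
    volume (sqBall ι 4) = 2 ^ Fintype.card ι * volume (sqBall ι 1) := by
  have hscale : sqBall ι 4 = (2 : ℝ) • sqBall ι 1 := by
    ext v
    rw [Set.mem_smul_set_iff_inv_smul_mem₀ two_ne_zero]
    simp only [sqBall, Set.mem_ofPred_eq, smul_dotProduct, dotProduct_smul, smul_eq_mul]
    constructor <;> intro h <;> linarith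
  rw [hscale, Measure.addHaar_smul]
  simp

lemma volume_sqBall_one_ne_zero : volume (sqBall ι 1) ≠ 0 :=
  ((isOpen_sqBall 1).measure_pos volume ⟨0, by simp [sqBall]⟩).ne'

lemma volume_sqBall_one_ne_top : volume (sqBall ι 1) ≠ ⊤ := by
  refine ((measure_mono fun v hv => ?_).trans_lt
    (isCompact_closedBall (0 : ι → ℝ) 1).measure_lt_top).ne
  rw [mem_closedBall_zero_iff, pi_norm_le_iff_of_nonneg zero_le_one]
  intro i
  rw [Real.norm_eq_abs, ← sq_le_one_iff_abs_le_one, sq]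
  exact (Finset.single_le_sum (f := fun i => v i * v i) (fun i _ => mul_self_nonneg _)
    (Finset.mem_univ i)).trans (le_of_lt hv)

lemma add_mem_sqBall_four {v u : ι → ℝ} (hv : v ⬝ᵥ v = 1) (hu : u ∈ sqBall ι 1) :
    v + u ∈ sqBall ι 4 := by
  have hu : u ⬝ᵥ u < 1 := hu
  have hsub := dotProduct_self_nonneg (v - u)
  simp only [sqBall, Set.mem_ofPred_eq, add_dotProduct, sub_dotProduct, dotProduct_add,
    dotProduct_sub, dotProduct_comm u v] at hsub ⊢
  linarith

lemma sub_mem_sqBall_four {v u : ι → ℝ} (hv : v ⬝ᵥ v = 1) (hu : u ∈ sqBall ι 1) :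
    v - u ∈ sqBall ι 4 := by
  rw [sub_eq_add_neg]
  exact add_mem_sqBall_four hv (by simpa [sqBall] using hu)

end SqBall

lemma volume_mul_exp_le_lintegral_massWeight {t M : ℝ} {x : Fin n → Fin d → ℝ} {v : Fin d → ℝ}
    (hv : v ⬝ᵥ v = 1) (hM : M ≤ truncatedMass t x v) :
    volume (sqBall (Fin d) 1) * ENNReal.ofReal (Real.exp (M / 16)) ≤
      2 * ∫⁻ w in sqBall (Fin d) 4, massWeight t x w := by
  have hmeas : Measurable (massWeight t x) := (measurable_massWeight t).of_uncurry_left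
  have hball (r : ℝ) : MeasurableSet (sqBall (Fin d) r) := (isOpen_sqBall r).measurableSet
  calc volume (sqBall (Fin d) 1) * ENNReal.ofReal (Real.exp (M / 16))
      = ∫⁻ _ in sqBall (Fin d) 1, ENNReal.ofReal (Real.exp (M / 16)) := by
        rw [setLIntegral_const, mul_comm]
    _ ≤ ∫⁻ u in sqBall (Fin d) 1, (massWeight t x (v + u) + massWeight t x (v - u)) :=
        lintegral_mono fun u => ofReal_exp_le_massWeight_add hM u
    _ = (∫⁻ u in sqBall (Fin d) 1, massWeight t x (v + u)) +
          ∫⁻ u in sqBall (Fin d) 1, massWeight t x (v - u) :=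
        lintegral_add_left (hmeas.comp (measurable_const_add v)) _
    _ ≤ (∫⁻ w in sqBall (Fin d) 4, massWeight t x w) +
          ∫⁻ w in sqBall (Fin d) 4, massWeight t x w := by
        simp only [← lintegral_indicator (hball _)]
        refine add_le_add ?_ ?_
        · rw [← lintegral_add_left_eq_self ((sqBall (Fin d) 4).indicator _) v]
          refine lintegral_mono fun u => ?_
          by_cases hu : u ∈ sqBall (Fin d) 1
          · simp [hu, add_mem_sqBall_four hv hu]
          · simp [hu]
        · rw [← lintegral_sub_left_eq_self ((sqBall (Fin d) 4).indicator _) v]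
          refine lintegral_mono fun u => ?_
          by_cases hu : u ∈ sqBall (Fin d) 1
          · simp [hu, sub_mem_sqBall_four hv hu]
          · simp [hu]
    _ = 2 * ∫⁻ w in sqBall (Fin d) 4, massWeight t x w := (two_mul _).symm

lemma lintegral_exp_max_sub_le {ι : Type*} [Fintype ι] (t : ℝ) {v : ι → ℝ} (hv : v ⬝ᵥ v ≤ 4) :
    ∫⁻ y, ENNReal.ofReal (Real.exp (max ((y ⬝ᵥ v) ^ 2 - t) 0 / 16)) ∂(stdNormal ι) ≤
      ENNReal.ofReal (1 + 2 * Real.exp (-t / 16)) := by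
  have hpoint (y : ι → ℝ) : ENNReal.ofReal (Real.exp (max ((y ⬝ᵥ v) ^ 2 - t) 0 / 16)) ≤
      1 + ENNReal.ofReal (Real.exp (-t / 16)) *
        ENNReal.ofReal (Real.exp ((y ⬝ᵥ v) ^ 2 / 16)) := by
    rw [← ENNReal.ofReal_mul (Real.exp_pos _).le, ← Real.exp_add, ← ENNReal.ofReal_one,
      ← ENNReal.ofReal_add zero_le_one (Real.exp_pos _).le]
    refine ENNReal.ofReal_le_ofReal ?_
    rcases max_cases ((y ⬝ᵥ v) ^ 2 - t) 0 with ⟨hmax, -⟩ | ⟨hmax, -⟩ <;> rw [hmax]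
    · rw [← add_div, neg_add_eq_sub]
      linarith
    · simpa using (Real.exp_pos _).le
  refine (lintegral_mono hpoint).trans ?_
  rw [lintegral_add_left measurable_const, lintegral_const_mul _ (by fun_prop), lintegral_const,
    measure_univ, mul_one, ENNReal.ofReal_add zero_le_one (by positivity), ENNReal.ofReal_one,
    mul_comm 2, ENNReal.ofReal_mul (Real.exp_pos _).le, ENNReal.ofReal_ofNat]
  gcongr
  exact lintegral_exp_dotProduct_sq_le hv

lemma lintegral_massWeight_le (t : ℝ) {v : Fin d → ℝ} (hv : v ⬝ᵥ v ≤ 4) :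
    ∫⁻ x, massWeight t x v ∂(normalSample n d) ≤
      ENNReal.ofReal (1 + 2 * Real.exp (-t / 16)) ^ n := by
  set f : (Fin d → ℝ) → ENNReal :=
    fun y => ENNReal.ofReal (Real.exp (max ((y ⬝ᵥ v) ^ 2 - t) 0 / 16)) with hf
  have hmeas : Measurable f := by fun_prop
  have hprod (x : Fin n → Fin d → ℝ) : massWeight t x v = ∏ j, f (x j) := by
    rw [massWeight, truncatedMass, hf,
      ← ENNReal.ofReal_prod_of_nonneg fun _ _ => (Real.exp_pos _).le, ← Real.exp_sum,
      Finset.sum_div]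
  have hindep : iIndepFun (fun j (x : Fin n → Fin d → ℝ) => f (x j)) (normalSample n d) :=
    iIndepFun_pi (μ := fun _ : Fin n => stdNormal (Fin d)) (X := fun _ => f)
      fun _ => hmeas.aemeasurable
  simp only [hprod]
  rw [lintegral_prod_eq_prod_lintegral_of_indepFun Finset.univ _ hindep
    fun j => hmeas.comp (measurable_pi_apply j)]
  refine (Finset.prod_le_pow_card _ _ _ fun j _ => ?_).trans_eq (by rw [Finset.card_fin])
  rw [(measurePreserving_eval (fun _ : Fin n => stdNormal (Fin d)) j).lintegral_comp hmeas]
  exact lintegral_exp_max_sub_le t hv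

lemma measure_exists_le_truncatedMass_le (t M : ℝ) :
    normalSample n d {x | ∃ v, v ⬝ᵥ v = 1 ∧ M ≤ truncatedMass t x v} ≤
      ENNReal.ofReal (2 * 2 ^ d * (1 + 2 * Real.exp (-t / 16)) ^ n * Real.exp (-(M / 16))) := by
  set A := volume (sqBall (Fin d) 1) * ENNReal.ofReal (Real.exp (M / 16)) with hA
  have hA0 : A ≠ 0 := mul_ne_zero volume_sqBall_one_ne_zero (by simp [Real.exp_pos])
  have hAtop : A ≠ ⊤ := ENNReal.mul_ne_top volume_sqBall_one_ne_top ENNReal.ofReal_ne_top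
  have hmeas : Measurable fun x : Fin n → Fin d → ℝ =>
      ∫⁻ w in sqBall (Fin d) 4, massWeight t x w :=
    Measurable.lintegral_prod_right' (measurable_massWeight t)
  have hlintegral : ∫⁻ x, (∫⁻ w in sqBall (Fin d) 4, massWeight t x w) ∂(normalSample n d) ≤
      ENNReal.ofReal (1 + 2 * Real.exp (-t / 16)) ^ n * (2 ^ d * volume (sqBall (Fin d) 1)) := by
    rw [lintegral_lintegral_swap (measurable_massWeight t).aemeasurable]
    have hmono : ∫⁻ w in sqBall (Fin d) 4, ∫⁻ x, massWeight t x w ∂(normalSample n d) ≤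
        ∫⁻ _ in sqBall (Fin d) 4, ENNReal.ofReal (1 + 2 * Real.exp (-t / 16)) ^ n :=
      setLIntegral_mono measurable_const fun w (hw : w ⬝ᵥ w < 4) =>
        lintegral_massWeight_le t hw.le
    rw [setLIntegral_const, volume_sqBall_four, Fintype.card_fin] at hmono
    exact hmono
  calc normalSample n d {x | ∃ v, v ⬝ᵥ v = 1 ∧ M ≤ truncatedMass t x v}
      ≤ normalSample n d {x | A ≤ 2 * ∫⁻ w in sqBall (Fin d) 4, massWeight t x w} :=
        measure_mono fun x ⟨_, hv, hvM⟩ => volume_mul_exp_le_lintegral_massWeight hv hvM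
    _ ≤ (∫⁻ x, (2 * ∫⁻ w in sqBall (Fin d) 4, massWeight t x w) ∂(normalSample n d)) / A :=
        meas_ge_le_lintegral_div (hmeas.const_mul 2).aemeasurable hA0 hAtop
    _ ≤ _ := by
        rw [lintegral_const_mul _ hmeas]
        refine ENNReal.div_le_of_le_mul ((mul_le_mul_right hlintegral 2).trans_eq ?_)
        rw [hA, mul_comm (volume _) (ENNReal.ofReal _), ← mul_assoc (ENNReal.ofReal _),
          ← ENNReal.ofReal_mul (by positivity), mul_assoc (2 * 2 ^ d * _), ← Real.exp_add,
          neg_add_cancel, Real.exp_zero, mul_one, ENNReal.ofReal_mul (by positivity),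
          ENNReal.ofReal_mul zero_le_two, ENNReal.ofReal_pow zero_le_two,
          ENNReal.ofReal_pow (by positivity), ENNReal.ofReal_ofNat]
        ring

lemma exists_two_mul_exp_neg_le {c : ℝ} (hc : 0 < c) :
    ∃ t : ℝ, 0 ≤ t ∧ 2 * Real.exp (-t / 16) ≤ c := by
  have hlim : Tendsto (fun t : ℝ => 2 * Real.exp (-t / 16)) atTop (𝓝 0) := by
    have h := (Real.tendsto_exp_neg_atTop_nhds_zero.comp
      (tendsto_id.atTop_div_const (show (0 : ℝ) < 16 by norm_num))).const_mul 2
    simpa only [Function.comp_def, id, neg_div, mul_zero] using h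
  obtain ⟨t, hle, ht⟩ := ((hlim.eventually_le_const hc).and (eventually_ge_atTop 0)).exists
  exact ⟨t, ht, hle⟩

lemma asympAlmostSurely_truncatedMass_le {n : ℕ → ℕ} (hn : Tendsto n atTop atTop)
    (hdn : Tendsto (fun d : ℕ => (d : ℝ) / n d) atTop (𝓝 0)) {η t : ℝ} (hη : 0 < η)
    (ht : 2 * Real.exp (-t / 16) ≤ η / 64) :
    AsympAlmostSurely (fun d => normalSample (n d) d) fun d x =>
      ∀ v, v ⬝ᵥ v = 1 → truncatedMass t x v ≤ η * n d := by
  have hcast : Tendsto (fun d => (n d : ℝ)) atTop atTop := tendsto_natCast_atTop_atTop.comp hn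
  have hlim : Tendsto (fun d => 2 * Real.exp (-((n d : ℝ) * (η / 32)))) atTop (𝓝 0) := by
    simpa only [Function.comp_def, mul_zero] using (Real.tendsto_exp_neg_atTop_nhds_zero.comp
      (hcast.atTop_mul_const (show 0 < η / 32 by positivity))).const_mul 2
  refine .of_measure_le_ofReal hlim ?_
  filter_upwards [hdn.eventually_le_const (show 0 < η / 64 by positivity),
    hcast.eventually_gt_atTop 0] with d hd hnd
  have hpow : (2 : ℝ) ^ d ≤ Real.exp (n d * (η / 64)) :=
    calc (2 : ℝ) ^ d ≤ Real.exp 1 ^ d :=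
          pow_le_pow_left₀ zero_le_two (by linarith [Real.exp_one_gt_d9]) d
      _ = Real.exp d := by rw [← Real.exp_nat_mul, mul_one]
      _ ≤ _ := Real.exp_le_exp.2 (by rwa [div_le_iff₀ hnd, mul_comm] at hd)
  have hbase : (1 + 2 * Real.exp (-t / 16)) ^ n d ≤ Real.exp (n d * (η / 64)) := by
    rw [Real.exp_nat_mul]
    exact pow_le_pow_left₀ (by positivity) (by linarith [Real.add_one_le_exp (η / 64)]) _
  calc normalSample (n d) d {x | ¬ ∀ v, v ⬝ᵥ v = 1 → truncatedMass t x v ≤ η * n d}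
      ≤ normalSample (n d) d {x | ∃ v, v ⬝ᵥ v = 1 ∧ η * n d ≤ truncatedMass t x v} :=
        measure_mono fun x hx => by
          simp only [Set.mem_ofPred_eq] at hx ⊢
          push Not at hx
          exact hx.imp fun v hv => ⟨hv.1, hv.2.le⟩
    _ ≤ _ := measure_exists_le_truncatedMass_le t _
    _ ≤ ENNReal.ofReal (2 * Real.exp (n d * (η / 64)) * Real.exp (n d * (η / 64)) *
          Real.exp (-(η * n d / 16))) := by gcongr
    _ = ENNReal.ofReal (2 * Real.exp (-(n d * (η / 32)))) := by
        rw [mul_assoc, mul_assoc, ← Real.exp_add, ← Real.exp_add]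
        ring_nf

end TruncatedMass

/-! ### Polar decomposition of the normal distribution -/

section Polar

variable {E : Type*} [NormedAddCommGroup E] [InnerProductSpace ℝ E] [FiniteDimensional ℝ E]
  [MeasurableSpace E] [BorelSpace E]

/-- The characteristic function of the direction `y / ‖y‖` of a standard Gaussian vector `y`. -/
noncomputable def directionCharFun (ξ : E) : ℂ :=
  ∫ y : E, Complex.exp ((inner ℝ (‖y‖⁻¹ • y) ξ : ℝ) * Complex.I) ∂(stdGaussian E)

lemma directionCharFun_eq_of_norm_eq {ξ ζ : E} (h : ‖ξ‖ = ‖ζ‖) :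
    directionCharFun ξ = directionCharFun ζ := by
  set R := (ℝ ∙ (ζ - ξ))ᗮ.reflection
  have hR : R ζ = ξ := Submodule.reflection_sub h.symm
  rw [directionCharFun, ← stdGaussian_map (E := E) R,
    integral_map R.continuous.measurable.aemeasurable (by fun_prop)]
  refine integral_congr_ae (ae_of_all _ fun y => ?_)
  simp only [R.norm_map, ← map_smul, ← hR, R.inner_map_map]

lemma integrable_exp_ofReal_mul_I {Ω : Type*} [MeasurableSpace Ω] {μ : Measure Ω}
    [IsFiniteMeasure μ] {f : Ω → ℝ} (hf : Measurable f) :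
    Integrable (fun ω => Complex.exp ((f ω : ℂ) * Complex.I)) μ :=
  Integrable.of_bound (by fun_prop) 1
    (ae_of_all _ fun ω => (Complex.norm_exp_ofReal_mul_I (f ω)).le)

lemma integral_exp_inner_direction_left (ξ x : E) :
    ∫ y, Complex.exp ((inner ℝ ((‖x‖ * ‖y‖⁻¹) • y) ξ : ℝ) * Complex.I) ∂(stdGaussian E) =
      directionCharFun (‖ξ‖ • x) := by
  rw [← directionCharFun_eq_of_norm_eq (show ‖‖x‖ • ξ‖ = ‖‖ξ‖ • x‖ by simp [norm_smul, mul_comm]),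
    directionCharFun]
  simp only [mul_smul, real_inner_smul_left, real_inner_smul_right]

lemma integral_exp_inner_direction_right (ξ : E) {y : E} (hy : y ≠ 0) :
    ∫ x, Complex.exp ((inner ℝ (‖y‖⁻¹ • y) (‖ξ‖ • x) : ℝ) * Complex.I) ∂(stdGaussian E) =
      charFun (stdGaussian E) ξ := by
  have hnorm : ‖‖ξ‖ • ‖y‖⁻¹ • y‖ = ‖ξ‖ := by
    rw [norm_smul, norm_smul, norm_inv, norm_norm, norm_norm,
      inv_mul_cancel₀ (norm_ne_zero_iff.2 hy), mul_one]
  calc ∫ x, Complex.exp ((inner ℝ (‖y‖⁻¹ • y) (‖ξ‖ • x) : ℝ) * Complex.I) ∂(stdGaussian E)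
      = charFun (stdGaussian E) (‖ξ‖ • ‖y‖⁻¹ • y) := by
        simp only [charFun_apply, real_inner_smul_right, real_inner_comm,
          mul_left_comm]
    _ = charFun (stdGaussian E) ξ := by rw [charFun_stdGaussian, charFun_stdGaussian, hnorm]

lemma map_norm_mul_inv_norm_smul_stdGaussian (h0 : stdGaussian E {0} = 0) :
    ((stdGaussian E).prod (stdGaussian E)).map (fun p => (‖p.1‖ * ‖p.2‖⁻¹) • p.2) =
      stdGaussian E := by
  have hmeas : Measurable fun p : E × E => (‖p.1‖ * ‖p.2‖⁻¹) • p.2 := by fun_prop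
  have hne : ∀ᵐ y ∂(stdGaussian E), y ≠ 0 := by rw [ae_iff]; simpa using h0
  have := Measure.isProbabilityMeasure_map (μ := (stdGaussian E).prod (stdGaussian E))
    hmeas.aemeasurable
  refine Measure.ext_of_charFun (funext fun ξ => ?_)
  rw [charFun_apply, integral_map hmeas.aemeasurable (by fun_prop),
    integral_prod _ (integrable_exp_ofReal_mul_I (by fun_prop))]
  simp only [integral_exp_inner_direction_left, directionCharFun]
  rw [integral_integral_swap (integrable_exp_ofReal_mul_I
      (f := fun p : E × E => inner ℝ (‖p.2‖⁻¹ • p.2) (‖ξ‖ • p.1)) (by fun_prop)),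
    integral_congr_ae (hne.mono fun y hy => integral_exp_inner_direction_right ξ hy)]
  simp

end Polar

/-- The vectors with the lengths of the rows of `p.1` and the directions of the rows of `p.2`. -/
noncomputable def polarRecombine {n d : ℕ} (p : (Fin n → Fin d → ℝ) × (Fin n → Fin d → ℝ)) :
    Fin n → Fin d → ℝ :=
  fun j => (√(p.1 j ⬝ᵥ p.1 j) / √(p.2 j ⬝ᵥ p.2 j)) • p.2 j

@[fun_prop]
lemma measurable_polarRecombine {n d : ℕ} : Measurable (polarRecombine (n := n) (d := d)) := by
  unfold polarRecombine
  fun_prop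

lemma map_polar_stdNormal {ι : Type*} [Fintype ι] [Nonempty ι] :
    ((stdNormal ι).prod (stdNormal ι)).map
      (fun p => (√(p.1 ⬝ᵥ p.1) / √(p.2 ⬝ᵥ p.2)) • p.2) = stdNormal ι := by
  have hto : Measurable (WithLp.toLp 2 : (ι → ℝ) → EuclideanSpace ℝ ι) :=
    WithLp.measurable_toLp 2 _
  have hof : Measurable (WithLp.ofLp : EuclideanSpace ℝ ι → ι → ℝ) := WithLp.measurable_ofLp 2 _
  have hmap : (stdNormal ι).map (WithLp.toLp 2) = stdGaussian (EuclideanSpace ℝ ι) :=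
    map_pi_eq_stdGaussian
  have hzero : stdGaussian (EuclideanSpace ℝ ι) {0} = 0 := by
    have hpre : (WithLp.toLp 2 : (ι → ℝ) → EuclideanSpace ℝ ι) ⁻¹' {0} = {0} := by ext x; simp
    rw [← hmap, Measure.map_apply hto (measurableSet_singleton _), hpre, stdNormal_singleton_zero]
  have hnorm (x : ι → ℝ) : ‖(WithLp.toLp 2 x : EuclideanSpace ℝ ι)‖ = √(x ⬝ᵥ x) := by
    simp [EuclideanSpace.norm_eq, dotProduct, sq]
  have hfactor : (fun p : (ι → ℝ) × (ι → ℝ) => (√(p.1 ⬝ᵥ p.1) / √(p.2 ⬝ᵥ p.2)) • p.2) =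
      WithLp.ofLp ∘ (fun p : EuclideanSpace ℝ ι × EuclideanSpace ℝ ι =>
        (‖p.1‖ * ‖p.2‖⁻¹) • p.2) ∘ Prod.map (WithLp.toLp 2) (WithLp.toLp 2) := by
    ext p i
    simp [hnorm, div_eq_mul_inv]
  rw [hfactor, ← Measure.map_map hof (by fun_prop), ← Measure.map_map (by fun_prop) (by fun_prop),
    ← Measure.map_prod_map _ _ hto hto, hmap, map_norm_mul_inv_norm_smul_stdGaussian hzero, ← hmap,
    Measure.map_map hof hto]
  exact Measure.map_id

lemma map_polarRecombine_normalSample (n d : ℕ) [NeZero d] :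
    ((normalSample n d).prod (normalSample n d)).map polarRecombine = normalSample n d := by
  have hpairs := measurePreserving_arrowProdEquivProdArrow (Fin d → ℝ) (Fin d → ℝ) (Fin n)
    (fun _ => stdNormal (Fin d)) (fun _ => stdNormal (Fin d))
  have hmap := map_polar_stdNormal (ι := Fin d)
  have : IsProbabilityMeasure (((stdNormal (Fin d)).prod (stdNormal (Fin d))).map
      fun p => (√(p.1 ⬝ᵥ p.1) / √(p.2 ⬝ᵥ p.2)) • p.2) := by rw [hmap]; infer_instance
  rw [normalSample, ← hpairs.map_eq, Measure.map_map measurable_polarRecombine hpairs.measurable]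
  refine (Measure.pi_map_pi (μ := fun _ : Fin n => (stdNormal (Fin d)).prod (stdNormal (Fin d)))
    (f := fun _ p => (√(p.1 ⬝ᵥ p.1) / √(p.2 ⬝ᵥ p.2)) • p.2) fun _ => ?_).trans ?_
  · fun_prop
  · simp only [hmap]

/-! ### The spherical sample -/

section SphericalSample

open scoped Topology

variable {n d : ℕ}

lemma fluctuation_sampleCov_quad (x : Fin n → Fin d → ℝ) {v : Fin d → ℝ} (hv : v ⬝ᵥ v = 1) :
    v ⬝ᵥ fluctuation n (sampleCov x) *ᵥ v =
      √((n : ℝ) / d) * (∑ j, (n : ℝ)⁻¹ * (x j ⬝ᵥ v) ^ 2 - 1) := by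
  rw [fluctuation, smul_mulVec, dotProduct_smul, smul_eq_mul, sub_one_quad, sampleCov_quad, hv]

/-- The quadratic form at `v` of the fluctuation matrix of `polarRecombine (x, y)`, as a polynomial
in `x`. -/
noncomputable def polarQuadPoly (y : Fin n → Fin d → ℝ) (v : Fin d → ℝ) : SamplePoly n d :=
  √((n : ℝ) / d) • (∑ j, ∑ a, ((n : ℝ)⁻¹ * (sphericalSample y j ⬝ᵥ v) ^ 2 * (d : ℝ)⁻¹) •
    (MvPolynomial.X (j, a) * MvPolynomial.X (j, a)) - 1)

variable [NeZero d]

lemma evalSample_polarQuadPoly (x : Fin n → Fin d → ℝ) {y : Fin n → Fin d → ℝ}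
    (hy : ∀ j, y j ≠ 0) {v : Fin d → ℝ} (hv : v ⬝ᵥ v = 1) :
    evalSample x (polarQuadPoly y v) =
      v ⬝ᵥ fluctuation n (sampleCov (polarRecombine (x, y))) *ᵥ v := by
  have hd : (d : ℝ) ≠ 0 := NeZero.ne _
  rw [fluctuation_sampleCov_quad _ hv]
  simp only [polarQuadPoly, map_smul, map_sub, map_sum, map_mul, evalSample_X, map_one, smul_eq_mul]
  congr 2
  refine Finset.sum_congr rfl fun j _ => ?_
  have hpos := dotProduct_self_pos (hy j)
  rw [← Finset.mul_sum, ← dotProduct, sphericalSample_dotProduct_sq, polarRecombine,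
    smul_dotProduct, smul_eq_mul, mul_pow, div_pow, Real.sq_sqrt hpos.le,
    Real.sq_sqrt (dotProduct_self_nonneg _)]
  field_simp

lemma gaussianExpectation_polarQuadPoly (y : Fin n → Fin d → ℝ) {v : Fin d → ℝ}
    (hv : v ⬝ᵥ v = 1) :
    𝓔 (polarQuadPoly y v) = v ⬝ᵥ fluctuation n (sampleCov (sphericalSample y)) *ᵥ v := by
  have hd : (d : ℝ) ≠ 0 := NeZero.ne _
  rw [fluctuation_sampleCov_quad _ hv]
  simp only [polarQuadPoly, map_smul, map_sub, map_sum, gaussianExpectation_X_mul,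
    MvPolynomial.pderiv_X_self, gaussianExpectation_one, smul_eq_mul, mul_one, Finset.sum_const,
    Finset.card_univ, Fintype.card_fin, nsmul_eq_mul]
  congr 3 with j
  field_simp

lemma trace_fluctuation_pow_eq [NeZero n] (x : Fin n → Fin d → ℝ) (q : ℕ) :
    trace (fluctuation n (sampleCov x) ^ q) = d * evalSample x (normTrace n d q) := by
  rw [evalSample_normTrace, mul_inv_cancel_left₀ (NeZero.ne _)]

lemma lintegral_ofReal_trace_fluctuation_pow [NeZero n] (k : ℕ) :
    ∫⁻ x, ENNReal.ofReal (trace (fluctuation n (sampleCov x) ^ (2 * k))) ∂(normalSample n d) =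
      ENNReal.ofReal (d * traceMoment n d {2 * k}) := by
  have hnonneg (x : Fin n → Fin d → ℝ) : 0 ≤ d * evalSample x (normTrace n d (2 * k)) :=
    trace_fluctuation_pow_eq x _ ▸ trace_pow_two_mul_nonneg (isHermitian_fluctuation_sampleCov x) k
  simp only [trace_fluctuation_pow_eq]
  rw [traceMoment_singleton, ← integral_evalSample, ← integral_const_mul,
    ofReal_integral_eq_lintegral_ofReal ((integrable_evalSample _).const_mul _)
      (ae_of_all _ hnonneg)]

/-- Given the directions of the sample, averaging over the lengths replaces the sample by its
spherical version, so Jensen's inequality bounds the latter by the former. -/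
lemma ofReal_pow_quad_sphericalSample_le {y : Fin n → Fin d → ℝ} (hy : ∀ j, y j ≠ 0)
    {v : Fin d → ℝ} (hv : v ⬝ᵥ v = 1) (k : ℕ) :
    ENNReal.ofReal ((v ⬝ᵥ fluctuation n (sampleCov (sphericalSample y)) *ᵥ v) ^ (2 * k)) ≤
      ∫⁻ x, ENNReal.ofReal (trace (fluctuation n (sampleCov (polarRecombine (x, y))) ^ (2 * k)))
        ∂(normalSample n d) := by
  have hnonneg (x : Fin n → Fin d → ℝ) : 0 ≤ evalSample x (polarQuadPoly y v ^ (2 * k)) := by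
    rw [map_pow]; exact (even_two_mul k).pow_nonneg _
  calc ENNReal.ofReal ((v ⬝ᵥ fluctuation n (sampleCov (sphericalSample y)) *ᵥ v) ^ (2 * k))
      ≤ ENNReal.ofReal (𝓔 (polarQuadPoly y v ^ (2 * k))) := by
        rw [← gaussianExpectation_polarQuadPoly y hv]
        exact ENNReal.ofReal_le_ofReal (pow_gaussianExpectation_le _ (even_two_mul k))
    _ = ∫⁻ x, ENNReal.ofReal (evalSample x (polarQuadPoly y v ^ (2 * k))) ∂(normalSample n d) := by
        rw [← integral_evalSample,
          ofReal_integral_eq_lintegral_ofReal (integrable_evalSample _) (ae_of_all _ hnonneg)]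
    _ ≤ _ := by
        refine lintegral_mono fun x => ENNReal.ofReal_le_ofReal ?_
        rw [map_pow, evalSample_polarQuadPoly x hy hv]
        exact quad_pow_two_mul_le_trace (isHermitian_fluctuation_sampleCov _) hv k

variable [NeZero n]

lemma measurable_ofReal_trace_fluctuation_pow (k : ℕ) :
    Measurable fun x : Fin n → Fin d → ℝ =>
      ENNReal.ofReal (trace (fluctuation n (sampleCov x) ^ (2 * k))) := by
  simp only [trace_fluctuation_pow_eq]
  exact ((measurable_evalSample _).const_mul _).ennreal_ofReal

lemma measure_not_quadBounded_sphericalSample_le {s : ℝ} (hs : 0 < s) (k : ℕ) :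
    normalSample n d {y | ¬ QuadBounded (fluctuation n (sampleCov (sphericalSample y))) s} ≤
      ENNReal.ofReal (d * traceMoment n d {2 * k} / s ^ (2 * k)) := by
  set f : (Fin n → Fin d → ℝ) → ENNReal :=
    fun x => ENNReal.ofReal (trace (fluctuation n (sampleCov x) ^ (2 * k)))
  have hf : Measurable f := measurable_ofReal_trace_fluctuation_pow k
  have hpos : 0 < s ^ (2 * k) := by positivity
  have hmeas : Measurable fun y => ∫⁻ x, f (polarRecombine (x, y)) ∂(normalSample n d) :=
    (hf.comp (measurable_polarRecombine.comp measurable_swap)).lintegral_prod_right'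
  have hlintegral : ∫⁻ y, ∫⁻ x, f (polarRecombine (x, y)) ∂(normalSample n d) ∂(normalSample n d) =
      ENNReal.ofReal (d * traceMoment n d {2 * k}) := by
    rw [← lintegral_prod_symm' (fun q => f (polarRecombine q)) (hf.comp measurable_polarRecombine),
      ← lintegral_map hf measurable_polarRecombine, map_polarRecombine_normalSample,
      lintegral_ofReal_trace_fluctuation_pow]
  calc normalSample n d {y | ¬ QuadBounded (fluctuation n (sampleCov (sphericalSample y))) s}
      ≤ normalSample n d {y | ENNReal.ofReal (s ^ (2 * k)) ≤
          ∫⁻ x, f (polarRecombine (x, y)) ∂(normalSample n d)} := by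
        refine measure_mono_ae ((ae_normalSample_ne_zero n d).mono fun y hy hnot => ?_)
        obtain ⟨v, hv, hlt⟩ := exists_lt_abs_of_not_quadBounded
          (isHermitian_fluctuation_sampleCov (sphericalSample y)) hnot
        refine le_trans (ENNReal.ofReal_le_ofReal ?_) (ofReal_pow_quad_sphericalSample_le hy hv k)
        rw [← (even_two_mul k).pow_abs (v ⬝ᵥ _)]
        gcongr
    _ ≤ _ := by
        rw [ENNReal.ofReal_div_of_pos hpos, ← hlintegral]
        exact meas_ge_le_lintegral_div hmeas.aemeasurable (by simpa using hpos) (by simp)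

theorem asympAlmostSurely_quadBounded_sampleCov_sphericalSample {n : ℕ → ℕ}
    (hn : Tendsto n atTop atTop) (hdn : Tendsto (fun d : ℕ => (d : ℝ) / n d) atTop (𝓝 0))
    {τ : ℝ} (hτ : 0 < τ) :
    AsympAlmostSurely (fun d => normalSample (n d) d)
      fun d x => QuadBounded (fluctuation (n d) (sampleCov (sphericalSample x))) (2 + τ) := by
  obtain ⟨k, hk⟩ := exists_tendsto_mul_traceMoment_div hn hdn hτ
  refine .of_measure_le_ofReal hk ?_
  filter_upwards [hn.eventually_gt_atTop 0, eventually_gt_atTop 0] with d hnd hd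
  have : NeZero (n d) := ⟨hnd.ne'⟩
  have : NeZero d := ⟨hd.ne'⟩
  exact measure_not_quadBounded_sphericalSample_le (by positivity) (k d)

end SphericalSample

/-! ### Fourth moment of the Gram matrix -/

section GramMoment

open scoped Topology Nat
open MvPolynomial (pderiv)

variable {n d : ℕ}

lemma gaussianExpectation_mono {p q : SamplePoly n d}
    (h : ∀ x, evalSample x p ≤ evalSample x q) : 𝓔 p ≤ 𝓔 q := by
  rw [← integral_evalSample, ← integral_evalSample]
  exact integral_mono (integrable_evalSample p) (integrable_evalSample q) h

/-- The polynomial `p` does not involve the `j`-th vector of the sample. -/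
def RowFree (j : Fin n) (p : SamplePoly n d) : Prop := ∀ a, pderiv (j, a) p = 0

lemma RowFree.mul {j : Fin n} {p q : SamplePoly n d} (hp : RowFree j p) (hq : RowFree j q) :
    RowFree j (p * q) := fun a => by
  rw [MvPolynomial.pderiv_mul, hp a, hq a, zero_mul, mul_zero, add_zero]

lemma rowFree_one (j : Fin n) : RowFree j (1 : SamplePoly n d) := fun _ =>
  MvPolynomial.pderiv_one

lemma rowFree_X {i j : Fin n} (h : i ≠ j) (b : Fin d) :
    RowFree j (MvPolynomial.X (i, b) : SamplePoly n d) := fun _ =>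
  MvPolynomial.pderiv_X_of_ne (by simp [h])

lemma rowFree_sum {ι : Type*} {s : Finset ι} {j : Fin n} {p : ι → SamplePoly n d}
    (hp : ∀ i ∈ s, RowFree j (p i)) : RowFree j (∑ i ∈ s, p i) := fun a => by
  rw [map_sum]
  exact Finset.sum_eq_zero fun i hi => hp i hi a

lemma pderiv_X_same_row (j : Fin n) (a b : Fin d) :
    pderiv (j, a) (MvPolynomial.X (j, b) : SamplePoly n d) =
      MvPolynomial.C ((1 : Matrix (Fin d) (Fin d) ℝ) a b) := by
  rw [Matrix.one_apply]
  split_ifs with h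
  · simp [h]
  · simp [MvPolynomial.pderiv_X_of_ne (show (j, b) ≠ (j, a) by simp [Ne.symm h])]

section Contraction

/-- The entries of `centeredOuter (x i)` as polynomials in the sample. -/
noncomputable def centeredOuterPoly (i : Fin n) (a b : Fin d) : SamplePoly n d :=
  MvPolynomial.X (i, a) * MvPolynomial.X (i, b) -
    MvPolynomial.C ((1 : Matrix (Fin d) (Fin d) ℝ) a b)

/-- The value `outerKernel (x i) (x j)` as a polynomial in the sample. -/
noncomputable def outerKernelPoly (i j : Fin n) : SamplePoly n d :=
  ∑ a, ∑ b, centeredOuterPoly i a b * centeredOuterPoly j a b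

lemma evalSample_outerKernelPoly (x : Fin n → Fin d → ℝ) (i j : Fin n) :
    evalSample x (outerKernelPoly i j) = outerKernel (x i) (x j) := by
  rw [← sum_centeredOuter_mul]
  simp [outerKernelPoly, centeredOuterPoly, centeredOuter, vecMulVec_apply]

lemma centeredOuterPoly_comm (i : Fin n) (a b : Fin d) :
    centeredOuterPoly i a b = centeredOuterPoly i b a := by
  rw [centeredOuterPoly, centeredOuterPoly, mul_comm, Matrix.one_apply, Matrix.one_apply]
  simp only [eq_comm]

lemma outerKernelPoly_comm (i j : Fin n) :
    (outerKernelPoly i j : SamplePoly n d) = outerKernelPoly j i := by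
  simp only [outerKernelPoly, mul_comm]

lemma rowFree_centeredOuterPoly {i j : Fin n} (h : i ≠ j) (b c : Fin d) :
    RowFree j (centeredOuterPoly i b c) := fun a => by
  rw [centeredOuterPoly, map_sub, (rowFree_X h b).mul (rowFree_X h c) a, MvPolynomial.pderiv_C,
    sub_zero]

lemma rowFree_outerKernelPoly {i l j : Fin n} (hi : i ≠ j) (hl : l ≠ j) :
    RowFree j (outerKernelPoly i l : SamplePoly n d) :=
  rowFree_sum fun b _ => rowFree_sum fun c _ =>
    (rowFree_centeredOuterPoly hi b c).mul (rowFree_centeredOuterPoly hl b c)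

variable {j : Fin n} {p : SamplePoly n d}

lemma gaussianExpectation_X_mul_X_mul (hp : RowFree j p) (a b : Fin d) :
    𝓔 (MvPolynomial.X (j, a) * (MvPolynomial.X (j, b) * p)) =
      (1 : Matrix (Fin d) (Fin d) ℝ) a b * 𝓔 p := by
  rw [gaussianExpectation_X_mul, MvPolynomial.pderiv_mul, hp a, pderiv_X_same_row, mul_zero,
    add_zero, gaussianExpectation_C_mul]

lemma gaussianExpectation_centeredOuterPoly_mul (hp : RowFree j p) (a b : Fin d) :
    𝓔 (centeredOuterPoly j a b * p) = 0 := by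
  rw [centeredOuterPoly, sub_mul, map_sub, mul_assoc, gaussianExpectation_X_mul_X_mul hp,
    gaussianExpectation_C_mul, sub_self]

lemma gaussianExpectation_centeredOuterPoly_mul_mul (hp : RowFree j p) (a b c e : Fin d) :
    𝓔 (centeredOuterPoly j a b * (centeredOuterPoly j c e * p)) =
      ((1 : Matrix (Fin d) (Fin d) ℝ) a c * (1 : Matrix (Fin d) (Fin d) ℝ) b e +
        (1 : Matrix (Fin d) (Fin d) ℝ) a e * (1 : Matrix (Fin d) (Fin d) ℝ) b c) * 𝓔 p := by
  set δ : Fin d → Fin d → ℝ := (1 : Matrix (Fin d) (Fin d) ℝ) with hδ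
  have hderiv : pderiv (j, a) (centeredOuterPoly j c e * p) =
      (MvPolynomial.C (δ a c) * MvPolynomial.X (j, e) +
        MvPolynomial.X (j, c) * MvPolynomial.C (δ a e)) * p := by
    rw [MvPolynomial.pderiv_mul, hp a, mul_zero, add_zero, centeredOuterPoly, map_sub,
      MvPolynomial.pderiv_mul, pderiv_X_same_row, pderiv_X_same_row, MvPolynomial.pderiv_C,
      sub_zero]
  calc 𝓔 (centeredOuterPoly j a b * (centeredOuterPoly j c e * p))
      = 𝓔 (MvPolynomial.X (j, a) * (MvPolynomial.X (j, b) * (centeredOuterPoly j c e * p))) := by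
        rw [centeredOuterPoly, sub_mul, map_sub, gaussianExpectation_C_mul,
          gaussianExpectation_centeredOuterPoly_mul hp, mul_zero, sub_zero, mul_assoc]
    _ = 𝓔 (MvPolynomial.X (j, b) * pderiv (j, a) (centeredOuterPoly j c e * p)) := by
        rw [gaussianExpectation_X_mul, MvPolynomial.pderiv_mul, pderiv_X_same_row, map_add,
          gaussianExpectation_C_mul, gaussianExpectation_centeredOuterPoly_mul hp, mul_zero,
          zero_add]
    _ = 𝓔 (MvPolynomial.C (δ a c) * (MvPolynomial.X (j, b) * (MvPolynomial.X (j, e) * p)) +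
          MvPolynomial.C (δ a e) * (MvPolynomial.X (j, b) * (MvPolynomial.X (j, c) * p))) := by
        rw [hderiv]; ring_nf
    _ = (δ a c * δ b e + δ a e * δ b c) * 𝓔 p := by
        rw [map_add, gaussianExpectation_C_mul, gaussianExpectation_C_mul,
          gaussianExpectation_X_mul_X_mul hp, gaussianExpectation_X_mul_X_mul hp, ← hδ]
        ring

lemma gaussianExpectation_outerKernelPoly_mul_mul {i l : Fin n} (hi : i ≠ j) (hl : l ≠ j)
    (hp : RowFree j p) :
    𝓔 (outerKernelPoly i j * outerKernelPoly j l * p) = 2 * 𝓔 (outerKernelPoly i l * p) := by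
  have hexpand : outerKernelPoly i j * outerKernelPoly j l * p = ∑ a, ∑ b, ∑ c, ∑ e,
      centeredOuterPoly j c e * (centeredOuterPoly j a b *
        (centeredOuterPoly i c e * centeredOuterPoly l a b * p)) := by
    simp only [outerKernelPoly, Finset.sum_mul, Finset.mul_sum]
    refine Finset.sum_congr rfl fun a _ => Finset.sum_congr rfl fun b _ =>
      Finset.sum_congr rfl fun c _ => Finset.sum_congr rfl fun e _ => ?_
    ring
  have hterm (a b c e : Fin d) :
      𝓔 (centeredOuterPoly j c e * (centeredOuterPoly j a b *
        (centeredOuterPoly i c e * centeredOuterPoly l a b * p))) =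
      (if a = c then (if b = e then
        𝓔 (centeredOuterPoly i c e * centeredOuterPoly l a b * p) else 0) else 0) +
      (if b = c then (if a = e then
        𝓔 (centeredOuterPoly i e c * centeredOuterPoly l a b * p) else 0) else 0) := by
    rw [centeredOuterPoly_comm i e, gaussianExpectation_centeredOuterPoly_mul_mul
      (((rowFree_centeredOuterPoly hi c e).mul (rowFree_centeredOuterPoly hl a b)).mul hp)]
    simp only [Matrix.one_apply, eq_comm (a := c), eq_comm (a := e)]
    split_ifs <;> ring
  rw [hexpand]
  simp only [map_sum, hterm, Finset.sum_add_distrib, Finset.sum_ite_irrel, Finset.sum_ite_eq,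
    Finset.sum_const_zero, Finset.mem_univ, if_true]
  simp only [outerKernelPoly, Finset.sum_mul, map_sum, two_mul]

end Contraction

section Moments

/-- The inner product `x i ⬝ᵥ x j` as a polynomial in the sample. -/
noncomputable def dotPoly (i j : Fin n) : SamplePoly n d :=
  ∑ a, MvPolynomial.X (i, a) * MvPolynomial.X (j, a)

lemma evalSample_dotPoly (x : Fin n → Fin d → ℝ) (i j : Fin n) :
    evalSample x (dotPoly i j) = x i ⬝ᵥ x j := by
  simp [dotPoly, dotProduct]

lemma rowFree_dotPoly_self {i j : Fin n} (h : j ≠ i) : RowFree i (dotPoly j j : SamplePoly n d) :=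
  rowFree_sum fun a _ => (rowFree_X h a).mul (rowFree_X h a)

lemma pderiv_dotPoly {i j : Fin n} (h : j ≠ i) (a : Fin d) :
    pderiv (i, a) (dotPoly i j) = MvPolynomial.X (j, a) := by
  simp only [dotPoly, map_sum, MvPolynomial.pderiv_mul, pderiv_X_same_row, rowFree_X h _ a]
  simp [Matrix.one_apply]

lemma gaussianExpectation_dotPoly_pow_add_two_mul {i j : Fin n} (h : j ≠ i) (m : ℕ)
    {r : SamplePoly n d} (hr : RowFree i r) :
    𝓔 (dotPoly i j ^ (m + 2) * r) = (m + 1) * 𝓔 (dotPoly i j ^ m * (dotPoly j j * r)) := by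
  have hterm (a : Fin d) : 𝓔 (MvPolynomial.X (i, a) *
      (MvPolynomial.X (j, a) * (dotPoly i j ^ (m + 1) * r))) =
      (m + 1) * 𝓔 (MvPolynomial.X (j, a) * MvPolynomial.X (j, a) * (dotPoly i j ^ m * r)) := by
    rw [gaussianExpectation_X_mul, MvPolynomial.pderiv_mul, rowFree_X h a a, zero_mul, zero_add,
      MvPolynomial.pderiv_mul, hr a, mul_zero, add_zero, MvPolynomial.pderiv_pow, pderiv_dotPoly h,
      ← gaussianExpectation_C_mul]
    congr 1
    simp only [Nat.add_sub_cancel, Nat.cast_add, Nat.cast_one, map_add, map_natCast, map_one]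
    ring
  calc 𝓔 (dotPoly i j ^ (m + 2) * r)
      = 𝓔 (dotPoly i j * (dotPoly i j ^ (m + 1) * r)) := by ring_nf
    _ = ∑ a, (m + 1) * 𝓔 (MvPolynomial.X (j, a) * MvPolynomial.X (j, a) *
          (dotPoly i j ^ m * r)) := by
        simp only [← hterm]
        generalize dotPoly i j ^ (m + 1) * r = q
        simp only [dotPoly, Finset.sum_mul, map_sum, mul_assoc]
    _ = (m + 1) * 𝓔 (dotPoly j j * (dotPoly i j ^ m * r)) := by
        rw [dotPoly.eq_1 j j, Finset.sum_mul, map_sum, Finset.mul_sum]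
    _ = (m + 1) * 𝓔 (dotPoly i j ^ m * (dotPoly j j * r)) := by rw [mul_left_comm]

lemma gaussianExpectation_dotPoly_pow_two_mul_mul {i j : Fin n} (h : j ≠ i) (m : ℕ)
    {r : SamplePoly n d} (hr : RowFree i r) :
    𝓔 (dotPoly i j ^ (2 * m) * r) = (2 * m - 1)‼ * 𝓔 (dotPoly j j ^ m * r) := by
  induction m generalizing r with
  | zero => simp
  | succ m ih =>
    rw [mul_add, mul_one, gaussianExpectation_dotPoly_pow_add_two_mul h _ hr,
      ih ((rowFree_dotPoly_self h).mul hr), Nat.add_succ_sub_one, Nat.doubleFactorial_add_one,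
      pow_succ, mul_assoc (dotPoly j j ^ m)]
    push_cast
    ring

lemma gaussianExpectation_X_pow_two_mul (i : Fin n × Fin d) (m : ℕ) :
    𝓔 (MvPolynomial.X i ^ (2 * m) : SamplePoly n d) = (2 * m - 1)‼ := by
  induction m with
  | zero => simp [gaussianExpectation_one]
  | succ m ih =>
    rw [mul_add, mul_one, pow_succ', gaussianExpectation_X_mul, MvPolynomial.pderiv_pow,
      MvPolynomial.pderiv_X_self, mul_one, Nat.add_sub_cancel, ← map_natCast MvPolynomial.C,
      gaussianExpectation_C_mul, ih, Nat.add_succ_sub_one, Nat.doubleFactorial_add_one]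
    push_cast
    ring

lemma gaussianExpectation_dotPoly_self_pow_le (j : Fin n) (m : ℕ) :
    𝓔 (dotPoly j j ^ (m + 1) : SamplePoly n d) ≤ (2 * (m + 1) - 1)‼ * (d : ℝ) ^ (m + 1) := by
  have hpower (x : Fin n → Fin d → ℝ) : evalSample x (dotPoly j j ^ (m + 1)) ≤ evalSample x
      (MvPolynomial.C ((d : ℝ) ^ m) * ∑ a, MvPolynomial.X (j, a) ^ (2 * (m + 1))) := by
    rw [map_pow, evalSample_dotPoly, dotProduct]
    simp only [map_mul, map_sum, map_pow, evalSample_X, evalSample_C, pow_mul, ← sq]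
    simpa using pow_sum_le_card_mul_sum_pow
      (s := Finset.univ) (f := fun a => x j a ^ 2) (fun a _ => sq_nonneg _) m
  refine (gaussianExpectation_mono hpower).trans_eq ?_
  rw [gaussianExpectation_C_mul, map_sum]
  simp only [gaussianExpectation_X_pow_two_mul, Finset.sum_const, Finset.card_univ,
    Fintype.card_fin, nsmul_eq_mul]
  ring

lemma gaussianExpectation_outerKernelPoly_self_le (i : Fin n) [NeZero d] :
    𝓔 (outerKernelPoly i i : SamplePoly n d) ≤ 4 * (d : ℝ) ^ 2 := by
  have hone : (1 : ℝ) ≤ d := by exact_mod_cast NeZero.one_le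
  have hmono : 𝓔 (outerKernelPoly i i : SamplePoly n d) ≤
      𝓔 (dotPoly i i ^ 2 + MvPolynomial.C (d : ℝ) : SamplePoly n d) :=
    gaussianExpectation_mono fun x => by
      rw [evalSample_outerKernelPoly, map_add, map_pow, evalSample_dotPoly, evalSample_C,
        outerKernel]
      linarith [dotProduct_self_nonneg (x i)]
  have hsq := gaussianExpectation_dotPoly_self_pow_le (d := d) i 1
  rw [map_add, gaussianExpectation_C] at hmono
  norm_num [Nat.doubleFactorial] at hsq
  nlinarith

lemma outerKernel_pow_four_le (u v : Fin d → ℝ) :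
    outerKernel u v ^ 4 ≤
      64 * ((u ⬝ᵥ v) ^ 8 + (u ⬝ᵥ u) ^ 4 + (v ⬝ᵥ v) ^ 4 + (d : ℝ) ^ 4) := by
  have heven : Even 4 := by decide
  have hleft := heven.add_pow_le (a := (u ⬝ᵥ v) ^ 2) (b := -(u ⬝ᵥ u))
  have hright := heven.add_pow_le (a := (d : ℝ)) (b := -(v ⬝ᵥ v))
  have hsum := heven.add_pow_le (a := (u ⬝ᵥ v) ^ 2 + -(u ⬝ᵥ u)) (b := d + -(v ⬝ᵥ v))
  rw [heven.neg_pow] at hleft hright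
  calc outerKernel u v ^ 4
      = ((u ⬝ᵥ v) ^ 2 + -(u ⬝ᵥ u) + (d + -(v ⬝ᵥ v))) ^ 4 := by rw [outerKernel]; ring
    _ ≤ _ := by norm_num [← pow_mul] at hleft hright hsum ⊢; linarith

lemma gaussianExpectation_outerKernelPoly_pow_four_le {i j : Fin n} (h : i ≠ j) :
    𝓔 (outerKernelPoly i j ^ 4 : SamplePoly n d) ≤ 719104 * (d : ℝ) ^ 4 := by
  have hmono : 𝓔 (outerKernelPoly i j ^ 4 : SamplePoly n d) ≤ 𝓔 (MvPolynomial.C 64 *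
      (dotPoly i j ^ (2 * 4) * 1 + dotPoly i i ^ 4 + dotPoly j j ^ 4 +
        MvPolynomial.C ((d : ℝ) ^ 4)) : SamplePoly n d) :=
    gaussianExpectation_mono fun x => by
      simpa [evalSample_outerKernelPoly, evalSample_dotPoly] using
        outerKernel_pow_four_le (x i) (x j)
  have hi := gaussianExpectation_dotPoly_self_pow_le (d := d) i 3
  have hj := gaussianExpectation_dotPoly_self_pow_le (d := d) j 3
  rw [gaussianExpectation_C_mul, map_add, map_add, map_add, gaussianExpectation_C,
    gaussianExpectation_dotPoly_pow_two_mul_mul h.symm 4 (rowFree_one i), mul_one] at hmono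
  norm_num [Nat.doubleFactorial] at hi hj hmono
  linarith

end Moments

section Trace

/-- `offDiagGram` with entries polynomials in the sample. -/
noncomputable def offDiagGramPoly (n d : ℕ) : Matrix (Fin n) (Fin n) (SamplePoly n d) :=
  Matrix.of fun i j => if i = j then 0 else outerKernelPoly i j

local notation "𝐊" => offDiagGramPoly n d

lemma map_evalSample_offDiagGramPoly (x : Fin n → Fin d → ℝ) :
    𝐊.map (evalSample x) = offDiagGram x := by
  ext i j
  simp only [offDiagGramPoly, offDiagGram, Matrix.map_apply, of_apply, apply_ite (evalSample x),
    map_zero, evalSample_outerKernelPoly]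

lemma evalSample_trace_offDiagGramPoly_pow (x : Fin n → Fin d → ℝ) (q : ℕ) :
    evalSample x (trace (𝐊 ^ q)) = trace (offDiagGram x ^ q) := by
  rw [← map_evalSample_offDiagGramPoly, ← AlgHom.mapMatrix_apply, ← map_pow]
  exact AddMonoidHom.map_trace (evalSample x : SamplePoly n d →+ ℝ) _

lemma offDiagGramPoly_comm (i j : Fin n) : 𝐊 i j = 𝐊 j i := by
  simp only [offDiagGramPoly, of_apply, eq_comm (a := i), outerKernelPoly_comm i]

lemma gaussianExpectation_offDiagGramPoly_pow_four_le (i j : Fin n) :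
    𝓔 (𝐊 i j ^ 4) ≤ 719104 * (d : ℝ) ^ 4 := by
  rw [offDiagGramPoly, of_apply]
  split_ifs with h
  · rw [zero_pow four_ne_zero, map_zero]
    positivity
  · exact gaussianExpectation_outerKernelPoly_pow_four_le h

lemma gaussianExpectation_offDiagGramPoly_cycle_le (i j l m : Fin n) :
    𝓔 (𝐊 i j * 𝐊 j l * (𝐊 i m * 𝐊 m l)) ≤ 719104 * (d : ℝ) ^ 4 := by
  have hamgm (a b c e : ℝ) : a * b * (c * e) ≤ 1 / 4 * (a ^ 4 + b ^ 4 + c ^ 4 + e ^ 4) := by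
    nlinarith [sq_nonneg (a * b - c * e), sq_nonneg (a ^ 2 - b ^ 2), sq_nonneg (c ^ 2 - e ^ 2)]
  have hmono : 𝓔 (𝐊 i j * 𝐊 j l * (𝐊 i m * 𝐊 m l)) ≤
      𝓔 (MvPolynomial.C (1 / 4) * (𝐊 i j ^ 4 + 𝐊 j l ^ 4 + 𝐊 i m ^ 4 + 𝐊 m l ^ 4)) :=
    gaussianExpectation_mono fun x => by
      simp only [map_mul, map_add, map_pow, evalSample_C]
      exact hamgm ..
  rw [gaussianExpectation_C_mul, map_add, map_add, map_add] at hmono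
  linarith [gaussianExpectation_offDiagGramPoly_pow_four_le (d := d) i j,
    gaussianExpectation_offDiagGramPoly_pow_four_le (d := d) j l,
    gaussianExpectation_offDiagGramPoly_pow_four_le (d := d) i m,
    gaussianExpectation_offDiagGramPoly_pow_four_le (d := d) m l]

lemma gaussianExpectation_offDiagGramPoly_cycle_le_of_ne [NeZero d] {i j l m : Fin n}
    (hil : i ≠ l) (hjm : j ≠ m) :
    𝓔 (𝐊 i j * 𝐊 j l * (𝐊 i m * 𝐊 m l)) ≤ 32 * (d : ℝ) ^ 2 := by
  by_cases hij : i = j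
  · simp [offDiagGramPoly, hij]
  by_cases hjl : j = l
  · simp [offDiagGramPoly, hjl]
  by_cases him : i = m
  · simp [offDiagGramPoly, him]
  by_cases hml : m = l
  · simp [offDiagGramPoly, hml]
  simp only [offDiagGramPoly, of_apply, hij, hjl, him, hml, if_false]
  calc 𝓔 (outerKernelPoly i j * outerKernelPoly j l *
        (outerKernelPoly i m * outerKernelPoly m l) : SamplePoly n d)
      = 2 * 𝓔 (outerKernelPoly i m * outerKernelPoly m l * outerKernelPoly i l :
          SamplePoly n d) := by
        rw [gaussianExpectation_outerKernelPoly_mul_mul hij (Ne.symm hjl)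
          ((rowFree_outerKernelPoly hij hjm.symm).mul
            (rowFree_outerKernelPoly hjm.symm (Ne.symm hjl))), mul_comm (outerKernelPoly i l)]
    _ = 4 * 𝓔 (outerKernelPoly i l * outerKernelPoly l i * 1 : SamplePoly n d) := by
        rw [gaussianExpectation_outerKernelPoly_mul_mul him (Ne.symm hml)
          (rowFree_outerKernelPoly him (Ne.symm hml)), outerKernelPoly_comm l i, mul_one]
        ring
    _ = 8 * 𝓔 (outerKernelPoly i i : SamplePoly n d) := by
        rw [gaussianExpectation_outerKernelPoly_mul_mul hil hil (rowFree_one l), mul_one]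
        ring
    _ ≤ 32 * (d : ℝ) ^ 2 := by linarith [gaussianExpectation_outerKernelPoly_self_le (d := d) i]

lemma trace_offDiagGramPoly_pow_four :
    trace (𝐊 ^ 4) = ∑ i, ∑ l, ∑ j, ∑ m, 𝐊 i j * 𝐊 j l * (𝐊 i m * 𝐊 m l) := by
  have hsymm (i l : Fin n) : (𝐊 ^ 2) l i = (𝐊 ^ 2) i l := by
    simp only [sq, Matrix.mul_apply, offDiagGramPoly_comm l, offDiagGramPoly_comm _ i, mul_comm]
  rw [show 4 = 2 + 2 from rfl, pow_add, Matrix.trace]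
  simp only [diag_apply, Matrix.mul_apply (M := 𝐊 ^ 2), hsymm]
  simp only [sq, Matrix.mul_apply, Finset.sum_mul_sum]

theorem gaussianExpectation_trace_offDiagGramPoly_pow_four_le [NeZero d] :
    𝓔 (trace (𝐊 ^ 4)) ≤
      32 * (n : ℝ) ^ 4 * (d : ℝ) ^ 2 + 1438208 * (n : ℝ) ^ 3 * (d : ℝ) ^ 4 := by
  set c := 719104 * (d : ℝ) ^ 4 with hc
  have hc0 : 0 ≤ c := by positivity
  have hterm (i l j m : Fin n) : 𝓔 (𝐊 i j * 𝐊 j l * (𝐊 i m * 𝐊 m l)) ≤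
      32 * (d : ℝ) ^ 2 + (if i = l then c else 0) + (if j = m then c else 0) := by
    have hcycle := gaussianExpectation_offDiagGramPoly_cycle_le (d := d) i j l m
    have : 0 ≤ 32 * (d : ℝ) ^ 2 := by positivity
    split_ifs with hil hjm hjm
    · linarith
    · linarith
    · linarith
    · linarith [gaussianExpectation_offDiagGramPoly_cycle_le_of_ne (d := d) hil hjm]
  rw [trace_offDiagGramPoly_pow_four]
  simp only [map_sum]
  refine (Finset.sum_le_sum fun i _ => Finset.sum_le_sum fun l _ => Finset.sum_le_sum fun j _ =>
    Finset.sum_le_sum fun m _ => hterm i l j m).trans_eq ?_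
  simp only [Finset.sum_add_distrib, Finset.sum_const, Finset.card_univ, Fintype.card_fin,
    nsmul_eq_mul, ← Finset.mul_sum, Finset.sum_ite_eq, Finset.mem_univ, if_true]
  rw [hc]
  ring

end Trace

theorem asympAlmostSurely_trace_offDiagGram_le {n : ℕ → ℕ} (hn : Tendsto n atTop atTop) {θ : ℝ}
    (hθ : 0 < θ) :
    AsympAlmostSurely (fun d => normalSample (n d) d) fun d x =>
      trace (offDiagGram x ^ 4) ≤ (θ * n d * d) ^ 4 := by
  have hn_inv : Tendsto (fun d => (n d : ℝ)⁻¹) atTop (𝓝 0) :=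
    tendsto_inv_atTop_zero.comp (tendsto_natCast_atTop_atTop.comp hn)
  have hd_inv : Tendsto (fun d : ℕ => (d : ℝ)⁻¹) atTop (𝓝 0) :=
    tendsto_inv_atTop_zero.comp tendsto_natCast_atTop_atTop
  have hlim : Tendsto (fun d : ℕ => 32 / θ ^ 4 * ((d : ℝ)⁻¹) ^ 2 +
      1438208 / θ ^ 4 * (n d : ℝ)⁻¹) atTop (𝓝 0) := by
    simpa using ((hd_inv.pow 2).const_mul (32 / θ ^ 4)).add (hn_inv.const_mul (1438208 / θ ^ 4))
  refine .of_measure_le_ofReal hlim ?_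
  filter_upwards [hn.eventually_gt_atTop 0, eventually_gt_atTop 0] with d hnd hd
  have : NeZero d := ⟨hd.ne'⟩
  have hnonneg (x : Fin (n d) → Fin d → ℝ) :
      0 ≤ evalSample x (trace (offDiagGramPoly (n d) d ^ 4)) := by
    rw [evalSample_trace_offDiagGramPoly_pow]
    exact trace_pow_two_mul_nonneg (isHermitian_offDiagGram x) 2
  have htail := measure_evalSample_ge_le hnonneg (c := (θ * n d * d) ^ 4) (by positivity)
  simp only [evalSample_trace_offDiagGramPoly_pow] at htail
  refine (measure_mono fun x hx => (not_le.1 hx).le).trans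
    (htail.trans (ENNReal.ofReal_le_ofReal ?_))
  rw [div_le_iff₀ (by positivity)]
  refine gaussianExpectation_trace_offDiagGramPoly_pow_four_le.trans_eq ?_
  field_simp

end GramMoment

/-! ### The spectral norm of the rescaled Tyler estimator -/

section TylerNorm

open scoped Topology

section Deterministic

variable {n d : ℕ} [NeZero n] [NeZero d]

lemma sqrt_div_mul_sqrt_div_swap : √((n : ℝ) / d) * √((d : ℝ) / n) = 1 := by
  have hn : (n : ℝ) ≠ 0 := NeZero.ne _
  have hd : (d : ℝ) ≠ 0 := NeZero.ne _
  rw [← Real.sqrt_mul (by positivity), div_mul_div_cancel₀ hd, div_self hn, Real.sqrt_one]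

lemma quadBounded_fluctuation_iff {M : Matrix (Fin d) (Fin d) ℝ} {s : ℝ} :
    QuadBounded (fluctuation n M) s ↔ QuadBounded (M - 1) (s * √((d : ℝ) / n)) := by
  refine ⟨fun h => ?_, fun h => ?_⟩
  · have hscaled := h.smul (Real.sqrt_nonneg ((d : ℝ) / n))
    rwa [fluctuation, smul_smul, mul_comm (√((d : ℝ) / n)), mul_comm (√((d : ℝ) / n)),
      sqrt_div_mul_sqrt_div_swap, one_smul] at hscaled
  · have hscaled := h.smul (Real.sqrt_nonneg ((n : ℝ) / d))
    rwa [mul_left_comm, sqrt_div_mul_sqrt_div_swap, mul_one] at hscaled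

lemma quadBounded_fluctuation_of_isTyler {x : Fin n → Fin d → ℝ} {T : Matrix (Fin d) (Fin d) ℝ}
    {θ η t κ s : ℝ} (hT : IsTyler x T) (hx : TypicalSample x θ η t) (hθ : 0 ≤ θ) (hη : 0 < η)
    (ht : 0 ≤ t)
    (hκ : (1 + 2 * t * (1 + 4 / η ^ 2)) * θ + 4 * η + 40 * t / η ^ 2 * (d / n) ≤ κ)
    (hκ' : κ ≤ 1 / 20) (hs0 : 0 ≤ s) (hs : s * √((d : ℝ) / n) ≤ 1 / 20)
    (hcov : QuadBounded (fluctuation n (sampleCov (sphericalSample x))) s) :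
    QuadBounded (fluctuation n T) ((1 + 20 * κ) * s) := by
  rw [quadBounded_fluctuation_iff] at hcov
  have hrem := hx.remainderBounded hθ hη ht (hcov.mono (hs.trans (by norm_num)))
  have hbound := quadBounded_sub_one_of_isTyler hT hx.ne_zero hs (by positivity) (hκ.trans hκ')
    hcov hrem
  rw [← mul_assoc, ← quadBounded_fluctuation_iff] at hbound
  exact hbound.mono (by gcongr)

end Deterministic

lemma exists_typicalSample_parameters {κ : ℝ} (hκ : 0 < κ) :
    ∃ θ η t : ℝ, 0 < θ ∧ 0 < η ∧ 0 ≤ t ∧ 2 * Real.exp (-t / 16) ≤ η / 64 ∧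
      (1 + 2 * t * (1 + 4 / η ^ 2)) * θ + 4 * η ≤ κ := by
  have hη : 0 < κ / 8 := by positivity
  obtain ⟨t, ht, htail⟩ := exists_two_mul_exp_neg_le (c := κ / 8 / 64) (by positivity)
  have hC : 0 < 1 + 2 * t * (1 + 4 / (κ / 8) ^ 2) := by positivity
  refine ⟨κ / 2 / (1 + 2 * t * (1 + 4 / (κ / 8) ^ 2)), κ / 8, t, by positivity, hη, ht, htail, ?_⟩
  rw [mul_div_cancel₀ _ hC.ne']
  linarith

variable {n : ℕ → ℕ}

lemma asympAlmostSurely_typicalSample (hn : Tendsto n atTop atTop)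
    (hdn : Tendsto (fun d : ℕ => (d : ℝ) / n d) atTop (𝓝 0)) {θ η t : ℝ} (hθ : 0 < θ)
    (hη : 0 < η) (ht : 2 * Real.exp (-t / 16) ≤ η / 64) :
    AsympAlmostSurely (fun d => normalSample (n d) d) fun _ x => TypicalSample x θ η t := by
  have hne : AsympAlmostSurely (fun d => normalSample (n d) d) fun _ x => ∀ j, x j ≠ 0 :=
    .of_ae <| (eventually_ne_atTop 0).mono fun d hd =>
      have : NeZero d := ⟨hd⟩
      ae_normalSample_ne_zero (n d) d
  refine ((((hne.and (asympAlmostSurely_trace_offDiagGram_le hn hθ)).and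
    (asympAlmostSurely_card_short_le hn hθ)).and (asympAlmostSurely_card_long_le hn hθ)).and
    (asympAlmostSurely_truncatedMass_le hn hdn hη ht)).mono (.of_forall fun d x => ?_)
  rintro ⟨⟨⟨⟨hne, htrace⟩, hshort⟩, hlong⟩, hmass⟩
  exact ⟨hne, htrace, hshort, hlong, hmass⟩

theorem asympAlmostSurely_quadBounded_isTyler (hn : Tendsto n atTop atTop)
    (hdn : Tendsto (fun d : ℕ => (d : ℝ) / n d) atTop (𝓝 0)) {ε : ℝ} (hε : 0 < ε) :
    AsympAlmostSurely (fun d => normalSample (n d) d) fun d x =>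
      ∀ T, IsTyler x T → QuadBounded (fluctuation (n d) T) (2 + ε) := by
  obtain ⟨κ, hκ0, hκ1, hκε⟩ :
      ∃ κ : ℝ, 0 < κ ∧ κ ≤ 1 / 20 ∧ (1 + 20 * κ) * (2 + ε / 2) ≤ 2 + ε := by
    refine ⟨min (1 / 20) (ε / (40 * (2 + ε / 2))), by positivity, min_le_left _ _, ?_⟩
    have hmin := min_le_right (1 / 20) (ε / (40 * (2 + ε / 2)))
    rw [le_div_iff₀ (by positivity)] at hmin
    linarith
  obtain ⟨θ, η, t, hθ, hη, ht, htail, hparam⟩ := exists_typicalSample_parameters (half_pos hκ0)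
  have hremainder : Tendsto (fun d : ℕ => 40 * t / η ^ 2 * ((d : ℝ) / n d)) atTop (𝓝 0) := by
    simpa only [mul_zero] using hdn.const_mul (40 * t / η ^ 2)
  have hradius : Tendsto (fun d : ℕ => (2 + ε / 2) * √((d : ℝ) / n d)) atTop (𝓝 0) := by
    simpa only [Real.sqrt_zero, mul_zero] using hdn.sqrt.const_mul (2 + ε / 2)
  refine ((asympAlmostSurely_typicalSample hn hdn hθ hη htail).and
    (asympAlmostSurely_quadBounded_sampleCov_sphericalSample hn hdn (half_pos hε))).mono ?_
  filter_upwards [hn.eventually_ne_atTop 0, eventually_ne_atTop 0,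
    hremainder.eventually_le_const (half_pos hκ0),
    hradius.eventually_le_const (show (0 : ℝ) < 1 / 20 by norm_num)]
    with d hnd hd hsmall hrad x ⟨htypical, hcov⟩ T hT
  have : NeZero (n d) := ⟨hnd⟩
  have : NeZero d := ⟨hd⟩
  refine (quadBounded_fluctuation_of_isTyler hT htypical hθ.le hη ht ?_ hκ1 (by positivity) hrad
    hcov).mono hκε
  linarith

end TylerNorm

/-! ### Segments joining sorted eigenvalues -/

section Segments

variable {d : ℕ} {A B : Matrix (Fin d) (Fin d) ℝ}

/-- The absolute values of the points on the segments joining `λ_i(B)` to `λ_i(A)`. -/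
def absEigenvalueSegments (A B : Matrix (Fin d) (Fin d) ℝ) : Set ℝ :=
  {y | ∃ i : Fin d, ∃ α ∈ Set.Icc (0 : ℝ) 1, ∃ l,
    l = α * sortedEigs A i + (1 - α) * sortedEigs B i ∧ y = |l|}

lemma quadBounded_iff_abs_sortedEigs_le (hA : A.IsHermitian) {s : ℝ} :
    QuadBounded A s ↔ ∀ i, |sortedEigs A i| ≤ s := by
  rw [quadBounded_iff_abs_eigenvalues_le hA, sortedEigs, dif_pos hA]
  exact (Tuple.sort hA.eigenvalues).forall_congr_right.symm

lemma le_of_mem_absEigenvalueSegments (hA : A.IsHermitian) (hB : B.IsHermitian) {s y : ℝ}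
    (hAs : QuadBounded A s) (hBs : QuadBounded B s) (hy : y ∈ absEigenvalueSegments A B) :
    y ≤ s := by
  obtain ⟨i, α, ⟨hα0, hα1⟩, l, rfl, rfl⟩ := hy
  have hAi := abs_le.1 ((quadBounded_iff_abs_sortedEigs_le hA).1 hAs i)
  have hBi := abs_le.1 ((quadBounded_iff_abs_sortedEigs_le hB).1 hBs i)
  exact abs_le.2 (convex_Icc (-s) s hAi hBi hα0 (sub_nonneg.2 hα1) (add_sub_cancel _ _))

lemma abs_sSup_absEigenvalueSegments_sub_le (hA : A.IsHermitian) (hB : B.IsHermitian) {c ε : ℝ}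
    (hAc : QuadBounded A (c + ε)) (hBc : QuadBounded B (c + ε)) (hBc' : ¬ QuadBounded B (c - ε)) :
    |sSup (absEigenvalueSegments A B) - c| ≤ ε := by
  rw [quadBounded_iff_abs_sortedEigs_le hB] at hBc'
  push Not at hBc'
  obtain ⟨i, hi⟩ := hBc'
  have hmem : |sortedEigs B i| ∈ absEigenvalueSegments A B :=
    ⟨i, 0, Set.left_mem_Icc.2 zero_le_one, sortedEigs B i, by ring, rfl⟩
  have hub : ∀ y ∈ absEigenvalueSegments A B, y ≤ c + ε := fun _ =>
    le_of_mem_absEigenvalueSegments hA hB hAc hBc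
  rw [abs_sub_le_iff]
  constructor
  · linarith [csSup_le ⟨_, hmem⟩ hub]
  · linarith [le_csSup ⟨_, hub⟩ hmem]

end Segments

lemma map_eq_normalSample {Ω : Type*} [MeasurableSpace Ω] {P : Measure Ω} [IsProbabilityMeasure P]
    {n d : ℕ} {X : Fin n → Ω → Fin d → ℝ} (hmeas : ∀ j, Measurable (X j))
    (hindep : iIndepFun X P)
    (hgauss : ∀ j, Measure.map (X j) P = Measure.pi fun _ : Fin d => gaussianReal 0 1) :
    P.map (fun ω j => X j ω) = normalSample n d := by
  rw [(iIndepFun_iff_map_fun_eq_pi_map fun j => (hmeas j).aemeasurable).1 hindep]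
  simp only [hgauss]

theorem asympAlmostSurely_abs_sSup_absEigenvalueSegments_sub_two_le {n : ℕ → ℕ}
    (hn : Tendsto n atTop atTop) (hdn : Tendsto (fun d : ℕ => (d : ℝ) / n d) atTop (nhds 0))
    {ε : ℝ} (hε : 0 < ε) :
    AsympAlmostSurely (fun d => normalSample (n d) d) fun d x => ∀ T, IsTyler x T →
      |sSup (absEigenvalueSegments (fluctuation (n d) T) (fluctuation (n d) (sampleCov x))) - 2|
        ≤ ε := by
  have hlower := asympAlmostSurely_not_quadBounded_sampleCov hn hdn (s := 2 - min ε 1)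
    (by linarith [min_le_right ε 1]) (by linarith [lt_min hε one_pos])
  refine (((asympAlmostSurely_quadBounded_isTyler hn hdn hε).and
    (asympAlmostSurely_quadBounded_sampleCov hn hdn hε)).and hlower).mono (.of_forall fun d x => ?_)
  rintro ⟨⟨hTyler, hcov⟩, hcov'⟩ T hT
  exact abs_sSup_absEigenvalueSegments_sub_le (isHermitian_fluctuation hT.1.isHermitian _)
    (isHermitian_fluctuation_sampleCov x) (hTyler T hT) hcov
    fun h => hcov' (h.mono (by linarith [min_le_left ε 1]))

end TylerGaussian

/-- **Proposition 4:** for an i.i.d. standard normal sample `N_d(0, I)` with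
`n(d) → ∞` and `d/n(d) → 0`, let `T*_d = √(n(d)/d)·(T_d − I)` and
`S*_d = √(n(d)/d)·(S_d − I)`, and for `1 ≤ i ≤ d` let
`B_i = {α·λ_i(T*_d) + (1−α)·λ_i(S*_d) : α ∈ [0,1]}`. Then
`sup {|λ| : λ ∈ ⋃_i B_i}` converges in probability to `2` as `d → ∞`. -/
theorem sup_abs_segment_eigenvalues_tendsto_two
    {Ωs : Type*} [MeasurableSpace Ωs] (P : Measure Ωs) [IsProbabilityMeasure P]
    (n : ℕ → ℕ) (hn : Tendsto n atTop atTop)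
    (hdn : Tendsto (fun d : ℕ => (d : ℝ) / (n d : ℝ)) atTop (nhds 0))
    (X : ∀ d : ℕ, Fin (n d) → Ωs → Fin d → ℝ)
    (hmeas : ∀ d j, Measurable (X d j))
    (hindep : ∀ d, iIndepFun (X d) P)
    (hgauss : ∀ d j,
      Measure.map (X d j) P = Measure.pi fun _ : Fin d => gaussianReal 0 1)
    (T : ∀ d : ℕ, Ωs → Matrix (Fin d) (Fin d) ℝ)
    (hT : ∀ d, ∀ᵐ ω ∂P, IsTyler (fun j => X d j ω) (T d ω)) :
    ∀ ε > (0 : ℝ),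
      Tendsto (fun d =>
          P {ω | |sSup {y : ℝ | ∃ i : Fin d, ∃ α ∈ Set.Icc (0 : ℝ) 1, ∃ l,
              l = α * sortedEigs (Real.sqrt ((n d : ℝ) / d) • (T d ω - 1)) i +
                  (1 - α) * sortedEigs (Real.sqrt ((n d : ℝ) / d) •
                    ((n d : ℝ)⁻¹ • ∑ j : Fin (n d),
                      vecMulVec (X d j ω) (X d j ω) - 1)) i ∧
              y = |l|} - 2| > ε})
        atTop (nhds 0) := by
  intro ε hε
  have hsample := (TylerGaussian.asympAlmostSurely_abs_sSup_absEigenvalueSegments_sub_two_le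
    hn hdn hε).of_map (fun d => measurable_pi_lambda _ (hmeas d))
    fun d => TylerGaussian.map_eq_normalSample (hmeas d) (hindep d) (hgauss d)
  have hclose := (hsample.and (.of_ae (.of_forall hT))).mono
    (.of_forall fun d ω ⟨hall, hTω⟩ => hall (T d ω) hTω)
  simp only [TylerGaussian.AsympAlmostSurely, not_le] at hclose
  exact hclose
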